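/- arXiv:1101.3099 — 2 statements merged into one kernel-verified Lean document; each statement's English description precedes it below -/
import Mathlib

section
/- If the edge-probability function satisfies p(n) ≤ 1.02·ln n / n, then with high probability a graph G sampled from G(n,p) contains ⌊δ(G)/2⌋ pairwise edge-disjoint Hamilton cycles, where δ(G) is the minimum degree of G. -/
open Filter Finset SimpleGraph
open scoped Classical

/-- The probability weight of a particular graph `G` on `[n]` under `G(n,p)`. -/
noncomputable def gnpWeight (n : ℕ) (p : ℝ) (G : SimpleGraph (Fin n)) : ℝ :=
  p ^ G.edgeFinset.card * (1 - p) ^ (n.choose 2 - G.edgeFinset.card)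

/-- The probability that a random graph `G ~ G(n,p)` satisfies the predicate `A`. -/
noncomputable def gnpProb (n : ℕ) (p : ℝ) (A : SimpleGraph (Fin n) → Prop) : ℝ :=
  ∑ G : SimpleGraph (Fin n), if A G then gnpWeight n p G else 0

/-- A sequence of graph properties holds with high probability in `G(n, p n)`. -/
def WHP (p : ℕ → ℝ) (A : ∀ n : ℕ, SimpleGraph (Fin n) → Prop) : Prop :=
  Tendsto (fun n => gnpProb n (p n) (A n)) atTop (nhds 1)

/-- Number of edges of a graph. -/
noncomputable def edgeCount {V : Type*} [Fintype V] (G : SimpleGraph V) : ℕ :=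
  G.edgeFinset.card

/-- Number of edges with both endpoints in `U`. -/
noncomputable def eIn {V : Type*} [Fintype V] (G : SimpleGraph V) (U : Finset V) : ℕ :=
  (G.edgeFinset.filter (fun e => ∀ v ∈ e, v ∈ U)).card

/-- Number of edges with one endpoint in `U` and the other in `Z` (for disjoint `U`, `Z`). -/
noncomputable def eBetween {V : Type*} [Fintype V] (G : SimpleGraph V) (U Z : Finset V) : ℕ :=
  ((U ×ˢ Z).filter (fun q => G.Adj q.1 q.2)).card

/-- External neighbourhood of a vertex set. -/
noncomputable def extNbhd {V : Type*} [Fintype V] (G : SimpleGraph V) (U : Finset V) : Finset V :=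
  Finset.univ.filter (fun v => v ∉ U ∧ ∃ u ∈ U, G.Adj u v)

/-- `G` is an `(R, f)`-expander: every set `U` with `|U| ≤ R` satisfies `|N(U)| ≥ f(|U|)·|U|`. -/
def IsExpander {V : Type*} [Fintype V] (G : SimpleGraph V) (R : ℝ) (f : ℕ → ℝ) : Prop :=
  ∀ U : Finset V, U.Nonempty → (U.card : ℝ) ≤ R →
    f U.card * U.card ≤ ((extNbhd G U).card : ℝ)

/-- The expansion function `f_β` on `{1, …, ⌊β n₁⌋}`. -/
noncomputable def fBeta (β : ℝ) (n1 : ℕ) (t : ℕ) : ℝ :=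
  if t = Nat.floor (β * n1) then 2 * (1 + 39 * β) / (3 * β)
  else if (t : ℝ) < (n1 : ℝ) ^ (0.1 : ℝ) then Real.log n1 ^ (0.8 : ℝ)
  else 11

/-- `G₁` is `(n₁, d, β)`-quasi-random. -/
def QuasiRandom {V : Type*} [Fintype V] (G1 : SimpleGraph V) (n1 : ℕ) (d β : ℝ) : Prop :=
  (∀ v : V, d / 150 ≤ (G1.degree v : ℝ)) ∧
  (∀ U : Finset V, (U.card : ℝ) < (n1 : ℝ) ^ (0.11 : ℝ) * Real.log n1 →
    (eIn G1 U : ℝ) ≤ d ^ (0.13 : ℝ) * U.card) ∧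
  (∀ U : Finset V, (U.card : ℝ) < 12 * β * n1 →
    (eIn G1 U : ℝ) ≤ 50 * β * d * U.card) ∧
  (∀ U Z : Finset V, Disjoint U Z → U.card = Nat.floor (β * n1) →
    Z.card = Nat.floor ((1 / 3 - 27 * β) * n1) →
    (n1 : ℝ) * Real.log (Real.log n1) ≤ (eBetween G1 U Z : ℝ))

/-- Longest path length in `G`. -/
noncomputable def longestPath {V : Type*} [Fintype V] (G : SimpleGraph V) : ℕ :=
  sSup {l : ℕ | ∃ (u v : V) (q : G.Walk u v), q.IsPath ∧ q.length = l}

/-- `{u, v}` is a booster with respect to `Γ`. -/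
def IsBooster {V : Type*} [Fintype V] (Γ : SimpleGraph V) (u v : V) : Prop :=
  u ≠ v ∧ ¬ Γ.Adj u v ∧
    ((Γ ⊔ fromEdgeSet {s(u, v)}).IsHamiltonian ∨
      longestPath Γ < longestPath (Γ ⊔ fromEdgeSet {s(u, v)}))

/-- The booster set `B_Γ(v)`. -/
noncomputable def boosterSet {V : Type*} [Fintype V] (Γ : SimpleGraph V) (v : V) : Finset V :=
  Finset.univ.filter (fun w => IsBooster Γ v w)

/-- Membership in the family `𝓛(n, β)` with witnessing partition `V = V₁ ∪ D`. -/
def InFamilyL (n : ℕ) (β : ℝ) (G : SimpleGraph (Fin n)) (V1 D : Finset (Fin n)) : Prop :=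
  Disjoint V1 D ∧ V1 ∪ D = Finset.univ ∧
  ((D.card : ℝ) ≤ (n : ℝ) ^ (0.09 : ℝ)) ∧
  (∀ u ∈ D, 2 ≤ (G.neighborFinset u ∩ V1).card) ∧
  (∀ u ∈ D, ∀ v ∈ D, ∀ q : G.Walk u v, q.IsPath → 0 < q.length →
    2 * Real.log n / (3 * Real.log (Real.log n)) < (q.length : ℝ)) ∧
  (∀ u ∈ D, ∀ q : G.Walk u u, q.IsCycle →
    2 * Real.log n / (3 * Real.log (Real.log n)) < (q.length : ℝ)) ∧
  IsExpander (G.induce (V1 : Set (Fin n))) (β * V1.card) (fBeta β V1.card)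

namespace HC

set_option linter.unusedSectionVars false

section Posa
variable {V : Type*} [Fintype V] [DecidableEq V]

/-- A path of `Γ`, as a list of vertices. -/
def IsP (Γ : SimpleGraph V) (l : List V) : Prop := l.IsChain Γ.Adj ∧ l.Nodup

/-- Consecutive elements. -/
def Nx (l : List V) (a b : V) : Prop := ∃ s t, l = s ++ a :: b :: t

def Con (l : List V) (a b : V) : Prop := Nx l a b ∨ Nx l b a

/-- A rotation. -/
def Rot (Γ : SimpleGraph V) (l l' : List V) : Prop :=
  ∃ z l2 x l1, l = (z :: l2) ++ x :: l1 ∧ Γ.Adj z x ∧ l' = (z :: l2).reverse ++ x :: l1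

lemma Nx.idx {l : List V} {a b : V} : Nx l a b ↔ ∃ i, l[i]? = some a ∧ l[i+1]? = some b := by
  constructor
  · rintro ⟨s, t, rfl⟩
    exact ⟨s.length, by simp⟩
  · rintro ⟨i, h1, h2⟩
    obtain ⟨h1', h1⟩ := List.getElem?_eq_some_iff.1 h1
    obtain ⟨h2', h2⟩ := List.getElem?_eq_some_iff.1 h2
    refine ⟨l.take i, l.drop (i+2), ?_⟩
    rw [← h1, ← h2]
    simp

lemma Nx.reverse {l : List V} {a b : V} (h : Nx l.reverse a b) : Nx l b a := by
  obtain ⟨s, t, h⟩ := h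
  refine ⟨t.reverse, s.reverse, ?_⟩
  have := congrArg List.reverse h
  simpa using this

lemma Nx.append {A B : List V} {a b : V} (h : Nx (A ++ B) a b) :
    Nx A a b ∨ Nx B a b ∨ (A.getLast? = some a ∧ B.head? = some b) := by
  rw [Nx.idx] at h
  obtain ⟨i, h1, h2⟩ := h
  rcases lt_trichotomy (i+1) A.length with h | h | h
  · left
    rw [Nx.idx]
    refine ⟨i, ?_, ?_⟩
    · rwa [List.getElem?_append_left (by omega)] at h1
    · rwa [List.getElem?_append_left (by omega)] at h2
  · right; right
    rw [List.getElem?_append_left (by omega)] at h1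
    rw [List.getElem?_append_right (by omega)] at h2
    constructor
    · rw [List.getLast?_eq_getElem?, ← h]; simpa using h1
    · rw [List.head?_eq_getElem?]; simpa [h] using h2
  · right; left
    rw [Nx.idx]
    refine ⟨i - A.length, ?_, ?_⟩
    · rwa [List.getElem?_append_right (by omega)] at h1
    · rw [List.getElem?_append_right (by omega)] at h2
      rw [← h2]; congr 1; omega

lemma Nx.left {A B : List V} {a b : V} (h : Nx A a b) : Nx (A ++ B) a b := by
  obtain ⟨s, t, rfl⟩ := h
  exact ⟨s, t ++ B, by simp⟩

lemma Nx.right {A B : List V} {a b : V} (h : Nx B a b) : Nx (A ++ B) a b := by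
  obtain ⟨s, t, rfl⟩ := h
  exact ⟨A ++ s, t, by simp⟩

lemma Nx.unique_right {l : List V} (hl : l.Nodup) {a b c : V} (h : Nx l a b) (h' : Nx l a c) :
    b = c := by
  rw [Nx.idx] at h h'
  obtain ⟨i, h1, h2⟩ := h
  obtain ⟨j, h3, h4⟩ := h'
  obtain ⟨h1', h1⟩ := List.getElem?_eq_some_iff.1 h1
  obtain ⟨h3', h3⟩ := List.getElem?_eq_some_iff.1 h3
  have : i = j := (hl.getElem_inj_iff).1 (h1.trans h3.symm)
  subst this
  rw [h2] at h4
  exact Option.some.inj h4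

lemma Nx.unique_left {l : List V} (hl : l.Nodup) {a b c : V} (h : Nx l b a) (h' : Nx l c a) :
    b = c := by
  rw [Nx.idx] at h h'
  obtain ⟨i, h1, h2⟩ := h
  obtain ⟨j, h3, h4⟩ := h'
  obtain ⟨h2', h2⟩ := List.getElem?_eq_some_iff.1 h2
  obtain ⟨h4', h4⟩ := List.getElem?_eq_some_iff.1 h4
  have : i + 1 = j + 1 := (hl.getElem_inj_iff).1 (h2.trans h4.symm)
  have : i = j := by omega
  subst this
  rw [h1] at h3
  exact Option.some.inj h3

lemma Nx.not_head {l : List V} {a b : V} (hl : (b :: l).Nodup) (h : Nx (b :: l) a b) : False := by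
  rw [Nx.idx] at h
  obtain ⟨i, h1, h2⟩ := h
  obtain ⟨h2', h2⟩ := List.getElem?_eq_some_iff.1 h2
  have : i + 1 = 0 := (hl.getElem_inj_iff (hj := by simp)).1 (by rw [h2]; simp)
  omega

lemma Rot.perm {Γ : SimpleGraph V} {l l' : List V} (h : Rot Γ l l') : l'.Perm l := by
  obtain ⟨z, l2, x, l1, rfl, -, rfl⟩ := h
  exact (List.reverse_perm _).append_right _

lemma Rot.getLast? {Γ : SimpleGraph V} {l l' : List V} (h : Rot Γ l l') :
    l'.getLast? = l.getLast? := by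
  obtain ⟨z, l2, x, l1, rfl, -, rfl⟩ := h
  rw [List.getLast?_append_of_ne_nil _ (by simp), List.getLast?_append_of_ne_nil _ (by simp)]

lemma Rot.isP {Γ : SimpleGraph V} {l l' : List V} (h : Rot Γ l l') (hl : IsP Γ l) : IsP Γ l' := by
  refine ⟨?_, (h.perm.nodup_iff).2 hl.2⟩
  obtain ⟨z, l2, x, l1, rfl, ha, rfl⟩ := h
  have h1 := hl.1
  rw [List.isChain_append] at h1 ⊢
  refine ⟨?_, h1.2.1, ?_⟩
  · rw [List.isChain_reverse]
    refine h1.1.imp ?_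
    intro a b hab; exact hab.symm
  · intro a ha' b hb
    simp at ha' hb
    subst ha' hb
    exact ha

abbrev Reach (Γ : SimpleGraph V) : List V → List V → Prop := Relation.ReflTransGen (Rot Γ)

lemma Reach.spec {Γ : SimpleGraph V} {l l' : List V} (h : Reach Γ l l') (hl : IsP Γ l) :
    IsP Γ l' ∧ l'.Perm l ∧ l'.getLast? = l.getLast? := by
  induction h with
  | refl => exact ⟨hl, List.Perm.refl _, rfl⟩
  | tail _ h ih => exact ⟨h.isP ih.1, h.perm.trans ih.2.1, h.getLast?.trans ih.2.2⟩

/-- Endpoints obtainable by rotations. -/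
noncomputable def ENDS (Γ : SimpleGraph V) (l : List V) : Finset V :=
  Finset.univ.filter (fun v => ∃ l', Reach Γ l l' ∧ l'.head? = some v)

def Longest (Γ : SimpleGraph V) (l : List V) : Prop :=
  IsP Γ l ∧ ∀ l', IsP Γ l' → l'.length ≤ l.length

lemma posa_con {Γ : SimpleGraph V} {l : List V} (hl : Longest Γ l) {w : V}
    (hw : w ∈ extNbhd Γ (ENDS Γ l)) : ∃ v ∈ ENDS Γ l, Con l v w := by
  simp only [extNbhd, Finset.mem_filter, Finset.mem_univ, true_and] at hw
  obtain ⟨hwE, z, hzE, hzw⟩ := hw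
  by_contra hcon
  push Not at hcon
  have inv : ∀ l', Reach Γ l l' → ∀ b, Con l' b w → Con l b w := by
    intro l' hr
    induction hr with
    | refl => exact fun b h => h
    | @tail l' l'' hr hrot ih =>
      have hr2 : Reach Γ l l'' := hr.tail hrot
      obtain ⟨z', l2, x, l1, rfl, ha, rfl⟩ := hrot
      have hz' : z' ∈ ENDS Γ l := by
        simp only [ENDS, Finset.mem_filter, Finset.mem_univ, true_and]
        exact ⟨_, hr, by simp⟩
      obtain ⟨y, hy⟩ : ∃ y, (z' :: l2).getLast? = some y := ⟨_, List.getLast?_eq_some_getLast (by simp)⟩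
      have hyE : y ∈ ENDS Γ l := by
        simp only [ENDS, Finset.mem_filter, Finset.mem_univ, true_and]
        refine ⟨_, hr2, ?_⟩
        rw [List.head?_append, List.head?_reverse, hy]; rfl
      have hyx : Nx ((z' :: l2) ++ x :: l1) y x := by
        obtain ⟨s, hs⟩ := List.getLast?_eq_some_iff.1 hy
        rw [hs]
        exact ⟨s, l1, by simp⟩
      have hxw : x ≠ w := by
        rintro rfl
        exact hcon y hyE (ih y (Or.inl hyx))
      intro b hb
      apply ih
      rcases hb with hb | hb
      · rcases hb.append with h | h | ⟨h, h'⟩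
        · exact Or.inr h.reverse.left
        · exact Or.inl h.right
        · simp at h'
          exact absurd h' hxw
      · rcases hb.append with h | h | ⟨h, h'⟩
        · exact Or.inl h.reverse.left
        · exact Or.inr h.right
        · simp at h
          subst h; exact absurd hz' hwE
  have hzE' := hzE
  simp only [ENDS, Finset.mem_filter, Finset.mem_univ, true_and] at hzE'
  obtain ⟨l', hr, hhead⟩ := hzE'
  obtain ⟨hP, hperm, -⟩ := hr.spec hl.1
  obtain ⟨l'', rfl⟩ : ∃ l'', l' = z :: l'' := by
    cases l' with
    | nil => simp at hhead
    | cons a t => simp at hhead; subst hhead; exact ⟨t, rfl⟩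
  have hwl : w ∈ z :: l'' := by
    by_contra hnot
    have : IsP Γ (w :: z :: l'') := by
      refine ⟨?_, List.nodup_cons.2 ⟨hnot, hP.2⟩⟩
      rw [List.isChain_cons_cons]
      exact ⟨hzw.symm, hP.1⟩
    have h1 := hl.2 _ this
    have h2 := hperm.length_eq
    rw [List.length_cons, h2] at h1
    omega
  have hwz : w ≠ z := hzw.ne'
  have hwl' : w ∈ l'' := by simpa [hwz] using hwl
  obtain ⟨l2, l1, rfl⟩ := List.append_of_mem hwl'
  obtain ⟨y, hy⟩ : ∃ y, (z :: l2).getLast? = some y := ⟨_, List.getLast?_eq_some_getLast (by simp)⟩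
  have hrot : Rot Γ (z :: (l2 ++ w :: l1)) ((z :: l2).reverse ++ w :: l1) :=
    ⟨z, l2, w, l1, by simp, hzw, rfl⟩
  have hyE : y ∈ ENDS Γ l := by
    simp only [ENDS, Finset.mem_filter, Finset.mem_univ, true_and]
    refine ⟨_, hr.tail hrot, ?_⟩
    rw [List.head?_append, List.head?_reverse, hy]; rfl
  refine hcon y hyE (inv _ hr y (Or.inl ?_))
  obtain ⟨s, hs⟩ := List.getLast?_eq_some_iff.1 hy
  have : z :: (l2 ++ w :: l1) = (z :: l2) ++ w :: l1 := by simp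
  rw [this, hs]
  exact ⟨s, l1, by simp⟩

lemma posa_card {Γ : SimpleGraph V} {z : V} {l : List V} (hl : Longest Γ (z :: l)) :
    (extNbhd Γ (ENDS Γ (z :: l))).card < 2 * (ENDS Γ (z :: l)).card := by
  set E := ENDS Γ (z :: l) with hE
  have hzE : z ∈ E := by
    simp only [hE, ENDS, Finset.mem_filter, Finset.mem_univ, true_and]
    exact ⟨_, Relation.ReflTransGen.refl, by simp⟩
  let su : V → V := fun v => if h : ∃ w, Nx (z :: l) v w then h.choose else v
  let pr : V → V := fun v => if h : ∃ w, Nx (z :: l) w v then h.choose else v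
  have hsub : extNbhd Γ E ⊆ E.image su ∪ (E.erase z).image pr := by
    intro w hw
    obtain ⟨v, hv, hc⟩ := posa_con hl hw
    rw [Finset.mem_union]
    rcases hc with h | h
    · left
      refine Finset.mem_image.2 ⟨v, hv, ?_⟩
      have hex : ∃ w, Nx (z :: l) v w := ⟨w, h⟩
      simp only [su, dif_pos hex]
      exact Nx.unique_right hl.1.2 hex.choose_spec h
    · right
      refine Finset.mem_image.2 ⟨v, Finset.mem_erase.2 ⟨?_, hv⟩, ?_⟩
      · rintro rfl
        exact Nx.not_head hl.1.2 h
      have hex : ∃ w, Nx (z :: l) w v := ⟨w, h⟩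
      simp only [pr, dif_pos hex]
      exact Nx.unique_left hl.1.2 hex.choose_spec h
  have h1 := Finset.card_le_card hsub
  have h2 := Finset.card_union_le (E.image su) ((E.erase z).image pr)
  have h3 := Finset.card_image_le (s := E) (f := su)
  have h4 := Finset.card_image_le (s := E.erase z) (f := pr)
  have h5 := Finset.card_erase_add_one hzE
  omega

end Posa
end HC

namespace HC

set_option linter.unusedSectionVars false

section Boost
variable {V : Type*} [Fintype V] [DecidableEq V]

def HasHam (Γ : SimpleGraph V) : Prop := ∃ v, ∃ c : Γ.Walk v v, c.IsHamiltonianCycle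

/-- every proper nonempty vertex set has a leaving edge -/
def Lv (Γ : SimpleGraph V) : Prop :=
  ∀ X : Finset V, X.Nonempty → X ≠ Finset.univ → ∃ x ∈ X, ∃ y, y ∉ X ∧ Γ.Adj x y

def Expd (Γ : SimpleGraph V) : Prop :=
  ∀ U : Finset V, U.Nonempty → 4 * U.card ≤ Fintype.card V → 2 * U.card ≤ (extNbhd Γ U).card

lemma ham_of_list {Γ : SimpleGraph V} (h3 : 3 ≤ Fintype.card V) {l : List V} (hl : IsP Γ l)
    (hall : ∀ v, v ∈ l) {a b : V} (ha : l.head? = some a) (hb : l.getLast? = some b)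
    (hab : Γ.Adj b a) : HasHam Γ := by
  have hne : l ≠ [] := by rintro rfl; simp at ha
  have hlen : l.length = Fintype.card V := by
    rw [← List.toFinset_card_of_nodup hl.2, ← Finset.card_univ]
    congr 1
    ext v; simp [hall v]
  have e1 : l.head hne = a := by
    rw [List.head?_eq_some_head hne] at ha; exact Option.some.inj ha
  have e2 : l.getLast hne = b := by
    rw [List.getLast?_eq_some_getLast hne] at hb; exact Option.some.inj hb
  subst e1 e2
  refine ⟨_, Walk.cons hab (Walk.ofSupport l hne hl.1), ?_⟩
  rw [Walk.isHamiltonianCycle_iff_isCycle_and_length_eq, Walk.cons_isCycle_iff]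
  have hp : (Walk.ofSupport l hne hl.1).IsPath := by
    apply Walk.IsPath.mk'
    rw [Walk.support_ofSupport]; exact hl.2
  refine ⟨⟨hp, ?_⟩, ?_⟩
  · intro hmem
    rw [Sym2.eq_swap] at hmem
    have := hp.length_eq_one_of_mem_edges hmem
    rw [Walk.length_ofSupport] at this
    omega
  · rw [Walk.length_cons, Walk.length_ofSupport]; omega

lemma close_up {Γ : SimpleGraph V} (h3 : 3 ≤ Fintype.card V) (hlv : Lv Γ) {l : List V}
    (hl : IsP Γ l) {a b : V} (ha : l.head? = some a) (hb : l.getLast? = some b)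
    (hab : Γ.Adj b a) : HasHam Γ ∨ ∃ l', IsP Γ l' ∧ l.length < l'.length := by
  by_cases hall : ∀ v, v ∈ l
  · exact Or.inl (ham_of_list h3 hl hall ha hb hab)
  right
  push Not at hall
  obtain ⟨v, hv⟩ := hall
  obtain ⟨x, hx, y, hy, hxy⟩ := hlv l.toFinset
    ⟨a, by simpa using List.mem_of_mem_head? (by simpa using ha)⟩
    (by intro h; have := Finset.mem_univ v; rw [← h] at this; simp at this; exact hv this)
  simp only [List.mem_toFinset] at hx hy
  obtain ⟨s, t, rfl⟩ := List.append_of_mem hx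
  refine ⟨y :: ((x :: t) ++ s), ⟨?_, ?_⟩, ?_⟩
  · have h1 := hl.1
    rw [List.isChain_append] at h1
    rw [List.cons_append, List.isChain_cons_cons]
    refine ⟨hxy.symm, ?_⟩
    rw [← List.cons_append, List.isChain_append]
    refine ⟨h1.2.1, h1.1, ?_⟩
    intro c hc d hd
    rw [List.getLast?_append_of_ne_nil _ (by simp)] at hb
    have e1 : b = c := by
      rw [hb] at hc; simpa using hc
    have e2 : a = d := by
      rw [List.head?_append] at ha
      have hd' : s.head? = some d := by simpa using hd
      rw [hd'] at ha
      simpa using ha.symm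
    rw [← e1, ← e2]; exact hab
  · rw [List.nodup_cons]
    have hperm : ((x :: t) ++ s).Perm (s ++ x :: t) := List.perm_append_comm
    exact ⟨fun h => hy (hperm.mem_iff.1 h), hperm.nodup_iff.2 hl.2⟩
  · simp; omega

noncomputable def BS (Γ : SimpleGraph V) : Finset (Sym2 V) :=
  Finset.univ.filter (fun e => e ∉ Γ.edgeSet ∧ ∃ l a b, Longest Γ l ∧ l.head? = some a ∧
    l.getLast? = some b ∧ a ≠ b ∧ e = s(a, b))

lemma Expd.lv {Γ : SimpleGraph V} (h : Expd Γ) (h8 : 16 ≤ Fintype.card V) : Lv Γ := by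
  have key : ∀ X : Finset V, X.Nonempty → 2 * X.card ≤ Fintype.card V →
      ∃ x ∈ X, ∃ y, y ∉ X ∧ Γ.Adj x y := by
    intro X hX hc
    by_cases h4 : 4 * X.card ≤ Fintype.card V
    · have h1 := h X hX h4
      have : 0 < X.card := hX.card_pos
      have hne : (extNbhd Γ X).Nonempty := by
        rw [← Finset.card_pos]; omega
      obtain ⟨y, hy⟩ := hne
      simp only [extNbhd, Finset.mem_filter, Finset.mem_univ, true_and] at hy
      obtain ⟨hy, x, hx, hxy⟩ := hy
      exact ⟨x, hx, y, hy, hxy⟩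
    · obtain ⟨U, hUX, hU⟩ := Finset.exists_subset_card_eq (s := X) (n := Fintype.card V / 4) (by omega)
      have h1 := h U (by rw [← Finset.card_pos]; omega) (by omega)
      by_contra hno
      push Not at hno
      have hsub : extNbhd Γ U ⊆ X \ U := by
        intro y hy
        simp only [extNbhd, Finset.mem_filter, Finset.mem_univ, true_and] at hy
        obtain ⟨hy, x, hx, hxy⟩ := hy
        rw [Finset.mem_sdiff]
        refine ⟨?_, hy⟩
        by_contra hyX
        exact hno x (hUX hx) y hyX hxy
      have h2 := Finset.card_le_card hsub
      rw [Finset.card_sdiff_of_subset hUX] at h2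
      omega
  intro X hX hne
  by_cases hc : 2 * X.card ≤ Fintype.card V
  · exact key X hX hc
  · have hcc := Finset.card_compl X
    have hXle := Finset.card_le_univ X
    obtain ⟨x, hx, y, hy, hxy⟩ := key Xᶜ (by
      rw [Finset.nonempty_iff_ne_empty]
      intro h0
      exact hne (by simpa using h0)) (by omega)
    refine ⟨y, by simpa using hy, x, by simpa using hx, hxy.symm⟩

lemma exists_longest (Γ : SimpleGraph V) : ∃ l, Longest Γ l := by
  have hb : ∀ l, IsP Γ l → l.length ≤ Fintype.card V := fun l hl => hl.2.length_le_card
  have hne : ∃ m, ∃ l, IsP Γ l ∧ l.length = m := ⟨0, [], ⟨by simp, by simp⟩, rfl⟩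
  let m := Nat.findGreatest (fun m => ∃ l, IsP Γ l ∧ l.length = m) (Fintype.card V)
  have hm : ∃ l, IsP Γ l ∧ l.length = m :=
    Nat.findGreatest_spec (P := fun m => ∃ l, IsP Γ l ∧ l.length = m) (Nat.zero_le _)
      ⟨[], ⟨by simp, by simp⟩, rfl⟩
  obtain ⟨l, hl, hlm⟩ := hm
  refine ⟨l, hl, fun l' hl' => ?_⟩
  rw [hlm]
  exact Nat.le_findGreatest (hb l' hl') ⟨l', hl', rfl⟩

lemma longest_two {Γ : SimpleGraph V} (hlv : Lv Γ) (h8 : 2 ≤ Fintype.card V) {l : List V}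
    (hl : Longest Γ l) : 2 ≤ l.length := by
  obtain ⟨v⟩ : Nonempty V := Fintype.card_pos_iff.1 (by omega)
  obtain ⟨x, hx, y, hy, hxy⟩ := hlv {v} (by simp) (by
    intro h; have := congrArg Finset.card h; rw [Finset.card_univ] at this; simp at this; omega)
  have := hl.2 [x, y] ⟨by simp [hxy], by simp [hxy.ne]⟩
  simpa using this

lemma ends_card {Γ : SimpleGraph V} (h : Expd Γ) {l : List V} (hl : Longest Γ l)
    (h2 : 2 ≤ l.length) : Fintype.card V < 4 * (ENDS Γ l).card := by
  cases l with
  | nil => simp at h2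
  | cons z l =>
    by_contra hcon
    have h1 := posa_card hl
    have hne : (ENDS Γ (z :: l)).Nonempty := by
      refine ⟨z, ?_⟩
      simp only [ENDS, Finset.mem_filter, Finset.mem_univ, true_and]
      exact ⟨_, Relation.ReflTransGen.refl, by simp⟩
    have := h _ hne (by omega)
    omega

lemma ends_spec {Γ : SimpleGraph V} {l : List V} (hl : Longest Γ l) {v : V} (hv : v ∈ ENDS Γ l) :
    ∃ l', Longest Γ l' ∧ l'.head? = some v ∧ l'.getLast? = l.getLast? := by
  simp only [ENDS, Finset.mem_filter, Finset.mem_univ, true_and] at hv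
  obtain ⟨l', hr, hh⟩ := hv
  obtain ⟨h1, h2, h3⟩ := hr.spec hl.1
  refine ⟨l', ⟨h1, ?_⟩, hh, h3⟩
  rw [h2.length_eq]; exact hl.2

lemma Longest.reverse {Γ : SimpleGraph V} {l : List V} (hl : Longest Γ l) : Longest Γ l.reverse := by
  refine ⟨⟨?_, by simpa using hl.1.2⟩, by simpa using hl.2⟩
  rw [List.isChain_reverse]
  refine hl.1.1.imp ?_
  intro a b hab; exact hab.symm

lemma ht_ne {l : List V} (hl : l.Nodup) (h2 : 2 ≤ l.length) {a b : V} (ha : l.head? = some a)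
    (hb : l.getLast? = some b) : a ≠ b := by
  rintro rfl
  rw [List.head?_eq_getElem?] at ha
  rw [List.getLast?_eq_getElem?] at hb
  obtain ⟨h1', h1⟩ := List.getElem?_eq_some_iff.1 ha
  obtain ⟨h2', h2⟩ := List.getElem?_eq_some_iff.1 hb
  have : 0 = l.length - 1 := (hl.getElem_inj_iff).1 (h1.trans h2.symm)
  omega

lemma boosters_many {Γ : SimpleGraph V} (h : Expd Γ) (h16 : 16 ≤ Fintype.card V)
    (hno : ¬ HasHam Γ) : (Fintype.card V) ^ 2 ≤ 32 * (BS Γ).card := by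
  set n := Fintype.card V with hn
  have hlv := h.lv h16
  obtain ⟨l, hl⟩ := exists_longest Γ
  have h2 := longest_two hlv (by omega) hl
  let P : Finset (V × V) := Finset.univ.filter (fun q => ∃ l, Longest Γ l ∧ l.head? = some q.1 ∧
    l.getLast? = some q.2)
  obtain ⟨b0, hb0⟩ : ∃ b0, l.getLast? = some b0 := by
    refine ⟨_, List.getLast?_eq_some_getLast ?_⟩
    rintro rfl; simp at h2
  have hfib : ∀ a ∈ ENDS Γ l, n + 1 ≤ 4 * (P.filter (fun q => q.2 = a)).card := by
    intro a ha
    obtain ⟨l', hl', hh, -⟩ := ends_spec hl ha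
    have hr := hl'.reverse
    have hc := ends_card h hr (longest_two hlv (by omega) hr)
    have : (ENDS Γ l'.reverse).card ≤ (P.filter (fun q => q.2 = a)).card := by
      apply Finset.card_le_card_of_injOn (fun c => (c, a))
      · intro c hc
        obtain ⟨l'', hl'', hh'', hlast⟩ := ends_spec hr hc
        simp only [P, Finset.coe_filter, Finset.mem_filter, Finset.mem_univ, true_and, Set.mem_ofPred_eq, and_true]
        refine ⟨l'', hl'', hh'', ?_⟩
        rw [hlast, List.getLast?_reverse, hh]
      · intro c _ c' _ hcc
        simpa using hcc
    omega
  have hEc := ends_card h hl h2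
  have hP : (n + 1) * (n + 1) ≤ 16 * P.card := by
    have h1 : ∑ a ∈ ENDS Γ l, (P.filter (fun q => q.2 = a)).card ≤ P.card := by
      rw [← Finset.card_biUnion]
      · apply Finset.card_le_card
        intro q hq
        simp at hq
        exact hq.2
      · intro a _ b _ hab
        rw [Function.onFun, Finset.disjoint_left]
        intro q hq hq'
        simp at hq hq'
        exact hab (hq.2.symm.trans hq'.2)
    have h2 : (ENDS Γ l).card * (n+1) ≤ ∑ a ∈ ENDS Γ l, 4 * (P.filter (fun q => q.2 = a)).card := by
      rw [← smul_eq_mul]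
      exact Finset.card_nsmul_le_sum _ _ _ hfib
    rw [← Finset.mul_sum] at h2
    nlinarith
  have hB : P.card ≤ 2 * (BS Γ).card := by
    apply Finset.card_le_mul_card_image_of_maps_to (f := fun q : V × V => s(q.1, q.2))
    · intro q hq
      simp only [P, Finset.mem_filter, Finset.mem_univ, true_and] at hq
      obtain ⟨l', hl', hh, hlast⟩ := hq
      simp only [BS, Finset.mem_filter, Finset.mem_univ, true_and]
      refine ⟨?_, l', q.1, q.2, hl', hh, hlast, ht_ne hl'.1.2 (longest_two hlv (by omega) hl') hh hlast, rfl⟩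
      intro hadj
      rw [SimpleGraph.mem_edgeSet] at hadj
      rcases close_up (by omega) hlv hl'.1 hh hlast hadj.symm with h | ⟨l'', h1, h2⟩
      · exact hno h
      · have := hl'.2 _ h1; omega
    · intro e _
      induction e using Sym2.ind with
      | _ x y =>
        have : (P.filter (fun q => s(q.1, q.2) = s(x, y))) ⊆ {(x, y), (y, x)} := by
          intro q hq
          simp only [Finset.mem_filter, Sym2.eq_iff] at hq
          rcases hq.2 with ⟨h1, h2⟩ | ⟨h1, h2⟩
          · simp [← h1, ← h2]
          · simp [← h1, ← h2]
        exact (Finset.card_le_card this).trans Finset.card_le_two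
  nlinarith

lemma IsP.mono {Γ Γ' : SimpleGraph V} (h : Γ ≤ Γ') {l : List V} (hl : IsP Γ l) : IsP Γ' l :=
  ⟨hl.1.imp (fun _ _ hab => h hab), hl.2⟩

lemma Lv.mono {Γ Γ' : SimpleGraph V} (h : Γ ≤ Γ') (hl : Lv Γ) : Lv Γ' := by
  intro X hX hne
  obtain ⟨x, hx, y, hy, hxy⟩ := hl X hX hne
  exact ⟨x, hx, y, hy, h hxy⟩

lemma extNbhd_mono {Γ Γ' : SimpleGraph V} (h : Γ ≤ Γ') (U : Finset V) :
    extNbhd Γ U ⊆ extNbhd Γ' U := by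
  intro y hy
  simp only [extNbhd, Finset.mem_filter, Finset.mem_univ, true_and] at hy ⊢
  obtain ⟨hy, x, hx, hxy⟩ := hy
  exact ⟨hy, x, hx, h hxy⟩

lemma Expd.mono {Γ Γ' : SimpleGraph V} (h : Γ ≤ Γ') (hl : Expd Γ) : Expd Γ' := fun U hU hc =>
  (hl U hU hc).trans (Finset.card_le_card (extNbhd_mono h U))

lemma HasHam.mono {Γ Γ' : SimpleGraph V} (h : Γ ≤ Γ') (hl : HasHam Γ) : HasHam Γ' := by
  obtain ⟨v, c, hc⟩ := hl
  exact ⟨_, c.map (.ofLE h), hc.map Function.bijective_id⟩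

/-- number of edges -/
noncomputable def ec (Γ : SimpleGraph V) : ℕ := Γ.edgeSet.ncard

lemma ec_eq (Γ : SimpleGraph V) [Fintype Γ.edgeSet] : ec Γ = Γ.edgeFinset.card := by
  rw [ec, Set.ncard_eq_toFinset_card']; rfl

lemma edge_add (Γ : SimpleGraph V) (e : Sym2 V) :
    ec (Γ ⊔ fromEdgeSet {e}) ≤ ec Γ + 1 := by
  have : (Γ ⊔ fromEdgeSet {e}).edgeSet ⊆ insert e Γ.edgeSet := by
    intro f hf
    rw [SimpleGraph.edgeSet_sup] at hf
    rw [Set.mem_insert_iff]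
    rcases hf with hf | hf
    · exact Or.inr hf
    · rw [SimpleGraph.edgeSet_fromEdgeSet] at hf
      left; simpa using hf.1
  exact (Set.ncard_le_ncard this (Set.toFinite _)).trans (Set.ncard_insert_le _ _)

lemma boost_iter {G Γ0 : SimpleGraph V} (h16 : 16 ≤ Fintype.card V) (hle : Γ0 ≤ G) (hex : Expd Γ0)
    (hb : ∀ Γ : SimpleGraph V, Γ0 ≤ Γ → Γ ≤ G →
      ec Γ ≤ ec Γ0 + Fintype.card V → ¬ HasHam Γ →
      ∃ e ∈ BS Γ, e ∈ G.edgeSet) : HasHam G := by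
  by_contra hno
  have key : ∀ j, j ≤ Fintype.card V + 1 → ∃ Γ : SimpleGraph V, Γ0 ≤ Γ ∧ Γ ≤ G ∧
      ec Γ ≤ ec Γ0 + j ∧ ∃ l, IsP Γ l ∧ j ≤ l.length := by
    intro j
    induction j with
    | zero => exact fun _ => ⟨Γ0, le_refl _, hle, by simp, [], ⟨by simp, by simp⟩, by simp⟩
    | succ j ih =>
      intro hj
      obtain ⟨Γ, h1, h2, h3, l, hl, hlj⟩ := ih (by omega)
      obtain ⟨e, he, heG⟩ := hb Γ h1 h2 (by omega) (fun h => hno (h.mono h2))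
      simp only [BS, Finset.mem_filter, Finset.mem_univ, true_and] at he
      obtain ⟨heΓ, l', a, b, hl', hh, hlast, hab, rfl⟩ := he
      have hle' : Γ ≤ Γ ⊔ fromEdgeSet {s(a, b)} := le_sup_left
      have hleG : Γ ⊔ fromEdgeSet {s(a, b)} ≤ G := by
        apply sup_le h2
        intro x y hxy
        rw [SimpleGraph.fromEdgeSet_adj] at hxy
        have := hxy.1
        rw [Set.mem_singleton_iff] at this
        rw [← SimpleGraph.mem_edgeSet, this]; exact heG
      refine ⟨_, h1.trans hle', hleG, (edge_add Γ _).trans (by omega), ?_⟩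
      have hadj : (Γ ⊔ fromEdgeSet {s(a, b)}).Adj b a := by
        right
        rw [SimpleGraph.fromEdgeSet_adj]
        exact ⟨by simp [Sym2.eq_swap], hab.symm⟩
      rcases close_up (by omega) ((hex.lv h16).mono (h1.trans hle')) (hl'.1.mono hle') hh hlast hadj
        with h | ⟨l'', hl'', hlen⟩
      · exact absurd (h.mono hleG) hno
      · refine ⟨l'', hl'', ?_⟩
        have := hl'.2 l hl
        omega
  obtain ⟨Γ, -, -, -, l, hl, hlj⟩ := key _ le_rfl
  have := hl.2.length_le_card
  omega

end Boost
end HC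

namespace HC

set_option linter.unusedSectionVars false

lemma hitting {ι E : Type*} [DecidableEq ι] [DecidableEq E] (F : Finset ι) (X : Finset E) (f : ι → Finset E) (η : ℝ)
    (h1 : η ≤ 1) (hX : X.Nonempty) (hsub : ∀ i ∈ F, f i ⊆ X)
    (hη : ∀ i ∈ F, η * X.card ≤ (f i).card) (r : ℕ) :
    ∃ R, R ⊆ X ∧ R.card ≤ r ∧
      ((F.filter (fun i => Disjoint (f i) R)).card : ℝ) ≤ (1 - η) ^ r * F.card := by
  induction r with
  | zero => exact ⟨∅, by simp, by simp, by simp⟩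
  | succ r ih =>
    obtain ⟨R, hRX, hRc, hR⟩ := ih
    set F' := F.filter (fun i => Disjoint (f i) R) with hF'
    have hdc : ∑ x ∈ X, ((F'.filter (fun i => x ∈ f i)).card : ℝ) = ∑ i ∈ F', ((f i).card : ℝ) := by
      have := Finset.sum_card_bipartiteAbove_eq_sum_card_bipartiteBelow (s := X) (t := F') (fun x i => x ∈ f i)
      simp only [Finset.bipartiteAbove, Finset.bipartiteBelow] at this
      rw [← Nat.cast_sum, ← Nat.cast_sum, this]
      congr 1
      apply Finset.sum_congr rfl
      intro i hi
      congr 1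
      ext x
      simp only [Finset.mem_filter, and_iff_right_iff_imp]
      exact fun hx => hsub i (Finset.mem_filter.1 hi).1 hx
    obtain ⟨x, hx, hxc⟩ : ∃ x ∈ X, η * F'.card ≤ ((F'.filter (fun i => x ∈ f i)).card : ℝ) := by
      apply Finset.exists_le_of_sum_le hX
      rw [hdc]
      have : ∑ i ∈ F', (η * X.card) ≤ ∑ i ∈ F', ((f i).card : ℝ) :=
        Finset.sum_le_sum fun i hi => hη i (Finset.mem_filter.1 hi).1
      simp only [Finset.sum_const, nsmul_eq_mul] at this ⊢
      linarith
    refine ⟨insert x R, Finset.insert_subset hx hRX, (Finset.card_insert_le _ _).trans (by omega), ?_⟩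
    have hsp := Finset.card_filter_add_card_filter_not (s := F') (fun i => x ∈ f i)
    have heq : F.filter (fun i => Disjoint (f i) (insert x R)) ⊆ F'.filter (fun i => ¬ x ∈ f i) := by
      intro i hi
      simp only [hF', Finset.mem_filter, Finset.disjoint_insert_right] at hi ⊢
      tauto
    have hle : ((F.filter (fun i => Disjoint (f i) (insert x R))).card : ℝ) ≤
        ((F'.filter (fun i => ¬ x ∈ f i)).card : ℝ) := by exact_mod_cast Finset.card_le_card heq
    have hsp' : ((F'.filter (fun i => x ∈ f i)).card : ℝ) + ((F'.filter (fun i => ¬ x ∈ f i)).card : ℝ) = F'.card := by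
      exact_mod_cast hsp
    calc _ ≤ (1 - η) * F'.card := by linarith
      _ ≤ (1 - η) * ((1 - η) ^ r * F.card) := by
          apply mul_le_mul_of_nonneg_left hR; linarith
      _ = _ := by ring

section Det
variable {V : Type*} [Fintype V] [DecidableEq V]

/-- neighbours -/
noncomputable def nb (G : SimpleGraph V) (v : V) : Finset V := Finset.univ.filter (fun w => G.Adj v w)

lemma mem_nb {G : SimpleGraph V} {v w : V} : w ∈ nb G v ↔ G.Adj v w := by simp [nb]

/-- edges inside `T` -/
noncomputable def eI (G : SimpleGraph V) (T : Finset V) : Finset (Sym2 V) :=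
  Finset.univ.filter (fun e => e ∈ G.edgeSet ∧ ∀ v ∈ e, v ∈ T)

def SmallOK (G : SimpleGraph V) (Sm : Finset V) : Prop :=
  ∀ T Q : Finset V, ∀ F : Finset (Sym2 V), T.card ≤ 5 → Q.card ≤ 2 → Q ⊆ T → Q ⊆ Sm →
    F ⊆ eI G T → F.card + Q.card ≤ T.card

lemma SmallOK.one {G : SimpleGraph V} {Sm : Finset V} (h : SmallOK G Sm) {a b : V} (ha : a ∈ Sm)
    (hb : b ∈ Sm) (hab : G.Adj a b) : False := by
  have hne := hab.ne
  have := h {a, b} {a, b} {s(a,b)} (by grind) (by grind) (by grind) (by grind)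
    (by intro e he; simp only [Finset.mem_singleton] at he; subst he; simp [eI, hab])
  rw [Finset.card_pair hne] at this
  simp at this

lemma SmallOK.two {G : SimpleGraph V} {Sm : Finset V} (h : SmallOK G Sm) {a x b : V} (ha : a ∈ Sm)
    (hb : b ∈ Sm) (hab : a ≠ b) (hax : G.Adj a x) (hxb : G.Adj x b) : False := by
  have h1 := hax.ne
  have h2 := hxb.ne
  have := h {a, x, b} {a, b} {s(a,x), s(x,b)} (by grind) (by grind) (by grind) (by grind)
    (by intro e he; simp only [Finset.mem_singleton, Finset.mem_insert] at he
        rcases he with rfl | rfl <;> simp [eI, hax, hxb])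
  have e1 : ({a, x, b} : Finset V).card = 3 := by grind
  have e2 : ({a, b} : Finset V).card = 2 := by grind
  have e3 : ({s(a,x), s(x,b)} : Finset (Sym2 V)).card = 2 := by
    apply Finset.card_pair; intro he; rw [Sym2.eq_iff] at he; grind
  omega

lemma SmallOK.tri {G : SimpleGraph V} {Sm : Finset V} (h : SmallOK G Sm) {a x y : V} (ha : a ∈ Sm)
    (hax : G.Adj a x) (hxy : G.Adj x y) (hya : G.Adj y a) : False := by
  have h1 := hax.ne
  have h2 := hxy.ne
  have h3 := hya.ne
  have := h {a, x, y} {a} {s(a,x), s(x,y), s(y,a)} (by grind) (by grind) (by grind) (by grind)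
    (by intro e he; simp only [Finset.mem_singleton, Finset.mem_insert] at he
        rcases he with rfl | rfl | rfl <;> simp [eI, hax, hxy, hya])
  have e1 : ({a, x, y} : Finset V).card = 3 := by grind
  have e3 : ({s(a,x), s(x,y), s(y,a)} : Finset (Sym2 V)).card = 3 := by
    apply Finset.card_eq_three.2
    refine ⟨_, _, _, ?_, ?_, ?_, rfl⟩ <;> · intro he; rw [Sym2.eq_iff] at he; grind
  simp at this
  omega

lemma SmallOK.three {G : SimpleGraph V} {Sm : Finset V} (h : SmallOK G Sm) {a x y b : V} (ha : a ∈ Sm)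
    (hb : b ∈ Sm) (hab : a ≠ b) (hay : a ≠ y) (hbx : b ≠ x)
    (hax : G.Adj a x) (hxy : G.Adj x y) (hyb : G.Adj y b) : False := by
  have h1 := hax.ne
  have h2 := hxy.ne
  have h3 := hyb.ne
  have := h {a, x, y, b} {a, b} {s(a,x), s(x,y), s(y,b)} (by grind) (by grind) (by grind) (by grind)
    (by intro e he; simp only [Finset.mem_singleton, Finset.mem_insert] at he
        rcases he with rfl | rfl | rfl <;> simp [eI, hax, hxy, hyb])
  have e1 : ({a, x, y, b} : Finset V).card = 4 := by grind
  have e2 : ({a, b} : Finset V).card = 2 := by grind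
  have e3 : ({s(a,x), s(x,y), s(y,b)} : Finset (Sym2 V)).card = 3 := by
    apply Finset.card_eq_three.2
    refine ⟨_, _, _, ?_, ?_, ?_, rfl⟩ <;> · intro he; rw [Sym2.eq_iff] at he; grind
  omega

lemma card_four {α : Type*} [DecidableEq α] {a b c d : α} (h1 : a ≠ b) (h2 : a ≠ c) (h3 : a ≠ d)
    (h4 : b ≠ c) (h5 : b ≠ d) (h6 : c ≠ d) : ({a, b, c, d} : Finset α).card = 4 := by
  grind

lemma SmallOK.cyc {G : SimpleGraph V} {Sm : Finset V} (h : SmallOK G Sm) {a x u y : V} (ha : a ∈ Sm)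
    (hau : a ≠ u) (hxy : x ≠ y)
    (hax : G.Adj a x) (hxu : G.Adj x u) (huy : G.Adj u y) (hya : G.Adj y a) : False := by
  have h1 := hax.ne
  have h2 := hxu.ne
  have h3 := huy.ne
  have h4 := hya.ne
  have := h {a, x, u, y} {a} {s(a,x), s(x,u), s(u,y), s(y,a)} (by grind) (by grind) (by grind) (by grind)
    (by intro e he; simp only [Finset.mem_singleton, Finset.mem_insert] at he
        rcases he with rfl | rfl | rfl | rfl <;> simp [eI, hax, hxu, huy, hya])
  have e1 : ({a, x, u, y} : Finset V).card = 4 := by grind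
  have e3 : ({s(a,x), s(x,u), s(u,y), s(y,a)} : Finset (Sym2 V)).card = 4 := by
    apply card_four <;> · intro he; rw [Sym2.eq_iff] at he; grind
  simp only [Finset.card_singleton] at this
  omega

lemma SmallOK.four {G : SimpleGraph V} {Sm : Finset V} (h : SmallOK G Sm) {a x u y b : V} (ha : a ∈ Sm)
    (hb : b ∈ Sm) (hab : a ≠ b) (hau : a ≠ u) (hay : a ≠ y) (hxy : x ≠ y) (hbx : b ≠ x) (hbu : b ≠ u)
    (hax : G.Adj a x) (hxu : G.Adj x u) (huy : G.Adj u y) (hyb : G.Adj y b) : False := by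
  have h1 := hax.ne
  have h2 := hxu.ne
  have h3 := huy.ne
  have h4 := hyb.ne
  have := h {a, x, u, y, b} {a, b} {s(a,x), s(x,u), s(u,y), s(y,b)} (by grind) (by grind) (by grind) (by grind)
    (by intro e he; simp only [Finset.mem_singleton, Finset.mem_insert] at he
        rcases he with rfl | rfl | rfl | rfl <;> simp [eI, hax, hxu, huy, hyb])
  have e1 : ({a, x, u, y, b} : Finset V).card = 5 := by grind
  have e2 : ({a, b} : Finset V).card = 2 := by grind
  have e3 : ({s(a,x), s(x,u), s(u,y), s(y,b)} : Finset (Sym2 V)).card = 4 := by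
    apply card_four <;> · intro he; rw [Sym2.eq_iff] at he; grind
  omega

lemma SmallOK.unique {G : SimpleGraph V} {Sm U : Finset V} (h : SmallOK G Sm) (hU : U ⊆ Sm)
    {u x y : V} (hu : u ∉ Sm) (hx : x ∈ U ∨ ∃ a ∈ U, G.Adj a x) (hy : y ∈ U ∨ ∃ a ∈ U, G.Adj a y)
    (hux : G.Adj u x) (huy : G.Adj u y) : x = y := by
  by_contra hxy
  have hne : ∀ a ∈ U, a ≠ u := fun a ha hau => hu (hau ▸ hU ha)
  rcases hx with hx | ⟨a, ha, hax⟩ <;> rcases hy with hy | ⟨b, hb, hby⟩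
  · exact h.two (hU hx) (hU hy) hxy hux.symm huy
  · by_cases hbx : b = x
    · subst hbx
      exact h.tri (hU hb) hby huy.symm hux
    · exact h.three (hU hx) (hU hb) (Ne.symm hbx) hxy (hne b hb) hux.symm huy hby.symm
  · by_cases hay : a = y
    · subst hay
      exact h.tri (hU ha) hax hux.symm huy
    · exact h.three (hU hy) (hU ha) (Ne.symm hay) (Ne.symm hxy) (hne a ha) huy.symm hux hax.symm
  · by_cases hab : a = b
    · subst hab
      exact h.cyc (hU ha) (hne a ha) hxy hax hux.symm huy hby.symm
    · refine h.four (hU ha) (hU hb) hab (hne a ha) ?_ hxy ?_ (hne b hb) hax hux.symm huy hby.symm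
      · rintro rfl; exact h.one (hU hb) (hU ha) hby
      · rintro rfl; exact h.one (hU ha) (hU hb) hax

end Det
end HC

namespace HC

set_option linter.unusedSectionVars false
section Det
variable {V : Type*} [Fintype V] [DecidableEq V]

/-- the core expansion estimate: `Γ` sparse with prescribed degrees expands -/
lemma expd_of {G Γ : SimpleGraph V} (hle : Γ ≤ G) (Sm : Finset V) (d0 s0 : ℕ) (hd0 : 1 ≤ d0)
    (hdeg2 : ∀ v, 2 ≤ (nb Γ v).card) (hdeg : ∀ v, v ∉ Sm → d0 ≤ (nb Γ v).card)
    (hsm : SmallOK G Sm)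
    (hspan : ∀ T : Finset V, T.card ≤ 5 * s0 → 10 * (eI G T).card ≤ d0 * T.card)
    (hhit : ∀ A B : Finset V, Disjoint A B → s0 ≤ A.card → Fintype.card V ≤ 4 * B.card →
      ∃ a ∈ A, ∃ b ∈ B, Γ.Adj a b) : Expd Γ := by
  have hN2 : ∀ U : Finset V, Disjoint U Sm → U.card ≤ s0 → 4 * U.card ≤ (extNbhd Γ U).card := by
    intro U hUS hUs
    by_contra hcon
    push Not at hcon
    set T := U ∪ extNbhd Γ U with hT
    have hTc : T.card ≤ U.card + (extNbhd Γ U).card := Finset.card_union_le _ _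
    have h1 := hspan T (by omega)
    have h2 : ∑ v ∈ U, (nb Γ v).card ≤ 2 * (eI G T).card := by
      rw [← Finset.card_sigma]
      apply Finset.card_le_mul_card_image_of_maps_to (f := fun q : (Σ _ : V, V) => s(q.1, q.2))
      · rintro ⟨u, w⟩ hq
        simp only [Finset.mem_sigma, mem_nb] at hq
        simp only [eI, Finset.mem_filter, Finset.mem_univ, true_and, SimpleGraph.mem_edgeSet]
        refine ⟨hle hq.2, ?_⟩
        intro v hv
        rw [Sym2.mem_iff] at hv
        have hu : u ∈ T := by rw [hT, Finset.mem_union]; exact Or.inl hq.1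
        have hw : w ∈ T := by
          rw [hT, Finset.mem_union]
          by_cases hwU : w ∈ U
          · exact Or.inl hwU
          · right
            simp only [extNbhd, Finset.mem_filter, Finset.mem_univ, true_and]
            exact ⟨hwU, u, hq.1, hq.2⟩
        rcases hv with rfl | rfl
        · exact hu
        · exact hw
      · intro e _
        induction e using Sym2.ind with
        | _ x y =>
          refine (Finset.card_le_card (t := {⟨x, y⟩, ⟨y, x⟩}) ?_).trans Finset.card_le_two
          rintro ⟨a, b⟩ hq
          simp only [Finset.mem_filter, Sym2.eq_iff] at hq
          rcases hq.2 with ⟨h1, h2⟩ | ⟨h1, h2⟩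
          · simp [h1, h2]
          · simp [h1, h2]
    have h3 : U.card * d0 ≤ ∑ v ∈ U, (nb Γ v).card := by
      rw [← smul_eq_mul]
      exact Finset.card_nsmul_le_sum _ _ _ (fun v hv => hdeg v (Finset.disjoint_left.1 hUS hv))
    have h4 : T.card < 5 * U.card := by omega
    have h5 : d0 * T.card < d0 * (5 * U.card) := Nat.mul_lt_mul_of_pos_left h4 hd0
    nlinarith
  intro U hU h4U
  by_cases hs : s0 ≤ U.card
  · by_contra hcon
    push Not at hcon
    have hc := Finset.card_compl (U ∪ extNbhd Γ U)
    have hc' : (U ∪ extNbhd Γ U).card ≤ U.card + (extNbhd Γ U).card := Finset.card_union_le _ _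
    obtain ⟨a, ha, b, hb, hab⟩ := hhit U (U ∪ extNbhd Γ U)ᶜ (by
      rw [Finset.disjoint_left]; intro x hx; simp [hx]) hs (by omega)
    simp only [Finset.mem_compl, Finset.mem_union, not_or, extNbhd, Finset.mem_filter,
      Finset.mem_univ, true_and, not_and, not_exists] at hb
    exact hb.2 hb.1 a ha hab
  · set U1 := U ∩ Sm with hU1
    set U2 := U \ Sm with hU2
    have hcard : U1.card + U2.card = U.card := Finset.card_inter_add_card_sdiff U Sm
    have h2 := hN2 U2 (by rw [hU2]; exact Finset.sdiff_disjoint) (by omega)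
    set N2 := extNbhd Γ U2 with hN2def
    set N1 := U1.biUnion (nb Γ) with hN1def
    have hU1S : U1 ⊆ Sm := Finset.inter_subset_right
    have hN1S : ∀ x ∈ N1, x ∉ Sm := by
      intro x hx hxS
      rw [hN1def, Finset.mem_biUnion] at hx
      obtain ⟨a, ha, hax⟩ := hx
      exact hsm.one (hU1S ha) hxS (hle (mem_nb.1 hax))
    have hN1 : 2 * U1.card ≤ N1.card := by
      rw [hN1def, Finset.card_biUnion]
      · have := Finset.card_nsmul_le_sum U1 (fun u => (nb Γ u).card) 2 (fun v _ => hdeg2 v)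
        rw [smul_eq_mul] at this
        omega
      · intro a ha b hb hab
        rw [Function.onFun, Finset.disjoint_left]
        intro x hx hx'
        exact hsm.two (hU1S ha) (hU1S hb) hab (hle (mem_nb.1 hx)) (hle (mem_nb.1 hx').symm)
    have hsub : (N1 \ U2) ∪ (N2 \ (U1 ∪ N1)) ⊆ extNbhd Γ U := by
      intro x hx
      rw [Finset.mem_union] at hx
      simp only [extNbhd, Finset.mem_filter, Finset.mem_univ, true_and]
      rcases hx with hx | hx
      · rw [Finset.mem_sdiff] at hx
        have hxS := hN1S x hx.1
        refine ⟨fun hxU => hx.2 (by rw [hU2, Finset.mem_sdiff]; exact ⟨hxU, hxS⟩), ?_⟩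
        have := hx.1
        rw [hN1def, Finset.mem_biUnion] at this
        obtain ⟨a, ha, hax⟩ := this
        exact ⟨a, (Finset.mem_inter.1 ha).1, mem_nb.1 hax⟩
      · rw [Finset.mem_sdiff, Finset.mem_union, not_or] at hx
        have := hx.1
        simp only [hN2def, extNbhd, Finset.mem_filter, Finset.mem_univ, true_and] at this
        obtain ⟨hxU2, u, hu, hux⟩ := this
        refine ⟨fun hxU => ?_, u, (Finset.mem_sdiff.1 hu).1, hux⟩
        by_cases hxS : x ∈ Sm
        · exact hx.2.1 (Finset.mem_inter.2 ⟨hxU, hxS⟩)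
        · exact hxU2 (Finset.mem_sdiff.2 ⟨hxU, hxS⟩)
    have hdisj : Disjoint (N1 \ U2) (N2 \ (U1 ∪ N1)) := by
      rw [Finset.disjoint_left]
      intro x hx hx'
      simp only [Finset.mem_sdiff, Finset.mem_union, not_or] at hx hx'
      exact hx'.2.2 hx.1
    have hinj : (N2 ∩ (U1 ∪ N1)).card ≤ U2.card := by
      have hch : ∀ x ∈ N2 ∩ (U1 ∪ N1), ∃ u ∈ U2, Γ.Adj u x := by
        intro x hx
        have := (Finset.mem_inter.1 hx).1
        simp only [hN2def, extNbhd, Finset.mem_filter, Finset.mem_univ, true_and] at this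
        exact this.2
      choose! g hg hg' using hch
      apply Finset.card_le_card_of_injOn g
      · intro x hx; exact hg x hx
      · intro x hx y hy hxy
        have hcond : ∀ x ∈ N2 ∩ (U1 ∪ N1), x ∈ U1 ∨ ∃ a ∈ U1, G.Adj a x := by
          intro x hx
          have := (Finset.mem_inter.1 hx).2
          rw [Finset.mem_union, hN1def, Finset.mem_biUnion] at this
          rcases this with h | ⟨a, ha, hax⟩
          · exact Or.inl h
          · exact Or.inr ⟨a, ha, hle (mem_nb.1 hax)⟩
        have hgS : g x ∉ Sm := (Finset.mem_sdiff.1 (hg x hx)).2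
        exact hsm.unique hU1S hgS (hcond x hx) (hcond y hy) (hle (hg' x hx))
          (by rw [hxy]; exact hle (hg' y hy))
    have e1 := Finset.card_le_card hsub
    rw [Finset.card_union_of_disjoint hdisj] at e1
    have e2 := Finset.card_inter_add_card_sdiff N1 U2
    have e3 : (N1 ∩ U2).card ≤ U2.card := Finset.card_le_card Finset.inter_subset_right
    have e4 := Finset.card_inter_add_card_sdiff N2 (U1 ∪ N1)
    omega

lemma sparse_exp {G G' : SimpleGraph V} (hle : G' ≤ G) (Sm : Finset V) (d0 s0 : ℕ) (hd0 : 1 ≤ d0)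
    (hdeg2 : ∀ v, 2 ≤ (nb G' v).card) (hdeg : ∀ v, v ∉ Sm → d0 + 2 ≤ (nb G' v).card)
    (hsm : SmallOK G Sm)
    (hspan : ∀ T : Finset V, T.card ≤ 5 * s0 → 10 * (eI G T).card ≤ d0 * T.card)
    (R : Finset (Sym2 V)) (hR : ∀ e ∈ R, e ∈ G'.edgeSet)
    (hhit : ∀ A B : Finset V, Disjoint A B → s0 ≤ A.card → Fintype.card V ≤ 4 * B.card →
      ∃ a ∈ A, ∃ b ∈ B, s(a, b) ∈ R) :
    ∃ Γ ≤ G', Expd Γ ∧ ec Γ ≤ R.card + Fintype.card V * (d0 + 2) := by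
  have hch : ∀ v, ∃ N ⊆ nb G' v, N.card = if v ∈ Sm then 2 else d0 + 2 := by
    intro v
    apply Finset.exists_subset_card_eq
    split_ifs with h
    · exact hdeg2 v
    · exact hdeg v h
  choose N hN hNc using hch
  set E : Finset (Sym2 V) := R ∪ Finset.univ.biUnion (fun v => (N v).image (fun w => s(v, w))) with hE
  have hEG : ∀ e ∈ E, e ∈ G'.edgeSet := by
    intro e he
    rw [hE, Finset.mem_union, Finset.mem_biUnion] at he
    rcases he with he | ⟨v, -, he⟩
    · exact hR e he
    · obtain ⟨w, hw, rfl⟩ := Finset.mem_image.1 he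
      exact mem_nb.1 (hN v hw)
  have hadj : ∀ a b, s(a, b) ∈ E → (fromEdgeSet (E : Set (Sym2 V))).Adj a b := by
    intro a b hab
    rw [SimpleGraph.fromEdgeSet_adj]
    refine ⟨by exact_mod_cast hab, ?_⟩
    have := hEG _ hab
    rw [SimpleGraph.mem_edgeSet] at this
    exact this.ne
  have hNsub : ∀ v, N v ⊆ nb (fromEdgeSet (E : Set (Sym2 V))) v := by
    intro v w hw
    rw [mem_nb]
    apply hadj
    rw [hE, Finset.mem_union, Finset.mem_biUnion]
    exact Or.inr ⟨v, Finset.mem_univ _, Finset.mem_image.2 ⟨w, hw, rfl⟩⟩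
  have hΓle : fromEdgeSet (E : Set (Sym2 V)) ≤ G' := by
    intro a b hab
    rw [SimpleGraph.fromEdgeSet_adj] at hab
    exact hEG _ (by exact_mod_cast hab.1)
  refine ⟨fromEdgeSet (E : Set (Sym2 V)), hΓle, ?_, ?_⟩
  · refine expd_of (hΓle.trans hle) Sm d0 s0 hd0 ?_ ?_ hsm hspan ?_
    · intro v
      refine le_trans ?_ (Finset.card_le_card (hNsub v))
      rw [hNc]; split_ifs <;> omega
    · intro v hv
      refine le_trans ?_ (Finset.card_le_card (hNsub v))
      rw [hNc, if_neg hv]; omega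
    · intro A B hAB hA hB
      obtain ⟨a, ha, b, hb, hab⟩ := hhit A B hAB hA hB
      exact ⟨a, ha, b, hb, hadj a b (by rw [hE, Finset.mem_union]; exact Or.inl hab)⟩
  · have h1 : ec (fromEdgeSet (E : Set (Sym2 V))) ≤ E.card := by
      rw [ec, SimpleGraph.edgeSet_fromEdgeSet, ← Set.ncard_coe_finset]
      exact Set.ncard_le_ncard Set.sdiff_subset (Set.toFinite _)
    refine h1.trans ((Finset.card_union_le _ _).trans ?_)
    have h2 : (Finset.univ.biUnion (fun v => (N v).image (fun w => s(v, w)))).card ≤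
        (Finset.univ : Finset V).card * (d0 + 2) := by
      apply Finset.card_biUnion_le_card_mul
      intro v _
      refine Finset.card_image_le.trans ?_
      rw [hNc]; split_ifs <;> omega
    rw [Finset.card_univ] at h2
    omega

end Det
end HC

namespace HC

set_option linter.unusedSectionVars false

section Det
variable {V : Type*} [Fintype V] [DecidableEq V]

/-- edges between `A` and `B` -/
noncomputable def eB (G : SimpleGraph V) (A B : Finset V) : Finset (Sym2 V) :=
  Finset.univ.filter (fun e => e ∈ G.edgeSet ∧ ∃ a ∈ A, ∃ b ∈ B, e = s(a, b))

lemma nb_delete (G : SimpleGraph V) (H : Finset (Sym2 V)) (v : V) :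
    (nb G v).card ≤ (nb (G.deleteEdges (H : Set (Sym2 V))) v).card + (H.filter (fun e => v ∈ e)).card := by
  have h1 : nb G v \ nb (G.deleteEdges (H : Set (Sym2 V))) v ⊆ (nb G v).filter (fun w => s(v, w) ∈ H) := by
    intro w hw
    rw [Finset.mem_sdiff, mem_nb, mem_nb, SimpleGraph.deleteEdges_adj] at hw
    rw [Finset.mem_filter, mem_nb]
    refine ⟨hw.1, ?_⟩
    by_contra hc
    exact hw.2 ⟨hw.1, by simpa using hc⟩
  have h2 : ((nb G v).filter (fun w => s(v, w) ∈ H)).card ≤ (H.filter (fun e => v ∈ e)).card := by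
    apply Finset.card_le_card_of_injOn (fun w => s(v, w))
    · intro w hw
      have := (Finset.mem_filter.1 hw).2
      simp [this]
    · intro a _ b _ hab
      simp only [Sym2.eq_iff] at hab
      grind
  have h3 := Finset.card_le_card h1
  have h4 := Finset.le_card_sdiff (nb (G.deleteEdges (H : Set (Sym2 V))) v) (nb G v)
  omega

lemma one_step {G : SimpleGraph V} (i d0 s0 w E r M : ℕ) (η : ℝ) (H : Finset (Sym2 V))
    (h16 : 16 ≤ Fintype.card V)
    (hHdeg : ∀ v, (H.filter (fun e => v ∈ e)).card ≤ 2 * i) (hHc : H.card ≤ Fintype.card V * i)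
    (Sm : Finset V) (hd0 : 1 ≤ d0)
    (hdeg2 : ∀ v, 2 * i + 2 ≤ (nb G v).card) (hdeg : ∀ v, v ∉ Sm → d0 + 2 + 2 * i ≤ (nb G v).card)
    (hsm : SmallOK G Sm)
    (hspan : ∀ T : Finset V, T.card ≤ 5 * s0 → 10 * (eI G T).card ≤ d0 * T.card)
    (hcross : ∀ A B : Finset V, Disjoint A B → s0 ≤ A.card → Fintype.card V ≤ 4 * B.card →
      w + 2 * i * A.card ≤ (eB G A B).card)
    (hE : ec G ≤ E) (hη0 : 0 ≤ η) (hη1 : η ≤ 1) (hηw : η * E ≤ w)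
    (hr : (1 - η) ^ r * 4 ^ (Fintype.card V) < 1)
    (hM : r + Fintype.card V * (d0 + 2) + Fintype.card V ≤ M)
    (hbig : ∀ Γ : SimpleGraph V, Γ ≤ G → ec Γ ≤ M → (Fintype.card V) ^ 2 ≤ 32 * (BS Γ).card →
      Fintype.card V * i < ((BS Γ).filter (fun e => e ∈ G.edgeSet)).card) :
    HasHam (G.deleteEdges (H : Set (Sym2 V))) := by
  set G' := G.deleteEdges (H : Set (Sym2 V)) with hG'
  have hle : G' ≤ G := SimpleGraph.deleteEdges_le _
  have hd2 : ∀ v, 2 ≤ (nb G' v).card := by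
    intro v
    have := nb_delete G H v
    rw [← hG'] at this
    have := hHdeg v
    have := hdeg2 v
    omega
  have hd : ∀ v, v ∉ Sm → d0 + 2 ≤ (nb G' v).card := by
    intro v hv
    have := nb_delete G H v
    rw [← hG'] at this
    have := hHdeg v
    have := hdeg v hv
    omega
  set X : Finset (Sym2 V) := Finset.univ.filter (fun e => e ∈ G'.edgeSet) with hX
  have hXne : X.Nonempty := by
    have : 0 < Fintype.card V := by omega
    obtain ⟨v⟩ := Fintype.card_pos_iff.1 this
    have h2 := hd2 v
    obtain ⟨u, hu⟩ := Finset.card_pos.1 (by omega : 0 < (nb G' v).card)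
    exact ⟨s(v, u), by rw [hX, Finset.mem_filter]; exact ⟨Finset.mem_univ _, mem_nb.1 hu⟩⟩
  have hXc : X.card ≤ E := by
    refine le_trans ?_ hE
    rw [ec, ← Set.ncard_coe_finset]
    apply Set.ncard_le_ncard _ (Set.toFinite _)
    intro e he
    have : e ∈ G'.edgeSet := by simpa [hX] using he
    exact SimpleGraph.edgeSet_mono hle this
  set F : Finset (Finset V × Finset V) := Finset.univ.filter (fun q => Disjoint q.1 q.2 ∧
    s0 ≤ q.1.card ∧ Fintype.card V ≤ 4 * q.2.card) with hF
  have hcr : ∀ q ∈ F, w ≤ (eB G' q.1 q.2).card := by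
    intro q hq
    rw [hF, Finset.mem_filter] at hq
    have h1 := hcross q.1 q.2 hq.2.1 hq.2.2.1 hq.2.2.2
    have h2 : eB G q.1 q.2 ⊆ eB G' q.1 q.2 ∪ q.1.biUnion (fun v => H.filter (fun e => v ∈ e)) := by
      intro e he
      simp only [eB, Finset.mem_filter, Finset.mem_univ, true_and] at he
      obtain ⟨heG, a, ha, b, hb, rfl⟩ := he
      by_cases hh : s(a, b) ∈ H
      · rw [Finset.mem_union]; right
        rw [Finset.mem_biUnion]
        exact ⟨a, ha, by simp [hh]⟩
      · rw [Finset.mem_union]; left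
        simp only [eB, Finset.mem_filter, Finset.mem_univ, true_and]
        refine ⟨?_, a, ha, b, hb, rfl⟩
        rw [hG', SimpleGraph.edgeSet_deleteEdges]
        exact ⟨heG, by simpa using hh⟩
    have h3 := (Finset.card_le_card h2).trans (Finset.card_union_le _ _)
    have h4 : (q.1.biUnion (fun v => H.filter (fun e => v ∈ e))).card ≤ q.1.card * (2 * i) :=
      Finset.card_biUnion_le_card_mul _ _ _ (fun v _ => hHdeg v)
    have h5 : q.1.card * (2 * i) = 2 * i * q.1.card := by ring
    omega
  have hFc : (F.card : ℝ) ≤ 4 ^ (Fintype.card V) := by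
    have : F.card ≤ 4 ^ (Fintype.card V) := by
      refine (Finset.card_le_univ _).trans ?_
      rw [Fintype.card_prod, Fintype.card_finset, ← mul_pow]
      norm_num
    exact_mod_cast this
  obtain ⟨R, hRX, hRc, hR⟩ := hitting F X (fun q => eB G' q.1 q.2) η hη1 hXne (by
      intro q _ e he
      simp only [eB, Finset.mem_filter, Finset.mem_univ, true_and] at he
      simp [hX, he.1]) (by
      intro q hq
      have h1 : (w : ℝ) ≤ ((eB G' q.1 q.2).card : ℝ) := by exact_mod_cast hcr q hq
      have h2 : η * X.card ≤ η * E := mul_le_mul_of_nonneg_left (by exact_mod_cast hXc) hη0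
      linarith) r
  have hR0 : (F.filter (fun q => Disjoint (eB G' q.1 q.2) R)).card = 0 := by
    have h1 : (1 - η) ^ r * (F.card : ℝ) ≤ (1 - η) ^ r * 4 ^ (Fintype.card V) :=
      mul_le_mul_of_nonneg_left hFc (pow_nonneg (by linarith) _)
    have h2 : ((F.filter (fun q => Disjoint (eB G' q.1 q.2) R)).card : ℝ) < 1 := by linarith
    have h3 : (F.filter (fun q => Disjoint (eB G' q.1 q.2) R)).card < 1 := by exact_mod_cast h2
    omega
  obtain ⟨Γ, hΓ, hex, hΓc⟩ := sparse_exp hle Sm d0 s0 hd0 hd2 hd hsm hspan R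
    (by intro e he; have := hRX he; simpa [hX] using this) (by
      intro A B hAB hA hB
      by_contra hc
      have hmem : (A, B) ∈ F.filter (fun q => Disjoint (eB G' q.1 q.2) R) := by
        rw [Finset.mem_filter]
        refine ⟨by rw [hF, Finset.mem_filter]; exact ⟨Finset.mem_univ _, hAB, hA, hB⟩, ?_⟩
        rw [Finset.disjoint_left]
        intro e he heR
        simp only [eB, Finset.mem_filter, Finset.mem_univ, true_and] at he
        obtain ⟨-, a, ha, b, hb, rfl⟩ := he
        exact hc ⟨a, ha, b, hb, heR⟩
      rw [Finset.card_eq_zero] at hR0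
      rw [hR0] at hmem
      simp at hmem)
  apply boost_iter h16 hΓ hex
  intro Γ' h1 h2 h3 h4
  have h5 := boosters_many (hex.mono h1) h16 h4
  have h6 := hbig Γ' (h2.trans hle) (by omega) h5
  by_contra hc
  have h7 : (BS Γ').filter (fun e => e ∈ G.edgeSet) ⊆ H := by
    intro e he
    rw [Finset.mem_filter] at he
    by_contra hh
    apply hc
    refine ⟨e, he.1, ?_⟩
    rw [hG', SimpleGraph.edgeSet_deleteEdges]
    exact ⟨he.2, by simpa using hh⟩
  have := Finset.card_le_card h7
  omega

lemma ham_deg {G : SimpleGraph V} {v : V} (c : G.Walk v v) (hc : c.IsHamiltonianCycle) (u : V) :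
    (c.edges.toFinset.filter (fun e => u ∈ e)).card ≤ 2 := by
  have h := hc.isCycle.ncard_neighborSet_toSubgraph_eq_two (hc.mem_support u)
  rw [← h, ← Set.ncard_coe_finset]
  have : ((c.edges.toFinset.filter (fun e => u ∈ e) : Finset (Sym2 V)) : Set (Sym2 V)) ⊆
      (fun w => s(u, w)) '' (c.toSubgraph.neighborSet u) := by
    intro e he
    simp only [Finset.coe_filter, List.mem_toFinset, Set.mem_ofPred_eq] at he
    obtain ⟨he, hu⟩ := he
    obtain ⟨w, rfl⟩ := Sym2.mem_iff_exists.1 hu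
    refine ⟨w, ?_, rfl⟩
    rw [Subgraph.mem_neighborSet, ← Subgraph.mem_edgeSet, Walk.mem_edges_toSubgraph]
    exact he
  exact (Set.ncard_le_ncard this (Set.toFinite _)).trans (Set.ncard_image_le (Set.toFinite _))

lemma ham_edges {G : SimpleGraph V} {v : V} (c : G.Walk v v) (hc : c.IsHamiltonianCycle) :
    c.edges.toFinset.card ≤ Fintype.card V := by
  refine (List.toFinset_card_le _).trans ?_
  rw [Walk.length_edges, hc.length_eq]

lemma collect {G : SimpleGraph V} (k : ℕ)
    (h : ∀ i < k, ∀ H : Finset (Sym2 V), (∀ v, (H.filter (fun e => v ∈ e)).card ≤ 2 * i) →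
      H.card ≤ Fintype.card V * i → HasHam (G.deleteEdges (H : Set (Sym2 V)))) :
    ∃ c : Fin k → Σ v : V, G.Walk v v, (∀ i, (c i).2.IsHamiltonianCycle) ∧
      (∀ i j, i ≠ j → List.Disjoint ((c i).2.edges) ((c j).2.edges)) := by
  induction k with
  | zero => exact ⟨Fin.elim0, fun i => i.elim0, fun i => i.elim0⟩
  | succ k ih =>
    obtain ⟨c, hc, hd⟩ := ih (fun i hi => h i (by omega))
    set H : Finset (Sym2 V) := Finset.univ.biUnion (fun i : Fin k => (c i).2.edges.toFinset) with hH
    obtain ⟨v, q, hq⟩ := h k (by omega) H (by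
      intro v
      rw [hH, Finset.filter_biUnion]
      refine (Finset.card_biUnion_le_card_mul _ _ 2 (fun i _ => ham_deg _ (hc i) v)).trans ?_
      simp [mul_comm]) (by
      rw [hH]
      refine (Finset.card_biUnion_le_card_mul _ _ (Fintype.card V) (fun i _ => ham_edges _ (hc i))).trans ?_
      simp [mul_comm])
    have hle : G.deleteEdges (H : Set (Sym2 V)) ≤ G := SimpleGraph.deleteEdges_le _
    have hqH : ∀ e ∈ q.edges, e ∉ H := by
      intro e he
      have := q.edges_subset_edgeSet he
      rw [SimpleGraph.edgeSet_deleteEdges] at this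
      simpa using this.2
    have hdis : ∀ i, List.Disjoint ((c i).2.edges) q.edges := by
      intro i e he1 he2
      apply hqH e he2
      rw [hH, Finset.mem_biUnion]
      exact ⟨i, Finset.mem_univ _, by simpa using he1⟩
    refine ⟨Fin.snoc (α := fun _ => Σ v : V, G.Walk v v) c ⟨v, q.mapLe hle⟩, ?_, ?_⟩
    · intro i
      refine Fin.lastCases ?_ (fun j => ?_) i
      · rw [Fin.snoc_last]
        exact hq.map (f := Hom.ofLE hle) Function.bijective_id
      · rw [Fin.snoc_castSucc]; exact hc j
    · intro i j
      refine Fin.lastCases ?_ (fun i' => ?_) i <;> refine Fin.lastCases ?_ (fun j' => ?_) j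
      · intro h; exact absurd rfl h
      · intro _
        rw [Fin.snoc_last, Fin.snoc_castSucc]
        simp only [Walk.edges_mapLe_eq_edges]
        exact (hdis j').symm
      · intro _
        rw [Fin.snoc_last, Fin.snoc_castSucc]
        simp only [Walk.edges_mapLe_eq_edges]
        exact hdis i'
      · intro hne
        rw [Fin.snoc_castSucc, Fin.snoc_castSucc]
        exact hd _ _ (fun hh => hne (by rw [hh]))

end Det
end HC

namespace HC

set_option linter.unusedSectionVars false

section Prob

/-- edge set as a finset -/
noncomputable def eF {n : ℕ} (G : SimpleGraph (Fin n)) : Finset (Sym2 (Fin n)) :=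
  Finset.univ.filter (fun e => e ∈ G.edgeSet)

lemma mem_eF {n : ℕ} {G : SimpleGraph (Fin n)} {e : Sym2 (Fin n)} : e ∈ eF G ↔ e ∈ G.edgeSet := by
  simp [eF]

lemma eF_card {n : ℕ} (G : SimpleGraph (Fin n)) [Fintype G.edgeSet] : G.edgeFinset.card = (eF G).card := by
  congr 1
  ext e
  simp [mem_eF]

/-- all potential edges -/
noncomputable def XX (n : ℕ) : Finset (Sym2 (Fin n)) := Finset.univ.filter (fun e => ¬ e.IsDiag)

lemma XX_card (n : ℕ) : (XX n).card = n.choose 2 := by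
  have h := SimpleGraph.card_edgeFinset_top_eq_card_choose_two (V := Fin n)
  rw [Fintype.card_fin] at h
  rw [← h, eF_card]
  congr 1
  ext e
  simp [mem_eF, XX]

lemma mem_XX {n : ℕ} {e : Sym2 (Fin n)} : e ∈ XX n ↔ ¬ e.IsDiag := by simp [XX]

lemma eF_sub {n : ℕ} (G : SimpleGraph (Fin n)) : eF G ⊆ XX n := by
  intro e he
  rw [mem_XX]
  exact G.not_isDiag_of_mem_edgeSet (mem_eF.1 he)

/-- expectation -/
noncomputable def EX (n : ℕ) (p : ℝ) (f : SimpleGraph (Fin n) → ℝ) : ℝ :=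
  ∑ G : SimpleGraph (Fin n), gnpWeight n p G * f G

lemma EX_set (n : ℕ) (p : ℝ) (f : Finset (Sym2 (Fin n)) → ℝ) :
    EX n p (fun G => f (eF G)) =
      ∑ S ∈ (XX n).powerset, p ^ S.card * (1 - p) ^ ((XX n).card - S.card) * f S := by
  unfold EX
  refine Finset.sum_bij' (fun G _ => eF G) (fun S _ => fromEdgeSet (S : Set (Sym2 (Fin n)))) ?_ ?_ ?_ ?_ ?_
  · intro G _
    rw [Finset.mem_powerset]; exact eF_sub G
  · intro S _; exact Finset.mem_univ _
  · intro G _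
    have : ((eF G : Finset (Sym2 (Fin n))) : Set (Sym2 (Fin n))) = G.edgeSet := by
      ext e; simp [mem_eF]
    rw [this, SimpleGraph.fromEdgeSet_edgeSet]
  · intro S hS
    ext e
    rw [mem_eF, SimpleGraph.edgeSet_fromEdgeSet]
    rw [Finset.mem_powerset] at hS
    constructor
    · intro h; exact_mod_cast h.1
    · intro h
      refine ⟨by exact_mod_cast h, ?_⟩
      have := mem_XX.1 (hS h)
      simpa using this
  · intro G _
    rw [gnpWeight, eF_card, XX_card]

lemma master (n : ℕ) (p : ℝ) (a b : Sym2 (Fin n) → ℝ) :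
    EX n p (fun G => (∏ e ∈ eF G, a e) * ∏ e ∈ XX n \ eF G, b e) =
      ∏ e ∈ XX n, (p * a e + (1 - p) * b e) := by
  rw [EX_set n p (fun S => (∏ e ∈ S, a e) * ∏ e ∈ XX n \ S, b e), Finset.prod_add]
  apply Finset.sum_congr rfl
  intro S hS
  rw [Finset.mem_powerset] at hS
  rw [Finset.prod_mul_distrib, Finset.prod_mul_distrib, Finset.prod_const, Finset.prod_const,
    Finset.card_sdiff_of_subset hS]
  ring

lemma weight_nonneg {n : ℕ} {p : ℝ} (h0 : 0 ≤ p) (h1 : p ≤ 1) (G : SimpleGraph (Fin n)) :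
    0 ≤ gnpWeight n p G :=
  mul_nonneg (pow_nonneg h0 _) (pow_nonneg (by linarith) _)

lemma EX_mono {n : ℕ} {p : ℝ} (h0 : 0 ≤ p) (h1 : p ≤ 1) {f g : SimpleGraph (Fin n) → ℝ}
    (h : ∀ G, f G ≤ g G) : EX n p f ≤ EX n p g :=
  Finset.sum_le_sum fun G _ => mul_le_mul_of_nonneg_left (h G) (weight_nonneg h0 h1 G)

lemma prob_eq (n : ℕ) (p : ℝ) (A : SimpleGraph (Fin n) → Prop) :
    gnpProb n p A = EX n p (fun G => if A G then 1 else 0) := by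
  unfold gnpProb EX
  apply Finset.sum_congr rfl
  intro G _
  by_cases h : A G <;> simp [h]

lemma EX_add {n : ℕ} {p : ℝ} (f g : SimpleGraph (Fin n) → ℝ) :
    EX n p (fun G => f G + g G) = EX n p f + EX n p g := by
  simp [EX, mul_add, Finset.sum_add_distrib]

lemma EX_sub {n : ℕ} {p : ℝ} (f g : SimpleGraph (Fin n) → ℝ) :
    EX n p (fun G => f G - g G) = EX n p f - EX n p g := by
  simp [EX, mul_sub, Finset.sum_sub_distrib]

lemma EX_smul {n : ℕ} {p : ℝ} (c : ℝ) (f : SimpleGraph (Fin n) → ℝ) :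
    EX n p (fun G => c * f G) = c * EX n p f := by
  rw [EX, EX, Finset.mul_sum]
  apply Finset.sum_congr rfl
  intro G _
  ring

lemma EX_sum {n : ℕ} {p : ℝ} {ι : Type*} (s : Finset ι) (f : ι → SimpleGraph (Fin n) → ℝ) :
    EX n p (fun G => ∑ i ∈ s, f i G) = ∑ i ∈ s, EX n p (f i) := by
  unfold EX
  rw [Finset.sum_comm]
  apply Finset.sum_congr rfl
  intro G _
  rw [Finset.mul_sum]

lemma EX_one (n : ℕ) (p : ℝ) : EX n p (fun _ => 1) = 1 := by
  have := master n p (fun _ => 1) (fun _ => 1)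
  simpa using this

lemma prob_le {n : ℕ} {p : ℝ} (h0 : 0 ≤ p) (h1 : p ≤ 1) {A : SimpleGraph (Fin n) → Prop}
    {f : SimpleGraph (Fin n) → ℝ} (hf : ∀ G, 0 ≤ f G) (h : ∀ G, A G → 1 ≤ f G) :
    gnpProb n p A ≤ EX n p f := by
  rw [prob_eq]
  apply EX_mono h0 h1
  intro G
  split_ifs with hA
  · exact h G hA
  · exact hf G

lemma prob_mono {n : ℕ} {p : ℝ} (h0 : 0 ≤ p) (h1 : p ≤ 1) {A B : SimpleGraph (Fin n) → Prop}
    (h : ∀ G, A G → B G) : gnpProb n p A ≤ gnpProb n p B := by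
  rw [prob_eq n p B]
  apply prob_le h0 h1
  · intro G; split_ifs <;> norm_num
  · intro G hA; rw [if_pos (h G hA)]

lemma prob_nonneg {n : ℕ} {p : ℝ} (h0 : 0 ≤ p) (h1 : p ≤ 1) (A : SimpleGraph (Fin n) → Prop) :
    0 ≤ gnpProb n p A := by
  unfold gnpProb
  apply Finset.sum_nonneg
  intro G _
  split_ifs
  · exact weight_nonneg h0 h1 G
  · exact le_rfl

lemma prob_union {n : ℕ} {p : ℝ} (h0 : 0 ≤ p) (h1 : p ≤ 1) {ι : Type*} (s : Finset ι)
    (A : SimpleGraph (Fin n) → Prop) (B : ι → SimpleGraph (Fin n) → Prop)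
    (h : ∀ G, A G → ∃ i ∈ s, B i G) : gnpProb n p A ≤ ∑ i ∈ s, gnpProb n p (B i) := by
  have : ∑ i ∈ s, gnpProb n p (B i) = EX n p (fun G => ∑ i ∈ s, if B i G then 1 else 0) := by
    rw [EX_sum]
    exact Finset.sum_congr rfl (fun i _ => prob_eq n p (B i))
  rw [this]
  apply prob_le h0 h1
  · intro G
    apply Finset.sum_nonneg
    intro i _
    split_ifs <;> norm_num
  · intro G hA
    obtain ⟨i, hi, hB⟩ := h G hA
    calc (1 : ℝ) = if B i G then 1 else 0 := by rw [if_pos hB]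
      _ ≤ _ := Finset.single_le_sum (f := fun i => if B i G then (1 : ℝ) else 0)
        (fun j _ => by split_ifs <;> norm_num) hi

lemma prob_or {n : ℕ} {p : ℝ} (h0 : 0 ≤ p) (h1 : p ≤ 1)
    (A B C : SimpleGraph (Fin n) → Prop)
    (h : ∀ G, A G → B G ∨ C G) : gnpProb n p A ≤ gnpProb n p B + gnpProb n p C := by
  have := prob_union h0 h1 (Finset.univ : Finset Bool) A (fun b => if b then B else C) (by
    intro G hA
    rcases h G hA with h | h
    · exact ⟨true, by simp, by simpa using h⟩
    · exact ⟨false, by simp, by simpa using h⟩)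
  simpa using this

lemma prob_compl (n : ℕ) (p : ℝ) (A : SimpleGraph (Fin n) → Prop) :
    gnpProb n p A = 1 - gnpProb n p (fun G => ¬ A G) := by
  rw [prob_eq, prob_eq, eq_sub_iff_add_eq, ← EX_add]
  refine Eq.trans ?_ (EX_one n p)
  congr 1
  ext G
  by_cases h : A G <;> simp [h]

/-- moment formula -/
lemma moment (n : ℕ) (p lam : ℝ) (F B : Finset (Sym2 (Fin n))) (hF : F ⊆ XX n) (hB : B ⊆ XX n)
    (hd : Disjoint F B) :
    EX n p (fun G => if F ⊆ eF G then lam ^ (eF G ∩ B).card else 0) =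
      p ^ F.card * (1 - p + p * lam) ^ B.card := by
  have hm := master n p (fun e => if e ∈ B then lam else 1) (fun e => if e ∈ F then 0 else 1)
  have h1 : (fun G : SimpleGraph (Fin n) => if F ⊆ eF G then lam ^ (eF G ∩ B).card else 0) =
      (fun G => (∏ e ∈ eF G, if e ∈ B then lam else 1) * ∏ e ∈ XX n \ eF G, if e ∈ F then 0 else 1) := by
    ext G
    have e1 : (∏ e ∈ eF G, if e ∈ B then lam else 1) = lam ^ (eF G ∩ B).card := by
      rw [Finset.prod_ite_mem, Finset.prod_const]
    rw [e1]
    split_ifs with h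
    · rw [Finset.prod_eq_one, mul_one]
      intro e he
      rw [Finset.mem_sdiff] at he
      rw [if_neg (fun hh => he.2 (h hh))]
    · rw [Finset.not_subset] at h
      obtain ⟨e, he, hne⟩ := h
      rw [Finset.prod_eq_zero (i := e), mul_zero]
      · rw [Finset.mem_sdiff]; exact ⟨hF he, hne⟩
      · rw [if_pos he]
  rw [h1, hm]
  have h2 : ∀ e ∈ XX n, p * (if e ∈ B then lam else 1) + (1 - p) * (if e ∈ F then 0 else 1) =
      (if e ∈ F then p else 1) * (if e ∈ B then (1 - p + p * lam) else 1) := by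
    intro e _
    by_cases hf : e ∈ F
    · have : e ∉ B := Finset.disjoint_left.1 hd hf
      simp [hf, this]
    · by_cases hb : e ∈ B
      · simp [hf, hb]; ring
      · simp [hf, hb]
  rw [Finset.prod_congr rfl h2, Finset.prod_mul_distrib, Finset.prod_ite_mem, Finset.prod_ite_mem,
    Finset.prod_const, Finset.prod_const, Finset.inter_eq_right.2 hF, Finset.inter_eq_right.2 hB]

/-- lower tail with planted edges -/
lemma lower_tail {n : ℕ} {p : ℝ} (h0 : 0 ≤ p) (h1 : p ≤ 1) (lam : ℝ) (hl0 : 0 < lam) (hl1 : lam ≤ 1)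
    (F B : Finset (Sym2 (Fin n))) (hF : F ⊆ XX n) (hB : B ⊆ XX n) (hd : Disjoint F B) (K : ℝ) :
    gnpProb n p (fun G => F ⊆ eF G ∧ ((eF G ∩ B).card : ℝ) ≤ K) ≤
      p ^ F.card * Real.exp (K * Real.log (1 / lam) - p * (1 - lam) * B.card) := by
  have hlog : Real.log lam ≤ 0 := Real.log_nonpos hl0.le hl1
  have h2 : gnpProb n p (fun G => F ⊆ eF G ∧ ((eF G ∩ B).card : ℝ) ≤ K) ≤
      EX n p (fun G => Real.exp (K * Real.log (1 / lam)) *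
        (if F ⊆ eF G then lam ^ (eF G ∩ B).card else 0)) := by
    apply prob_le h0 h1
    · intro G
      apply mul_nonneg (Real.exp_pos _).le
      split_ifs
      · positivity
      · exact le_rfl
    · rintro G ⟨hG1, hG2⟩
      rw [if_pos hG1, one_div, Real.log_inv]
      rw [← Real.exp_log (pow_pos hl0 (eF G ∩ B).card), ← Real.exp_add, Real.log_pow]
      apply Real.one_le_exp
      nlinarith
  refine h2.trans ?_
  rw [EX_smul, moment n p lam F B hF hB hd, sub_eq_add_neg (K * _), Real.exp_add]
  have h3 : (1 - p + p * lam) ^ B.card ≤ Real.exp (-(p * (1 - lam) * B.card)) := by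
    have : 1 - p + p * lam ≤ Real.exp (-(p * (1 - lam))) := by
      have := Real.add_one_le_exp (-(p * (1 - lam)))
      linarith
    have h4 : 0 ≤ 1 - p + p * lam := by nlinarith
    refine (pow_le_pow_left₀ h4 this _).trans ?_
    rw [← Real.exp_nat_mul]
    apply le_of_eq
    congr 1
    ring
  have h5 := mul_le_mul_of_nonneg_left h3 (mul_nonneg (Real.exp_pos (K * Real.log (1 / lam))).le (pow_nonneg h0 F.card))
  linarith

lemma upper_tail {n : ℕ} {p : ℝ} (h0 : 0 ≤ p) (h1 : p ≤ 1) (y : ℝ) (hy : 1 ≤ y)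
    (B : Finset (Sym2 (Fin n))) (hB : B ⊆ XX n) (K : ℝ) :
    gnpProb n p (fun G => K ≤ ((eF G ∩ B).card : ℝ)) ≤
      Real.exp (p * (y - 1) * B.card - K * Real.log y) := by
  have hy0 : 0 < y := by linarith
  have hlog : 0 ≤ Real.log y := Real.log_nonneg hy
  have h2 : gnpProb n p (fun G => K ≤ ((eF G ∩ B).card : ℝ)) ≤
      EX n p (fun G => Real.exp (-(K * Real.log y)) *
        (if ∅ ⊆ eF G then y ^ (eF G ∩ B).card else 0)) := by
    apply prob_le h0 h1
    · intro G
      apply mul_nonneg (Real.exp_pos _).le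
      split_ifs
      · positivity
      · exact le_rfl
    · rintro G hG
      rw [if_pos (Finset.empty_subset _)]
      rw [← Real.exp_log (pow_pos hy0 (eF G ∩ B).card), ← Real.exp_add, Real.log_pow]
      apply Real.one_le_exp
      nlinarith
  refine h2.trans ?_
  rw [EX_smul, moment n p y ∅ B (Finset.empty_subset _) hB (Finset.disjoint_empty_left _),
    sub_eq_add_neg (p * _ * _),
    Real.exp_add]
  have h3 : (1 - p + p * y) ^ B.card ≤ Real.exp (p * (y - 1) * B.card) := by
    have : 1 - p + p * y ≤ Real.exp (p * (y - 1)) := by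
      have := Real.add_one_le_exp (p * (y - 1))
      linarith
    have h4 : 0 ≤ 1 - p + p * y := by nlinarith
    refine (pow_le_pow_left₀ h4 this _).trans ?_
    rw [← Real.exp_nat_mul]
    apply le_of_eq
    congr 1
    ring
  have h5 := mul_le_mul_of_nonneg_left h3 (Real.exp_pos (-(K * Real.log y))).le
  simp only [Finset.card_empty, pow_zero, one_mul]
  linarith

end Prob
end HC

namespace HC

set_option linter.unusedSectionVars false

section Events

/-- complete bipartite edge set -/
noncomputable def bip {n : ℕ} (A B : Finset (Fin n)) : Finset (Sym2 (Fin n)) :=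
  (A ×ˢ B).image (fun q => s(q.1, q.2))

lemma bip_card {n : ℕ} {A B : Finset (Fin n)} (h : Disjoint A B) : (bip A B).card = A.card * B.card := by
  rw [bip, Finset.card_image_of_injOn, Finset.card_product]
  rintro ⟨a, b⟩ h1 ⟨c, d⟩ h2 h3
  simp only [Finset.coe_product, Set.mem_prod, Finset.mem_coe] at h1 h2
  simp only [Sym2.eq_iff] at h3
  rcases h3 with ⟨rfl, rfl⟩ | ⟨rfl, rfl⟩
  · rfl
  · exact absurd h2.2 (Finset.disjoint_left.1 h h1.1)

lemma bip_sub {n : ℕ} {A B : Finset (Fin n)} (h : Disjoint A B) : bip A B ⊆ XX n := by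
  intro e he
  obtain ⟨⟨a, b⟩, hq, rfl⟩ := Finset.mem_image.1 he
  rw [Finset.mem_product] at hq
  rw [mem_XX, Sym2.mk_isDiag_iff]
  rintro hab
  dsimp only at hab hq
  subst hab
  exact Finset.disjoint_left.1 h hq.1 hq.2

lemma mem_bip {n : ℕ} {A B : Finset (Fin n)} {e : Sym2 (Fin n)} :
    e ∈ bip A B ↔ ∃ a ∈ A, ∃ b ∈ B, e = s(a, b) := by
  simp only [bip, Finset.mem_image, Finset.mem_product, Prod.exists]
  constructor
  · rintro ⟨a, b, ⟨ha, hb⟩, rfl⟩; exact ⟨a, ha, b, hb, rfl⟩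
  · rintro ⟨a, ha, b, hb, rfl⟩; exact ⟨a, b, ⟨ha, hb⟩, rfl⟩

lemma eB_eq {n : ℕ} (G : SimpleGraph (Fin n)) (A B : Finset (Fin n)) : eB G A B = eF G ∩ bip A B := by
  ext e
  simp only [eB, Finset.mem_inter, mem_eF, mem_bip, Finset.mem_filter, Finset.mem_univ, true_and]

/-- the range of `p` -/
def PR (n : ℕ) (p : ℝ) : Prop :=
  0.9 * Real.log n / n ≤ p ∧ p ≤ 1.02 * Real.log n / n

/-- small probability, uniformly -/
def Unl (A : ∀ n : ℕ, SimpleGraph (Fin n) → Prop) : Prop :=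
  ∀ ε : ℝ, 0 < ε → ∀ᶠ n : ℕ in atTop, ∀ p, PR n p → gnpProb n p (A n) ≤ ε

lemma log_large (C : ℝ) : ∀ᶠ n : ℕ in atTop, C ≤ Real.log n :=
  (Real.tendsto_log_atTop.comp tendsto_natCast_atTop_atTop).eventually_ge_atTop C

lemma exp_small (c : ℝ) (hc : 0 < c) (ε : ℝ) (hε : 0 < ε) :
    ∀ᶠ n : ℕ in atTop, Real.exp (-(c * Real.log n)) ≤ ε := by
  filter_upwards [log_large (-Real.log ε / c)] with n hn
  rw [← Real.le_log_iff_exp_le hε]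
  rw [div_le_iff₀ hc] at hn
  linarith

lemma log_le_n (C : ℝ) (hC : 0 < C) : ∀ᶠ n : ℕ in atTop, C * Real.log n ≤ n := by
  have h := Real.isLittleO_log_id_atTop.comp_tendsto tendsto_natCast_atTop_atTop
  have h2 := h.bound (inv_pos.2 hC)
  filter_upwards [h2, log_large 0] with n hn h0
  simp only [Function.comp, id, Real.norm_eq_abs, abs_of_nonneg h0, Nat.abs_cast] at hn
  rw [inv_mul_eq_div, le_div_iff₀ hC] at hn
  linarith

lemma PR_basic : ∀ᶠ n : ℕ in atTop, ∀ p, PR n p → 0 ≤ p ∧ p ≤ 1 ∧ 0 < (n : ℝ) ∧ 0.9 * Real.log n ≤ p * n ∧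
    p * n ≤ 1.02 * Real.log n := by
  filter_upwards [log_large 1, log_le_n 2 (by norm_num), eventually_gt_atTop 0] with n h1 h2 h3 p hp
  have hn : (0 : ℝ) < n := by exact_mod_cast h3
  obtain ⟨ha, hb⟩ := hp
  rw [div_le_iff₀ hn] at ha
  rw [le_div_iff₀ hn] at hb
  refine ⟨by nlinarith, by nlinarith, hn, ha, hb⟩

lemma XX_card_le (n : ℕ) : ((XX n).card : ℝ) ≤ (n : ℝ) * n / 2 := by
  rw [XX_card, Nat.cast_choose_two]
  have : (0 : ℝ) ≤ n := Nat.cast_nonneg n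
  nlinarith

lemma ev5 : Unl (fun n G => 2 * n * Real.log n ≤ ((eF G).card : ℝ)) := by
  intro ε hε
  filter_upwards [PR_basic, log_large 1, exp_small 1 one_pos ε hε, eventually_ge_atTop 2] with n hb hL he h2 p hp
  obtain ⟨h0, h1, hn, ha, hb⟩ := hb p hp
  have := upper_tail h0 h1 2 (by norm_num) (XX n) subset_rfl (2 * n * Real.log n)
  have h3 : (fun G : SimpleGraph (Fin n) => 2 * n * Real.log n ≤ ((eF G).card : ℝ)) =
      (fun G => 2 * n * Real.log n ≤ ((eF G ∩ XX n).card : ℝ)) := by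
    ext G
    rw [Finset.inter_eq_left.2 (eF_sub G)]
  rw [h3]
  refine this.trans (le_trans ?_ he)
  apply Real.exp_le_exp.2
  have hl2 := Real.log_two_gt_d9
  have hX := XX_card_le n
  have h2' : (2 : ℝ) ≤ n := by exact_mod_cast h2
  have e1 : p * (2 - 1) * ((XX n).card : ℝ) ≤ 0.51 * Real.log n * n := by
    have : p * ((XX n).card : ℝ) ≤ p * (n * n / 2) := mul_le_mul_of_nonneg_left hX h0
    nlinarith
  have e2 : 0 ≤ n * Real.log n := by positivity
  nlinarith

lemma ev3 : Unl (fun n G => ∃ A B : Finset (Fin n), Disjoint A B ∧ 0.00000001 * (n : ℝ) ≤ A.card ∧ n ≤ 4 * B.card ∧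
    ((eB G A B).card : ℝ) ≤ 0.05 * Real.log n * A.card) := by
  intro ε hε
  filter_upwards [PR_basic, log_large 100000000000, exp_small 1 one_pos ε hε, log_le_n 1 one_pos] with n hb hL he h2 p hp
  obtain ⟨h0, h1, hn, ha, hb⟩ := hb p hp
  refine (prob_union h0 h1 ((Finset.univ : Finset (Finset (Fin n) × Finset (Fin n))).filter
    (fun q => Disjoint q.1 q.2 ∧ 0.00000001 * (n : ℝ) ≤ q.1.card ∧ n ≤ 4 * q.2.card)) _
    (fun q G => ((eB G q.1 q.2).card : ℝ) ≤ 0.05 * Real.log n * q.1.card) ?_).trans ?_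
  · rintro G ⟨A, B, h3, h4, h5, h6⟩
    exact ⟨(A, B), by simp only [Finset.mem_filter, Finset.mem_univ, true_and]; exact ⟨h3, h4, h5⟩, h6⟩
  have hterm : ∀ q ∈ ((Finset.univ : Finset (Finset (Fin n) × Finset (Fin n))).filter
    (fun q => Disjoint q.1 q.2 ∧ 0.00000001 * (n : ℝ) ≤ q.1.card ∧ n ≤ 4 * q.2.card)),
      gnpProb n p (fun G => ((eB G q.1 q.2).card : ℝ) ≤ 0.05 * Real.log n * q.1.card) ≤
        Real.exp (-(0.0000000007 * n * Real.log n)) := by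
    intro q hq
    simp only [Finset.mem_filter, Finset.mem_univ, true_and] at hq
    obtain ⟨h3, h4, h5⟩ := hq
    have := lower_tail h0 h1 (1/2) (by norm_num) (by norm_num) ∅ (bip q.1 q.2) (Finset.empty_subset _)
      (bip_sub h3) (Finset.disjoint_empty_left _) (0.05 * Real.log n * q.1.card)
    have h6 : (fun G : SimpleGraph (Fin n) => ((eB G q.1 q.2).card : ℝ) ≤ 0.05 * Real.log n * q.1.card) =
      (fun G => ∅ ⊆ eF G ∧ ((eF G ∩ bip q.1 q.2).card : ℝ) ≤ 0.05 * Real.log n * q.1.card) := by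
      ext G
      rw [eB_eq]
      simp
    rw [h6]
    refine this.trans ?_
    simp only [Finset.card_empty, pow_zero, one_mul]
    apply Real.exp_le_exp.2
    have hl2 := Real.log_two_lt_d9
    have h5' : (n : ℝ) ≤ 4 * q.2.card := by exact_mod_cast h5
    rw [bip_card h3]
    push_cast
    have hA : (0 : ℝ) ≤ q.1.card := Nat.cast_nonneg _
    rw [show (1 / (1 / 2) : ℝ) = 2 by norm_num]
    have e1 : p * (1 - 1 / 2) * ((q.1.card : ℝ) * q.2.card) ≥ 0.1125 * Real.log n * q.1.card := by
      have : p * q.2.card ≥ 0.225 * Real.log n := by nlinarith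
      nlinarith
    have hLA : 0 ≤ Real.log n * q.1.card := by positivity
    have e2 : 0.05 * Real.log n * q.1.card * Real.log 2 ≤ 0.035 * (Real.log n * q.1.card) := by
      nlinarith
    have e3 : Real.log n * q.1.card ≥ Real.log n * (0.00000001 * n) :=
      mul_le_mul_of_nonneg_left h4 (by linarith)
    nlinarith
  refine (Finset.sum_le_sum hterm).trans ?_
  rw [Finset.sum_const, nsmul_eq_mul]
  have hc : ((((Finset.univ : Finset (Finset (Fin n) × Finset (Fin n))).filter
    (fun q => Disjoint q.1 q.2 ∧ 0.00000001 * (n : ℝ) ≤ q.1.card ∧ n ≤ 4 * q.2.card)).card : ℕ) : ℝ) ≤ Real.exp (2 * n) := by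
    have : (((Finset.univ : Finset (Finset (Fin n) × Finset (Fin n))).filter
    (fun q => Disjoint q.1 q.2 ∧ 0.00000001 * (n : ℝ) ≤ q.1.card ∧ n ≤ 4 * q.2.card)).card : ℕ) ≤ 4 ^ n := by
      refine (Finset.card_le_univ _).trans ?_
      rw [Fintype.card_prod, Fintype.card_finset, Fintype.card_fin, ← mul_pow]
      norm_num
    have h4 : ((4 : ℝ) ^ n) ≤ Real.exp (2 * n) := by
      rw [mul_comm, Real.exp_nat_mul]
      apply pow_le_pow_left₀ (by norm_num)
      have := Real.exp_one_gt_d9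
      rw [show (2 : ℝ) = 1 + 1 by norm_num, Real.exp_add]
      nlinarith
    refine le_trans ?_ h4
    exact_mod_cast this
  refine (mul_le_mul_of_nonneg_right hc (Real.exp_pos _).le).trans (le_trans ?_ he)
  rw [← Real.exp_add]
  apply Real.exp_le_exp.2
  nlinarith

lemma ev4 : Unl (fun n G => ∃ Γ : SimpleGraph (Fin n), Γ ≤ G ∧ (ec Γ : ℝ) ≤ n * Real.log n / 5000 ∧
    n ^ 2 ≤ 32 * (BS Γ).card ∧
    (((BS Γ).filter (fun e => e ∈ G.edgeSet)).card : ℝ) ≤ n * Real.log n / 200) := by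
  intro ε hε
  filter_upwards [PR_basic, log_large 1, exp_small 0.001 (by norm_num) ε hε, eventually_ge_atTop 1] with n hb hL he h2 p hp
  obtain ⟨h0, h1, hn, ha, hb⟩ := hb p hp
  have hn1 : (1 : ℝ) ≤ n := by exact_mod_cast h2
  have hnL : 0 ≤ n * Real.log n := by positivity
  refine (prob_union h0 h1 ((XX n).powerset.filter (fun S : Finset (Sym2 (Fin n)) => (S.card : ℝ) ≤ n * Real.log n / 5000 ∧
      n ^ 2 ≤ 32 * (BS (fromEdgeSet (S : Set (Sym2 (Fin n))))).card)) _
    (fun (S : Finset (Sym2 (Fin n))) G => S ⊆ eF G ∧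
      ((eF G ∩ BS (fromEdgeSet (S : Set (Sym2 (Fin n))))).card : ℝ) ≤ n * Real.log n / 200) ?_).trans ?_
  · rintro G ⟨Γ, h3, h4, h5, h6⟩
    have hΓ : fromEdgeSet ((eF Γ : Finset (Sym2 (Fin n))) : Set (Sym2 (Fin n))) = Γ := by
      have : ((eF Γ : Finset (Sym2 (Fin n))) : Set (Sym2 (Fin n))) = Γ.edgeSet := by
        ext e; simp [mem_eF]
      rw [this, SimpleGraph.fromEdgeSet_edgeSet]
    refine ⟨eF Γ, ?_, ?_, ?_⟩
    · rw [Finset.mem_filter, hΓ, Finset.mem_powerset, ← eF_card, ← ec_eq]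
      exact ⟨eF_sub Γ, h4, h5⟩
    · intro e he
      rw [mem_eF] at he ⊢
      exact SimpleGraph.edgeSet_mono h3 he
    · rw [hΓ]
      have : eF G ∩ BS Γ = (BS Γ).filter (fun e => e ∈ G.edgeSet) := by
        ext e
        simp [mem_eF, and_comm]
      rw [this]; exact h6
  have hterm : ∀ S ∈ ((XX n).powerset.filter (fun S : Finset (Sym2 (Fin n)) => (S.card : ℝ) ≤ n * Real.log n / 5000 ∧
      n ^ 2 ≤ 32 * (BS (fromEdgeSet (S : Set (Sym2 (Fin n))))).card)),
      gnpProb n p (fun G => S ⊆ eF G ∧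
      ((eF G ∩ BS (fromEdgeSet (S : Set (Sym2 (Fin n))))).card : ℝ) ≤ n * Real.log n / 200) ≤
        Real.exp (-(0.009 * (n * Real.log n))) * (p * (1 / 1000)) ^ S.card := by
    intro S hS
    rw [Finset.mem_filter, Finset.mem_powerset] at hS
    obtain ⟨h3, h4, h5⟩ := hS
    have hl := lower_tail h0 h1 (1/2) (by norm_num) (by norm_num) S (BS (fromEdgeSet (S : Set (Sym2 (Fin n))))) h3
      (by
        intro e he
        simp only [BS, Finset.mem_filter] at he
        obtain ⟨-, -, l, a, b, -, -, -, hab, rfl⟩ := he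
        rw [mem_XX, Sym2.mk_isDiag_iff]; exact hab)
      (by
        rw [Finset.disjoint_left]
        intro e he1 he2
        simp only [BS, Finset.mem_filter] at he2
        apply he2.2.1
        rw [SimpleGraph.edgeSet_fromEdgeSet]
        exact ⟨by exact_mod_cast he1, by simpa using mem_XX.1 (h3 he1)⟩) (n * Real.log n / 200)
    refine hl.trans ?_
    have e0 : p ^ S.card = Real.exp (S.card * Real.log 1000) * (p * (1 / 1000)) ^ S.card := by
      rw [Real.exp_nat_mul, Real.exp_log (by norm_num), ← mul_pow]
      congr 1; ring
    rw [e0, mul_right_comm, ← Real.exp_add]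
    apply mul_le_mul_of_nonneg_right _ (by positivity)
    apply Real.exp_le_exp.2
    have hl2 := Real.log_two_lt_d9
    have hl1000 : Real.log 1000 ≤ 7 := by
      have : Real.log 1000 ≤ Real.log (2 ^ 10) := Real.log_le_log (by norm_num) (by norm_num)
      rw [Real.log_pow] at this
      push_cast at this
      linarith
    have h5' : (n : ℝ) ^ 2 ≤ 32 * (BS (fromEdgeSet (S : Set (Sym2 (Fin n))))).card := by exact_mod_cast h5
    rw [show (1 / (1 / 2) : ℝ) = 2 by norm_num]
    have e1 : p * (n : ℝ) ^ 2 ≤ p * (32 * (BS (fromEdgeSet (S : Set (Sym2 (Fin n))))).card) :=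
      mul_le_mul_of_nonneg_left h5' h0
    have e2 : p * (n : ℝ) ^ 2 ≥ 0.9 * (n * Real.log n) := by nlinarith
    have e3 : (S.card : ℝ) * Real.log 1000 ≤ (n * Real.log n / 5000) * 7 := by
      have : (0 : ℝ) ≤ S.card := Nat.cast_nonneg _
      have := Real.log_nonneg (show (1 : ℝ) ≤ 1000 by norm_num)
      apply mul_le_mul h4 hl1000 this (by positivity)
    nlinarith
  refine (Finset.sum_le_sum hterm).trans ?_
  rw [← Finset.mul_sum]
  have hs : ∑ S ∈ ((XX n).powerset.filter (fun S : Finset (Sym2 (Fin n)) => (S.card : ℝ) ≤ n * Real.log n / 5000 ∧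
      n ^ 2 ≤ 32 * (BS (fromEdgeSet (S : Set (Sym2 (Fin n))))).card)), (p * (1 / 1000)) ^ S.card ≤
      Real.exp (0.001 * (n * Real.log n)) := by
    refine (Finset.sum_le_sum_of_subset_of_nonneg (Finset.filter_subset _ _) (fun _ _ _ => by positivity)).trans ?_
    have := Finset.prod_add (fun _ => p * (1 / 1000)) (fun _ => (1 : ℝ)) (XX n)
    simp only [Finset.prod_const, one_pow, mul_one] at this
    rw [← this]
    have e1 : p * (1 / 1000) + 1 ≤ Real.exp (p * (1 / 1000)) := Real.add_one_le_exp _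
    refine (pow_le_pow_left₀ (by positivity) e1 _).trans ?_
    rw [← Real.exp_nat_mul]
    apply Real.exp_le_exp.2
    have hX := XX_card_le n
    have : p * ((XX n).card : ℝ) ≤ p * (n * n / 2) := mul_le_mul_of_nonneg_left hX h0
    nlinarith
  refine (mul_le_mul_of_nonneg_left hs (Real.exp_pos _).le).trans (le_trans ?_ he)
  rw [← Real.exp_add]
  apply Real.exp_le_exp.2
  nlinarith

end Events
end HC

namespace HC

set_option linter.unusedSectionVars false

section Events

/-- potential edges inside `T` -/
noncomputable def prs {n : ℕ} (T : Finset (Fin n)) : Finset (Sym2 (Fin n)) :=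
  (XX n).filter (fun e => ∀ v ∈ e, v ∈ T)

lemma prs_card {n : ℕ} (T : Finset (Fin n)) : (prs T).card ≤ T.card * T.card := by
  have h : prs T ⊆ (T ×ˢ T).image (fun q => s(q.1, q.2)) := by
    intro e he
    rw [prs, Finset.mem_filter] at he
    induction e with
    | _ a b =>
      rw [Finset.mem_image]
      exact ⟨(a, b), Finset.mem_product.2 ⟨he.2 a (by simp), he.2 b (by simp)⟩, rfl⟩
  refine (Finset.card_le_card h).trans (Finset.card_image_le.trans ?_)
  rw [Finset.card_product]

lemma eI_eq {n : ℕ} (G : SimpleGraph (Fin n)) (T : Finset (Fin n)) : eI G T = eF G ∩ prs T := by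
  ext e
  simp only [eI, prs, Finset.mem_filter, Finset.mem_inter, Finset.mem_univ, true_and, mem_eF]
  constructor
  · rintro ⟨h1, h2⟩; exact ⟨h1, eF_sub G (mem_eF.2 h1), h2⟩
  · rintro ⟨h1, h2, h3⟩; exact ⟨h1, h3⟩

lemma choose_exp (n t : ℕ) (ht : 1 ≤ t) (hn : 1 ≤ n) :
    (n.choose t : ℝ) ≤ Real.exp (t * (1 + Real.log (n / t))) := by
  have h1 : (n.choose t : ℝ) ≤ (n : ℝ) ^ t / t.factorial := Nat.choose_le_pow_div t n
  have h2 := Real.pow_div_factorial_le_exp (t : ℝ) (Nat.cast_nonneg _) t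
  have ht' : (0 : ℝ) < t := by exact_mod_cast ht
  have hn' : (0 : ℝ) < n := by exact_mod_cast hn
  rw [mul_add, Real.exp_add, mul_one, Real.exp_nat_mul (Real.log _) t, Real.exp_log (by positivity)]
  calc (n.choose t : ℝ) ≤ (n : ℝ) ^ t / t.factorial := h1
    _ = ((t : ℝ) ^ t / t.factorial) * (n / t : ℝ) ^ t := by
        rw [div_pow]
        field_simp
    _ ≤ _ := mul_le_mul_of_nonneg_right h2 (by positivity)

lemma log_50 : (3 : ℝ) ≤ Real.log 50 := by
  rw [Real.le_log_iff_exp_le (by norm_num)]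
  have := Real.exp_one_lt_d9
  rw [show (3 : ℝ) = (3 : ℕ) * 1 by norm_num, Real.exp_nat_mul]
  have h2 : Real.exp 1 ^ 3 ≤ 2.7182818286 ^ 3 := pow_le_pow_left₀ (Real.exp_pos _).le this.le 3
  refine h2.trans (by norm_num)

lemma log_2e5 : Real.log 200000 ≤ 13 := by
  have : Real.log 200000 ≤ Real.log (2 ^ 18) := Real.log_le_log (by norm_num) (by norm_num)
  rw [Real.log_pow] at this
  have := Real.log_two_lt_d9
  push_cast at *
  linarith

lemma ev2 : Unl (fun n G => ∃ T : Finset (Fin n), (T.card : ℝ) ≤ 0.0000001 * n ∧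
    ⌊Real.log n / 10 ^ 4⌋₊ * T.card < 10 * (eI G T).card) := by
  intro ε hε
  filter_upwards [PR_basic, log_large 100000000, exp_small (1/200000) (by norm_num) (ε / 2) (by positivity),
    exp_small (1/200000) (by norm_num) (1 / 2) (by norm_num), eventually_ge_atTop 1] with n hb hL he he2 h2 p hp
  obtain ⟨h0, h1, hn, ha, hb⟩ := hb p hp
  set L := Real.log n with hLdef
  set x := Real.exp (-(1 / 200000 * L)) with hx
  set f : ℕ → ℝ := fun t => if 1 ≤ t ∧ (t : ℝ) ≤ 0.0000001 * n then
    Real.exp (1.02 * (1 / 200000) * L * t - (1 / 200000) * t * L * Real.log ((1 / 200000) * n / t)) else 0 with hf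
  refine (prob_union h0 h1 (Finset.univ : Finset (Fin n)).powerset _
    (fun T G => (1 ≤ T.card ∧ (T.card : ℝ) ≤ 0.0000001 * n) ∧ (1 / 200000) * T.card * L ≤ ((eF G ∩ prs T).card : ℝ)) ?_).trans ?_
  · rintro G ⟨T, h3, h4⟩
    refine ⟨T, by simp, ⟨?_, h3⟩, ?_⟩
    · by_contra hc
      have h5 : T.card = 0 := by omega
      have h6 := prs_card T
      have h7 : (eI G T).card ≤ (prs T).card := by
        rw [eI_eq]; exact Finset.card_le_card Finset.inter_subset_right
      rw [h5] at h6
      omega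
    · rw [← eI_eq]
      have h5 : ((⌊L / 10 ^ 4⌋₊ * T.card : ℕ) : ℝ) ≤ ((10 * (eI G T).card : ℕ) : ℝ) := by exact_mod_cast h4.le
      push_cast at h5
      have h6 := Nat.lt_floor_add_one (L / 10 ^ 4)
      have h7 : (0 : ℝ) ≤ T.card := Nat.cast_nonneg _
      have h8 : L / 20000 ≤ (⌊L / 10 ^ 4⌋₊ : ℝ) := by linarith
      nlinarith
  have hterm : ∀ T ∈ (Finset.univ : Finset (Fin n)).powerset,
      gnpProb n p (fun G => (1 ≤ T.card ∧ (T.card : ℝ) ≤ 0.0000001 * n) ∧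
        (1 / 200000) * T.card * L ≤ ((eF G ∩ prs T).card : ℝ)) ≤ f T.card := by
    intro T _
    rw [hf]
    dsimp only
    split_ifs with hT
    · have ht : (0 : ℝ) < T.card := by exact_mod_cast hT.1
      have hy : 50 ≤ (1 / 200000) * (n : ℝ) / T.card := by
        rw [le_div_iff₀ ht]
        linarith [hT.2]
      refine (prob_mono h0 h1 (fun G h => h.2)).trans ((upper_tail h0 h1 ((1 / 200000) * n / T.card) (by linarith) (prs T)
        (Finset.filter_subset _ _) _).trans ?_)
      apply Real.exp_le_exp.2
      apply sub_le_sub_right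
      have hc : ((prs T).card : ℝ) ≤ T.card * T.card := by exact_mod_cast prs_card T
      calc p * ((1 / 200000) * n / T.card - 1) * (prs T).card
          ≤ p * ((1 / 200000) * n / T.card) * (T.card * T.card) := by
            apply mul_le_mul _ hc (Nat.cast_nonneg _) (by positivity)
            apply mul_le_mul_of_nonneg_left (by linarith) h0
        _ = (p * n) * ((1 / 200000) * T.card) := by field_simp
        _ ≤ (1.02 * L) * ((1 / 200000) * T.card) := mul_le_mul_of_nonneg_right hb (by positivity)
        _ = _ := by ring
    · refine (prob_le (f := fun _ => 0) h0 h1 (fun _ => le_rfl) (fun G h => absurd h.1 hT)).trans ?_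
      simp [EX]
  refine (Finset.sum_le_sum hterm).trans ?_
  rw [Finset.sum_powerset_apply_card, Finset.card_univ, Fintype.card_fin]
  have hx0 : 0 < x := Real.exp_pos _
  have hb2 : ∀ t ∈ Finset.range (n + 1), n.choose t • f t ≤ if t = 0 then 0 else x ^ t := by
    intro t _
    rw [nsmul_eq_mul]
    by_cases ht0 : t = 0
    · simp [ht0, hf]
    rw [if_neg ht0, hf]
    dsimp only
    split_ifs with ht
    · have ht' : (0 : ℝ) < t := by exact_mod_cast ht.1
      have hy : 50 ≤ (1 / 200000) * (n : ℝ) / t := by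
        rw [le_div_iff₀ ht']
        linarith [ht.2]
      have hly : 3 ≤ Real.log ((1 / 200000) * n / t) :=
        log_50.trans (Real.log_le_log (by norm_num) hy)
      have hnt : Real.log (n / t) = Real.log ((1 / 200000) * n / t) + Real.log 200000 := by
        rw [← Real.log_mul (by linarith) (by norm_num)]
        congr 1
        field_simp
      refine (mul_le_mul_of_nonneg_right (choose_exp n t ht.1 h2) (Real.exp_pos _).le).trans ?_
      rw [← Real.exp_add, hx, ← Real.exp_nat_mul]
      apply Real.exp_le_exp.2
      rw [hnt]
      have := log_2e5
      set Y := Real.log ((1 / 200000) * n / t)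
      have e1 : (1 / 200000 * L - 1) * 3 ≤ (1 / 200000 * L - 1) * Y :=
        mul_le_mul_of_nonneg_left hly (by linarith)
      have e2 : 1 + (Y + Real.log 200000) + 1.02 * (1 / 200000) * L - (1 / 200000) * L * Y ≤ -(1 / 200000 * L) := by
        nlinarith
      have := mul_le_mul_of_nonneg_left e2 ht'.le
      nlinarith
    · rw [mul_zero]; positivity
  refine (Finset.sum_le_sum hb2).trans ?_
  have hs : ∀ N : ℕ, (∑ t ∈ Finset.range (N + 1), if t = 0 then 0 else x ^ t) ≤ 2 * x - 2 * x ^ (N + 1) := by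
    intro N
    induction N with
    | zero => simp
    | succ N ih =>
      rw [Finset.sum_range_succ, if_neg (by omega)]
      have : x ^ (N + 1 + 1) = x * x ^ (N + 1) := by ring
      have h3 : 0 < x ^ (N + 1) := by positivity
      nlinarith
  refine (hs n).trans ?_
  have : 0 < x ^ (n + 1) := by positivity
  linarith

/-- small degree vertices -/
noncomputable def SmS (n : ℕ) (G : SimpleGraph (Fin n)) : Finset (Fin n) :=
  Finset.univ.filter (fun v => ((nb G v).card : ℝ) < Real.log n / 50)

lemma inter_bip_card {n : ℕ} (G : SimpleGraph (Fin n)) (Q B : Finset (Fin n)) (K : ℝ)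
    (h : ∀ v ∈ Q, ((nb G v).card : ℝ) ≤ K) : ((eF G ∩ bip Q B).card : ℝ) ≤ Q.card * K := by
  have h1 : eF G ∩ bip Q B ⊆ Q.biUnion (fun v => (nb G v).image (fun w => s(v, w))) := by
    intro e he
    rw [Finset.mem_inter, mem_eF, mem_bip] at he
    obtain ⟨h1, a, ha, b, hb, rfl⟩ := he
    rw [Finset.mem_biUnion]
    exact ⟨a, ha, Finset.mem_image.2 ⟨b, mem_nb.2 h1, rfl⟩⟩
  have h2 : (eF G ∩ bip Q B).card ≤ ∑ v ∈ Q, (nb G v).card :=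
    (Finset.card_le_card h1).trans (Finset.card_biUnion_le.trans
      (Finset.sum_le_sum fun v _ => Finset.card_image_le))
  calc ((eF G ∩ bip Q B).card : ℝ) ≤ ((∑ v ∈ Q, (nb G v).card : ℕ) : ℝ) := by exact_mod_cast h2
    _ = ∑ v ∈ Q, ((nb G v).card : ℝ) := by push_cast; rfl
    _ ≤ ∑ v ∈ Q, K := Finset.sum_le_sum h
    _ = _ := by rw [Finset.sum_const, nsmul_eq_mul]

lemma ev1 : Unl (fun n G => ¬ SmallOK G (SmS n G)) := by
  intro ε hε
  have hlim : ∀ᶠ n : ℕ in atTop, 6 * 2 ^ 5 * 2 ^ 25 * (2 * Real.log n) ^ 6 * Real.exp (-(0.3 * Real.log n)) ≤ ε := by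
    have h1 : Tendsto (fun x : ℝ => x ^ 6 * Real.exp (-x)) atTop (nhds 0) :=
      Real.tendsto_pow_mul_exp_neg_atTop_nhds_zero 6
    have h2 : Tendsto (fun n : ℕ => 0.3 * Real.log n) atTop atTop :=
      (Real.tendsto_log_atTop.comp tendsto_natCast_atTop_atTop).const_mul_atTop (by norm_num)
    have h3 := ((h1.comp h2).const_mul (6 * 2 ^ 5 * 2 ^ 25 * (2 / 0.3) ^ 6 : ℝ))
    rw [mul_zero] at h3
    filter_upwards [h3.eventually_le_const hε] with n hn
    refine le_trans (le_of_eq ?_) hn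
    simp only [Function.comp]
    ring
  filter_upwards [PR_basic, log_large 1, hlim, eventually_ge_atTop 1000] with n hb hL hlim h2 p hp
  obtain ⟨h0, h1, hn, ha, hb⟩ := hb p hp
  set L := Real.log n with hLdef
  have h2' : (1000 : ℝ) ≤ n := by exact_mod_cast h2
  have hnexp : (n : ℝ) = Real.exp L := (Real.exp_log hn).symm
  set g : ℝ := (2 * L) ^ 6 * Real.exp (-(0.3 * L)) with hg
  have hg0 : 0 ≤ g := by positivity
  refine (prob_union h0 h1 (Finset.range 6) _ (fun t G => ∃ T ∈ Finset.powersetCard t (Finset.univ : Finset (Fin n)),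
      ∃ Q ∈ T.powerset, ∃ F ∈ (prs T).powerset, (Q.card ≤ 2 ∧ T.card + 1 ≤ F.card + Q.card) ∧
        F ⊆ eF G ∧ ((eF G ∩ bip Q (Finset.univ \ T)).card : ℝ) ≤ Q.card * (L / 50)) ?_).trans ?_
  · intro G hG
    unfold SmallOK at hG
    push Not at hG
    obtain ⟨T, Q, F, hT, hQ, hQT, hQS, hF, hlt⟩ := hG
    rw [eI_eq] at hF
    refine ⟨T.card, by rw [Finset.mem_range]; omega, T, by simp [Finset.mem_powersetCard], Q, by simpa using hQT, F,
      Finset.mem_powerset.2 (hF.trans Finset.inter_subset_right), ⟨hQ, by omega⟩, hF.trans Finset.inter_subset_left, ?_⟩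
    apply inter_bip_card
    intro v hv
    have := hQS hv
    simp only [SmS, Finset.mem_filter] at this
    exact this.2.le
  have hterm : ∀ t ∈ Finset.range 6, ∀ T ∈ Finset.powersetCard t (Finset.univ : Finset (Fin n)),
      ∀ Q ∈ T.powerset, ∀ F ∈ (prs T).powerset,
      gnpProb n p (fun G => (Q.card ≤ 2 ∧ T.card + 1 ≤ F.card + Q.card) ∧
        F ⊆ eF G ∧ ((eF G ∩ bip Q (Finset.univ \ T)).card : ℝ) ≤ Q.card * (L / 50)) ≤ g * Real.exp (-(t * L)) := by
    intro t ht T hT Q hQ F hF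
    rw [Finset.mem_powersetCard] at hT
    rw [Finset.mem_range] at ht
    rw [Finset.mem_powerset] at hQ hF
    by_cases hc : Q.card ≤ 2 ∧ T.card + 1 ≤ F.card + Q.card
    swap
    · refine (prob_le (f := fun _ => 0) h0 h1 (fun _ => le_rfl) (fun G h => absurd h.1 hc)).trans ?_
      simp only [EX, mul_zero, Finset.sum_const_zero]
      positivity
    obtain ⟨hq2, hfq⟩ := hc
    have hdis : Disjoint Q (Finset.univ \ T) := by
      rw [Finset.disjoint_left]
      intro a ha hb
      exact (Finset.mem_sdiff.1 hb).2 (hQ ha)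
    refine (prob_mono h0 h1 (fun G h => h.2)).trans ((lower_tail h0 h1 (1/8) (by norm_num) (by norm_num) F
      (bip Q (Finset.univ \ T)) (hF.trans (Finset.filter_subset _ _)) (bip_sub hdis) (by
        rw [Finset.disjoint_left]
        intro e he1 he2
        obtain ⟨a, ha, b, hb, rfl⟩ := mem_bip.1 he2
        have := (Finset.mem_filter.1 (hF he1)).2 b (by simp)
        exact (Finset.mem_sdiff.1 hb).2 this) _).trans ?_)
    rw [bip_card hdis]
    have hcT : ((Finset.univ \ T).card : ℝ) = n - t := by
      have := Finset.card_sdiff_add_card_eq_card (Finset.subset_univ T)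
      rw [Finset.card_univ, Fintype.card_fin, hT.2] at this
      rw [eq_sub_iff_add_eq]
      exact_mod_cast this
    push_cast
    rw [hcT, show (1 / (1 / 8) : ℝ) = 2 ^ 3 by norm_num, Real.log_pow]
    have hl2 := Real.log_two_lt_d9
    have ht5 : (t : ℝ) ≤ 5 := by exact_mod_cast (by omega : t ≤ 5)
    set q : ℝ := (Q.card : ℝ) with hq
    have hq0 : 0 ≤ q := Nat.cast_nonneg _
    have hq2' : q ≤ 2 := by rw [hq]; norm_num; exact hq2
    have e1 : p * (n - t) ≥ 0.89 * L := by
      have : p * t ≤ 0.01 * L := by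
        have h5 : p * 1000 ≤ p * n := mul_le_mul_of_nonneg_left h2' h0
        have h6 : p * t ≤ p * 5 := mul_le_mul_of_nonneg_left ht5 h0
        linarith
      linarith
    have e2 : q * (L / 50) * ((3 : ℕ) * Real.log 2) - p * (1 - 1 / 8) * (q * (n - t)) ≤ -(0.7 * q * L) := by
      have hqL : 0 ≤ q * L := mul_nonneg hq0 (by linarith)
      have a1 : q * (L / 50) * ((3 : ℕ) * Real.log 2) ≤ 0.05 * (q * L) := by
        push_cast
        nlinarith
      have a2 : q * (p * (n - t)) ≥ q * (0.89 * L) := mul_le_mul_of_nonneg_left e1 hq0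
      nlinarith
    have hql : Q.card ≤ T.card := Finset.card_le_card hQ
    have e3 : p ^ F.card ≤ p ^ (t + 1 - Q.card) := pow_le_pow_of_le_one h0 h1 (by omega)
    have e4 : p ≤ (2 * L) * Real.exp (-L) := by
      rw [Real.exp_neg, ← hnexp, ← div_eq_mul_inv, le_div_iff₀ hn]
      linarith
    have e5 : p ^ (t + 1 - Q.card) ≤ (2 * L) ^ 6 * Real.exp (-((t + 1 - q) * L)) := by
      refine (pow_le_pow_left₀ h0 e4 _).trans ?_
      rw [mul_pow, ← Real.exp_nat_mul, Nat.cast_sub (by omega)]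
      apply mul_le_mul
      · apply pow_le_pow_right₀ (by linarith) (by omega)
      · apply le_of_eq; congr 1; push_cast; ring
      · positivity
      · positivity
    refine (mul_le_mul (e3.trans e5) (Real.exp_le_exp.2 e2) (Real.exp_pos _).le (by positivity)).trans ?_
    rw [hg, mul_assoc, mul_assoc ((2 * L) ^ 6), ← Real.exp_add]
    apply mul_le_mul_of_nonneg_left _ (by positivity)
    rw [← Real.exp_add]
    apply Real.exp_le_exp.2
    nlinarith
  have hper : ∀ t ∈ Finset.range 6, gnpProb n p (fun G => ∃ T ∈ Finset.powersetCard t (Finset.univ : Finset (Fin n)),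
      ∃ Q ∈ T.powerset, ∃ F ∈ (prs T).powerset, (Q.card ≤ 2 ∧ T.card + 1 ≤ F.card + Q.card) ∧
        F ⊆ eF G ∧ ((eF G ∩ bip Q (Finset.univ \ T)).card : ℝ) ≤ Q.card * (L / 50)) ≤ 2 ^ 5 * 2 ^ 25 * g := by
    intro t ht
    have ht' := Finset.mem_range.1 ht
    have s1 : ∀ T ∈ Finset.powersetCard t (Finset.univ : Finset (Fin n)), gnpProb n p (fun G =>
      ∃ Q ∈ T.powerset, ∃ F ∈ (prs T).powerset, (Q.card ≤ 2 ∧ T.card + 1 ≤ F.card + Q.card) ∧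
        F ⊆ eF G ∧ ((eF G ∩ bip Q (Finset.univ \ T)).card : ℝ) ≤ Q.card * (L / 50)) ≤
          2 ^ 5 * 2 ^ 25 * (g * Real.exp (-(t * L))) := by
      intro T hT
      have hTc := (Finset.mem_powersetCard.1 hT).2
      have hpos : 0 ≤ g * Real.exp (-(t * L)) := by positivity
      have s2 : ∀ Q ∈ T.powerset, gnpProb n p (fun G =>
        ∃ F ∈ (prs T).powerset, (Q.card ≤ 2 ∧ T.card + 1 ≤ F.card + Q.card) ∧
          F ⊆ eF G ∧ ((eF G ∩ bip Q (Finset.univ \ T)).card : ℝ) ≤ Q.card * (L / 50)) ≤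
            2 ^ 25 * (g * Real.exp (-(t * L))) := by
        intro Q hQ
        refine (prob_union h0 h1 (prs T).powerset _ _ (fun G h => h)).trans
          ((Finset.sum_le_sum (hterm t ht T hT Q hQ)).trans ?_)
        rw [Finset.sum_const, nsmul_eq_mul, Finset.card_powerset]
        apply mul_le_mul_of_nonneg_right _ hpos
        push_cast
        apply pow_le_pow_right₀ (by norm_num)
        have := prs_card T
        have : T.card * T.card ≤ 5 * 5 := Nat.mul_le_mul (by omega) (by omega)
        omega
      refine (prob_union h0 h1 T.powerset _ _ (fun G h => h)).trans ((Finset.sum_le_sum s2).trans ?_)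
      rw [Finset.sum_const, nsmul_eq_mul, Finset.card_powerset, mul_assoc (2 ^ 5 : ℝ)]
      apply mul_le_mul_of_nonneg_right _ (by positivity)
      push_cast
      apply pow_le_pow_right₀ (by norm_num) (by omega)
    refine (prob_union h0 h1 _ _ _ (fun G h => h)).trans ((Finset.sum_le_sum s1).trans ?_)
    rw [Finset.sum_const, nsmul_eq_mul, Finset.card_powersetCard, Finset.card_univ, Fintype.card_fin]
    have hch : (n.choose t : ℝ) ≤ Real.exp (t * L) := by
      rw [Real.exp_nat_mul, ← hnexp]
      exact_mod_cast Nat.choose_le_pow n t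
    have : (n.choose t : ℝ) * Real.exp (-(t * L)) ≤ 1 := by
      rw [Real.exp_neg, ← div_eq_mul_inv, div_le_one (Real.exp_pos _)]
      exact hch
    calc _ = (2 ^ 5 * 2 ^ 25 * g) * ((n.choose t : ℝ) * Real.exp (-(t * L))) := by ring
      _ ≤ (2 ^ 5 * 2 ^ 25 * g) * 1 := mul_le_mul_of_nonneg_left this (by positivity)
      _ = _ := mul_one _
  refine (Finset.sum_le_sum hper).trans (le_trans (le_of_eq ?_) hlim)
  rw [Finset.sum_const, nsmul_eq_mul, hg]
  simp only [Finset.card_range]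
  ring

end Events
end HC

namespace HC

set_option linter.unusedSectionVars false

section Second

/-- binomial lower tail -/
noncomputable def bc (p : ℝ) (m d : ℕ) : ℝ :=
  ∑ j ∈ Finset.range (m + 1), m.choose j • (if j ≤ d then p ^ j * (1 - p) ^ (m - j) else 0)

lemma bc_nonneg {p : ℝ} (h0 : 0 ≤ p) (h1 : p ≤ 1) (m d : ℕ) : 0 ≤ bc p m d := by
  apply Finset.sum_nonneg
  intro j _
  have : 0 ≤ 1 - p := by linarith
  rw [nsmul_eq_mul]
  split_ifs <;> positivity

lemma bc_zero (p : ℝ) (d : ℕ) : bc p 0 d = 1 := by simp [bc]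

lemma bc_succ {p : ℝ} (h0 : 0 ≤ p) (h1 : p ≤ 1) (m d : ℕ) : (1 - p) * bc p m d ≤ bc p (m + 1) d := by
  have hq : 0 ≤ 1 - p := by linarith
  unfold bc
  rw [Finset.mul_sum, Finset.sum_range_succ _ (m + 1)]
  refine le_trans ?_ (le_add_of_nonneg_right ?_)
  · apply Finset.sum_le_sum
    intro j hj
    rw [Finset.mem_range] at hj
    simp only [nsmul_eq_mul]
    split_ifs with h
    · have e1 : m + 1 - j = (m - j) + 1 := by omega
      rw [e1, pow_succ]
      have e2 : (m.choose j : ℝ) ≤ ((m + 1).choose j : ℝ) := by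
        exact_mod_cast Nat.choose_le_choose j (by omega)
      have e3 : 0 ≤ p ^ j * ((1 - p) ^ (m - j) * (1 - p)) := by positivity
      have := mul_le_mul_of_nonneg_right e2 e3
      linarith
    · simp
  · rw [nsmul_eq_mul]
    split_ifs <;> positivity

lemma bc_ge {p : ℝ} (h0 : 0 ≤ p) (h1 : p ≤ 1) (m d : ℕ) (hd : d ≤ m) :
    (m.choose d : ℝ) * (p ^ d * (1 - p) ^ (m - d)) ≤ bc p m d := by
  have hq : 0 ≤ 1 - p := by linarith
  unfold bc
  have := Finset.single_le_sum (s := Finset.range (m + 1))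
    (f := fun j => m.choose j • (if j ≤ d then p ^ j * (1 - p) ^ (m - j) else 0)) (fun j _ => by
      rw [nsmul_eq_mul]
      split_ifs <;> positivity) (Finset.mem_range.2 (by omega : d < m + 1))
  refine le_trans ?_ this
  simp

lemma bc_sum (p : ℝ) {n : ℕ} (Y : Finset (Sym2 (Fin n))) (d : ℕ) :
    ∑ F ∈ Y.powerset, (if F.card ≤ d then p ^ F.card * (1 - p) ^ (Y.card - F.card) else 0) = bc p Y.card d :=
  Finset.sum_powerset_apply_card (fun j => if j ≤ d then p ^ j * (1 - p) ^ (Y.card - j) else 0)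

lemma atom (n : ℕ) (p : ℝ) (Y Z F F' : Finset (Sym2 (Fin n))) (hY : Y ⊆ XX n) (hZ : Z ⊆ XX n)
    (hd : Disjoint Y Z) (hF : F ⊆ Y) (hF' : F' ⊆ Z) :
    EX n p (fun G => if eF G ∩ Y = F ∧ eF G ∩ Z = F' then 1 else 0) =
      (p ^ F.card * (1 - p) ^ (Y.card - F.card)) * (p ^ F'.card * (1 - p) ^ (Z.card - F'.card)) := by
  have hdYZ := Finset.disjoint_left.1 hd
  have hm := moment n p 0 (F ∪ F') ((Y \ F) ∪ (Z \ F'))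
    (Finset.union_subset (hF.trans hY) (hF'.trans hZ))
    (Finset.union_subset (Finset.sdiff_subset.trans hY) (Finset.sdiff_subset.trans hZ)) (by
      rw [Finset.disjoint_left]
      intro e h1 h2
      rw [Finset.mem_union, Finset.mem_sdiff, Finset.mem_sdiff] at h2
      rcases Finset.mem_union.1 h1 with h1 | h1
      · rcases h2 with h2 | h2
        · exact h2.2 h1
        · exact hdYZ (hF h1) h2.1
      · rcases h2 with h2 | h2
        · exact hdYZ h2.1 (hF' h1)
        · exact h2.2 h1)
  rw [Finset.card_union_of_disjoint (Finset.disjoint_of_subset_left hF (Finset.disjoint_of_subset_right hF' hd)),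
    Finset.card_union_of_disjoint (Finset.disjoint_of_subset_left Finset.sdiff_subset
      (Finset.disjoint_of_subset_right Finset.sdiff_subset hd)),
    Finset.card_sdiff_of_subset hF, Finset.card_sdiff_of_subset hF', mul_zero, add_zero] at hm
  rw [pow_add, pow_add] at hm
  rw [mul_mul_mul_comm, ← hm]
  congr 1
  ext G
  by_cases h : eF G ∩ Y = F ∧ eF G ∩ Z = F'
  · rw [if_pos h, if_pos]
    · have : eF G ∩ ((Y \ F) ∪ (Z \ F')) = ∅ := by
        ext e
        simp only [← h.1, ← h.2, Finset.mem_inter, Finset.mem_union, Finset.mem_sdiff, Finset.notMem_empty]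
        tauto
      rw [this]; simp
    · rw [← h.1, ← h.2]
      exact Finset.union_subset Finset.inter_subset_left Finset.inter_subset_left
  · rw [if_neg h]
    split_ifs with h2
    · rw [zero_pow]
      intro h3
      rw [Finset.card_eq_zero] at h3
      apply h
      have h4 : ∀ e, e ∈ eF G → e ∉ ((Y \ F) ∪ (Z \ F')) := by
        intro e he he2
        have : e ∈ eF G ∩ ((Y \ F) ∪ (Z \ F')) := Finset.mem_inter.2 ⟨he, he2⟩
        rw [h3] at this
        simp at this
      simp only [Finset.mem_union, Finset.mem_sdiff] at h4
      constructor
      · ext e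
        rw [Finset.mem_inter]
        constructor
        · rintro ⟨a, b⟩
          have := h4 e a
          tauto
        · intro he
          exact ⟨h2 (Finset.mem_union_left _ he), hF he⟩
      · ext e
        rw [Finset.mem_inter]
        constructor
        · rintro ⟨a, b⟩
          have := h4 e a
          tauto
        · intro he
          exact ⟨h2 (Finset.mem_union_right _ he), hF' he⟩
    · rfl

lemma indep2 (n : ℕ) (p : ℝ) (Y Z : Finset (Sym2 (Fin n))) (hY : Y ⊆ XX n) (hZ : Z ⊆ XX n)
    (hd : Disjoint Y Z) (d : ℕ) :
    gnpProb n p (fun G => (eF G ∩ Y).card ≤ d ∧ (eF G ∩ Z).card ≤ d) = bc p Y.card d * bc p Z.card d := by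
  rw [prob_eq, ← bc_sum, ← bc_sum, Finset.sum_mul_sum]
  have h1 : ∀ F ∈ Y.powerset, ∀ F' ∈ Z.powerset,
      (if F.card ≤ d then p ^ F.card * (1 - p) ^ (Y.card - F.card) else 0) *
      (if F'.card ≤ d then p ^ F'.card * (1 - p) ^ (Z.card - F'.card) else 0) =
      EX n p (fun G => if F.card ≤ d ∧ F'.card ≤ d then
        (if eF G ∩ Y = F ∧ eF G ∩ Z = F' then 1 else 0) else 0) := by
    intro F hF F' hF'
    rw [Finset.mem_powerset] at hF hF'
    by_cases h : F.card ≤ d ∧ F'.card ≤ d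
    · simp only [if_pos h]
      rw [atom n p Y Z F F' hY hZ hd hF hF', if_pos h.1, if_pos h.2]
    · simp only [if_neg h]
      rw [not_and_or] at h
      have : EX n p (fun _ => 0) = 0 := by simp [EX]
      rw [this]
      rcases h with h | h <;> simp [h]
  rw [Finset.sum_congr rfl (fun F hF => Finset.sum_congr rfl (h1 F hF))]
  simp only [← EX_sum]
  congr 1
  ext G
  rw [Finset.sum_eq_single (eF G ∩ Y)]
  · rw [Finset.sum_eq_single (eF G ∩ Z)]
    · simp
    · intro F' _ hne
      have : ¬ (eF G ∩ Z = F') := fun h => hne h.symm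
      simp [this]
    · intro h
      exact absurd (Finset.mem_powerset.2 Finset.inter_subset_right) h
  · intro F _ hne
    apply Finset.sum_eq_zero
    intro F' _
    have : ¬ (eF G ∩ Y = F) := fun h => hne h.symm
    simp [this]
  · intro h
    exact absurd (Finset.mem_powerset.2 Finset.inter_subset_right) h

lemma star_card {n : ℕ} (G : SimpleGraph (Fin n)) (v : Fin n) :
    (eF G ∩ bip {v} (Finset.univ \ {v})).card = (nb G v).card := by
  symm
  apply Finset.card_bij (fun w _ => s(v, w))
  · intro w hw
    rw [mem_nb] at hw
    rw [Finset.mem_inter, mem_eF, mem_bip]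
    exact ⟨hw, v, by simp, w, by simp [hw.ne'], rfl⟩
  · intro a _ b _ h
    simp only [Sym2.eq_iff] at h
    grind
  · intro e he
    rw [Finset.mem_inter, mem_eF, mem_bip] at he
    obtain ⟨h1, a, ha, b, hb, rfl⟩ := he
    rw [Finset.mem_singleton] at ha
    subst ha
    exact ⟨b, mem_nb.2 h1, rfl⟩

lemma second (n : ℕ) (p : ℝ) (h0 : 0 ≤ p) (h1 : p < 1) (hn : 2 ≤ n) (d : ℕ) (hq : 0 < bc p (n - 1) d) :
    gnpProb n p (fun G => ∀ v, d < (nb G v).card) ≤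
      1 / (n * bc p (n - 1) d) + 1 / (1 - p) ^ 2 - 1 := by
  set q1 := bc p (n - 1) d with hq1
  set q2 := bc p (n - 2) d with hq2
  have hn' : (0 : ℝ) < n := by exact_mod_cast (by omega : 0 < n)
  have hq2n : 0 ≤ q2 := bc_nonneg h0 h1.le _ _
  have h12 : (1 - p) * q2 ≤ q1 := by
    have := bc_succ h0 h1.le (n - 2) d
    rwa [show n - 2 + 1 = n - 1 by omega] at this
  set I : Fin n → SimpleGraph (Fin n) → ℝ := fun v G => if (nb G v).card ≤ d then 1 else 0 with hI
  set W : SimpleGraph (Fin n) → ℝ := fun G => ∑ v, I v G with hW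
  set μ : ℝ := n * q1 with hμ
  have hμ0 : 0 < μ := by positivity
  have hEI : ∀ v, EX n p (I v) = q1 := by
    intro v
    rw [hI]
    dsimp only
    have hpe : EX n p (fun G => if (nb G v).card ≤ d then (1 : ℝ) else 0) =
        gnpProb n p (fun G => (nb G v).card ≤ d) := by
      rw [prob_eq n p]
      congr 1
      ext G
      by_cases h : (nb G v).card ≤ d <;> simp [h]
    rw [hpe]
    have hdis : Disjoint ({v} : Finset (Fin n)) (Finset.univ \ {v}) := Finset.disjoint_sdiff
    have := indep2 n p (bip {v} (Finset.univ \ {v})) ∅ (bip_sub hdis) (Finset.empty_subset _)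
      (Finset.disjoint_empty_right _) d
    rw [bip_card hdis, Finset.card_empty, bc_zero, mul_one, Finset.card_singleton, one_mul,
      Finset.card_sdiff_of_subset (Finset.subset_univ _), Finset.card_univ, Fintype.card_fin,
      Finset.card_singleton] at this
    rw [hq1, ← this]
    congr 1
    ext G
    rw [star_card]
    simp
  have hEII : ∀ u v, u ≠ v → EX n p (fun G => I u G * I v G) ≤ q2 ^ 2 := by
    intro u v huv
    have hd1 : Disjoint ({u} : Finset (Fin n)) (Finset.univ \ {u, v}) := by
      rw [Finset.disjoint_singleton_left]; simp
    have hd2 : Disjoint ({v} : Finset (Fin n)) (Finset.univ \ {u, v}) := by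
      rw [Finset.disjoint_singleton_left]; simp
    have hc : (Finset.univ \ ({u, v} : Finset (Fin n))).card = n - 2 := by
      rw [Finset.card_sdiff_of_subset (Finset.subset_univ _), Finset.card_univ, Fintype.card_fin,
        Finset.card_pair huv]
    have := indep2 n p (bip {u} (Finset.univ \ {u, v})) (bip {v} (Finset.univ \ {u, v})) (bip_sub hd1) (bip_sub hd2)
      (by
        rw [Finset.disjoint_left]
        intro e h1 h2
        obtain ⟨a, ha, b, hb, rfl⟩ := mem_bip.1 h1
        obtain ⟨a', ha', b', hb', h3⟩ := mem_bip.1 h2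
        simp only [Finset.mem_singleton] at ha ha'
        subst ha ha'
        simp only [Finset.mem_sdiff, Finset.mem_univ, true_and, Finset.mem_insert, Finset.mem_singleton] at hb hb'
        simp only [Sym2.eq_iff] at h3
        rcases h3 with h3 | h3
        · exact huv h3.1
        · exact hb' (Or.inl h3.1.symm)) d
    rw [bip_card hd1, bip_card hd2, hc, Finset.card_singleton, Finset.card_singleton, one_mul, ← hq2, ← sq] at this
    rw [← this, prob_eq]
    apply EX_mono h0 h1.le
    intro G
    rw [hI]
    dsimp only
    have hsub : ∀ x : Fin n, x ∈ ({u, v} : Finset (Fin n)) →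
        (eF G ∩ bip {x} (Finset.univ \ {u, v})).card ≤ (nb G x).card := by
      intro x hx
      rw [← star_card]
      apply Finset.card_le_card
      intro e he
      rw [Finset.mem_inter] at he ⊢
      refine ⟨he.1, ?_⟩
      obtain ⟨a, ha, b, hb, rfl⟩ := mem_bip.1 he.2
      refine mem_bip.2 ⟨a, ha, b, ?_, rfl⟩
      rw [Finset.mem_sdiff] at hb ⊢
      refine ⟨hb.1, fun h => hb.2 ?_⟩
      rw [Finset.mem_singleton] at h
      rw [h]; exact hx
    have hu := hsub u (by simp)
    have hv := hsub v (by simp)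
    by_cases h : (nb G u).card ≤ d ∧ (nb G v).card ≤ d
    · rw [if_pos h.1, if_pos h.2, if_pos ⟨hu.trans h.1, hv.trans h.2⟩]; norm_num
    · have : (if (nb G u).card ≤ d then (1 : ℝ) else 0) * (if (nb G v).card ≤ d then 1 else 0) = 0 := by
        rw [not_and_or] at h
        rcases h with h | h <;> simp [h]
      rw [this]
      split_ifs <;> norm_num
  have hEW : EX n p W = μ := by
    rw [hW, EX_sum, Finset.sum_congr rfl (fun v _ => hEI v)]
    simp [hμ]
  have hEW2 : EX n p (fun G => W G * W G) ≤ μ + n ^ 2 * q2 ^ 2 := by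
    have e1 : (fun G => W G * W G) = (fun G => ∑ u, ∑ v, I u G * I v G) := by
      ext G
      rw [hW]
      dsimp only
      rw [Finset.sum_mul_sum]
    rw [e1, EX_sum]
    have e2 : ∀ u ∈ (Finset.univ : Finset (Fin n)), EX n p (fun G => ∑ v, I u G * I v G) ≤ q1 + n * q2 ^ 2 := by
      intro u _
      rw [EX_sum, ← Finset.add_sum_erase _ _ (Finset.mem_univ u)]
      apply add_le_add
      · rw [← hEI u]
        apply EX_mono h0 h1.le
        intro G
        rw [hI]
        dsimp only
        split_ifs <;> norm_num
      · refine (Finset.sum_le_sum (fun v hv => hEII u v (Finset.ne_of_mem_erase hv).symm)).trans ?_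
        rw [Finset.sum_const, nsmul_eq_mul]
        apply mul_le_mul_of_nonneg_right _ (by positivity)
        have : (Finset.univ.erase u).card ≤ n := (Finset.card_le_univ _).trans (by simp)
        exact_mod_cast this
    refine (Finset.sum_le_sum e2).trans ?_
    rw [Finset.sum_const, nsmul_eq_mul, Finset.card_univ, Fintype.card_fin, hμ]
    apply le_of_eq
    ring
  have hch : gnpProb n p (fun G => ∀ v, d < (nb G v).card) ≤
      EX n p (fun G => (1 / μ ^ 2) * (W G * W G - 2 * μ * W G + μ ^ 2)) := by
    apply prob_le h0 h1.le
    · intro G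
      have : W G * W G - 2 * μ * W G + μ ^ 2 = (W G - μ) ^ 2 := by ring
      rw [this]; positivity
    · intro G hG
      have : W G = 0 := by
        rw [hW]
        dsimp only
        apply Finset.sum_eq_zero
        intro v _
        rw [hI]
        dsimp only
        rw [if_neg (by have := hG v; omega)]
      rw [this]
      simp
      rw [inv_mul_cancel₀ (by positivity)]
  refine hch.trans ?_
  rw [EX_smul]
  have hc : EX n p (fun _ => μ ^ 2) = μ ^ 2 := by
    have := EX_smul (n := n) (p := p) (μ ^ 2) (fun _ => 1)
    rw [EX_one, mul_one] at this
    simpa using this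
  rw [EX_add, EX_sub, EX_smul, hc, hEW]
  have e1 : (1 / μ ^ 2) * (EX n p (fun G => W G * W G) - 2 * μ * μ + μ ^ 2) ≤
      (1 / μ ^ 2) * (μ + n ^ 2 * q2 ^ 2 - 2 * μ * μ + μ ^ 2) := by
    apply mul_le_mul_of_nonneg_left _ (by positivity)
    linarith
  refine e1.trans ?_
  have e2 : (1 / μ ^ 2) * (μ + n ^ 2 * q2 ^ 2 - 2 * μ * μ + μ ^ 2) = 1 / μ + (q2 / q1) ^ 2 - 1 := by
    rw [hμ]
    field_simp
    ring
  rw [e2]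
  have hp1 : 0 < 1 - p := by linarith
  have e3 : (q2 / q1) ^ 2 ≤ 1 / (1 - p) ^ 2 := by
    rw [← one_div_pow]
    apply pow_le_pow_left₀ (by positivity)
    rw [div_le_div_iff₀ hq hp1]
    linarith
  linarith

lemma core0 (ε : ℝ) (hε : 0 < ε) : ∀ᶠ n : ℕ in atTop, ∀ (p : ℝ) (d : ℕ), 0 ≤ p → p * n ≤ 1.02 * Real.log n →
    Real.exp (0.01 * Real.log n) ≤ n * bc p (n - 1) d →
    gnpProb n p (fun G => ∀ v, d < (nb G v).card) ≤ ε := by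
  filter_upwards [exp_small 0.01 (by norm_num) (ε / 2) (by positivity), log_le_n (20 / ε + 20) (by positivity),
    eventually_ge_atTop 2, log_large 1] with n h1 h2 h3 h4 p d hp0 hp hq
  have hn : (0 : ℝ) < n := by exact_mod_cast (by omega : 0 < n)
  have hp6 : p ≤ 1 / 6 := by
    have : 20 * Real.log n ≤ n := by
      have : 0 ≤ 20 / ε * Real.log n := by positivity
      linarith
    by_contra hc
    push Not at hc
    nlinarith
  have hpe : p * 6 ≤ ε := by
    have h5 : 20 / ε * Real.log n ≤ n := by linarith
    rw [div_mul_eq_mul_div, div_le_iff₀ hε] at h5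
    have : p * 6 * n ≤ ε * n := by nlinarith
    exact le_of_mul_le_mul_right this hn
  have hbpos : 0 < bc p (n - 1) d := by
    have : 0 < n * bc p (n - 1) d := lt_of_lt_of_le (Real.exp_pos _) hq
    exact pos_of_mul_pos_right this hn.le
  refine (second n p hp0 (by linarith) h3 d hbpos).trans ?_
  have e1 : 1 / (n * bc p (n - 1) d) ≤ ε / 2 := by
    refine le_trans ?_ h1
    rw [Real.exp_neg, ← one_div]
    exact one_div_le_one_div_of_le (Real.exp_pos _) hq
  have e2 : 1 / (1 - p) ^ 2 ≤ 1 + 3 * p := by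
    rw [div_le_iff₀ (by nlinarith)]
    nlinarith [mul_nonneg hp0 hp0, mul_nonneg (mul_nonneg hp0 hp0) hp0]
  linarith

lemma pow_low {n : ℕ} {p : ℝ} (h0 : 0 ≤ p) (h1 : p ≤ 1 / 1000) (m : ℕ) (hm : m ≤ n) :
    Real.exp (-(1.002 * (p * n))) ≤ (1 - p) ^ m := by
  have hq : 0 < 1 - p := by linarith
  have h2 : Real.exp (-(1.002 * p)) ≤ 1 - p := by
    rw [Real.exp_neg, inv_le_comm₀ (Real.exp_pos _) hq]
    have := Real.add_one_le_exp (1.002 * p)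
    refine le_trans ?_ this
    rw [inv_le_iff_one_le_mul₀ hq]
    nlinarith
  calc Real.exp (-(1.002 * (p * n))) = Real.exp (-(1.002 * p)) ^ n := by
        rw [← Real.exp_nat_mul]; congr 1; ring
    _ ≤ (1 - p) ^ n := pow_le_pow_left₀ (Real.exp_pos _).le h2 _
    _ ≤ (1 - p) ^ m := pow_le_pow_of_le_one hq.le (by linarith) hm

lemma ev0low (ε : ℝ) (hε : 0 < ε) : ∀ᶠ n : ℕ in atTop, ∀ p : ℝ, 0 ≤ p → p ≤ 0.9 * Real.log n / n →
    gnpProb n p (fun G => ∀ v, 0 < (nb G v).card) ≤ ε := by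
  filter_upwards [core0 ε hε, log_large 1, log_le_n 1000 (by norm_num), eventually_ge_atTop 2] with n hc hL h1 h2 p hp0 hp
  have hn : (0 : ℝ) < n := by exact_mod_cast (by omega : 0 < n)
  rw [le_div_iff₀ hn] at hp
  have hp1 : p ≤ 1 / 1000 := by
    by_contra h
    push Not at h
    nlinarith
  apply hc p 0 hp0 (by linarith)
  have h3 := bc_ge hp0 (by linarith) (n - 1) 0 (by omega)
  simp only [Nat.choose_zero_right, Nat.cast_one, pow_zero, one_mul, Nat.sub_zero] at h3
  have h4 := (pow_low hp0 hp1 (n - 1) (Nat.sub_le n 1)).trans h3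
  have h5 := mul_le_mul_of_nonneg_left h4 hn.le
  refine le_trans ?_ h5
  conv_rhs => rw [← Real.exp_log hn]
  rw [Real.exp_log hn, ← Real.exp_log hn, ← Real.exp_add, Real.exp_log hn]
  apply Real.exp_le_exp.2
  nlinarith

lemma exp4 : Real.exp 4 ≤ 89 := by
  have := Real.exp_one_lt_d9
  rw [show (4 : ℝ) = (4 : ℕ) * 1 by norm_num, Real.exp_nat_mul]
  have h2 : Real.exp 1 ^ 4 ≤ 2.7182818286 ^ 4 := pow_le_pow_left₀ (Real.exp_pos _).le this.le 4
  refine h2.trans (by norm_num)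

lemma ev0 : Unl (fun n G => ∀ v, Real.log n / 100 < (nb G v).card) := by
  intro ε hε
  filter_upwards [PR_basic, core0 ε hε, log_large 1000, log_le_n 2000 (by norm_num), eventually_ge_atTop 2] with
    n hb hc hL h1 h2 p hp
  obtain ⟨h0, hp1, hn, ha, hb⟩ := hb p hp
  set L := Real.log n with hLdef
  set d := ⌊L / 100⌋₊ with hd
  have hdle : (d : ℝ) ≤ L / 100 := Nat.floor_le (by linarith)
  have hdge : L / 100 - 1 < d := by
    have := Nat.lt_floor_add_one (L / 100)
    linarith
  have hdpos : (0 : ℝ) < d := by linarith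
  have hd1 : 1 ≤ d := by exact_mod_cast hdpos
  have hdn : (d : ℝ) ≤ 0.001 * n := by linarith
  have hdn' : d + 1 ≤ n := by
    have : (d : ℝ) + 1 ≤ n := by linarith
    exact_mod_cast this
  refine (prob_mono h0 hp1 (fun G h v => ?_)).trans (hc p d h0 hb ?_)
  · have h3 := h v
    have : (d : ℝ) < ((nb G v).card : ℝ) := lt_of_le_of_lt hdle h3
    exact_mod_cast this
  have h3 := bc_ge h0 hp1 (n - 1) d (by omega)
  have hch : (((n : ℝ) - d) / d) ^ d ≤ ((n - 1).choose d : ℝ) := by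
    have e1 := Nat.pow_le_choose (α := ℝ) d (n - 1)
    rw [show n - 1 + 1 - d = n - d by omega, Nat.cast_sub (by omega)] at e1
    rw [div_pow, div_le_iff₀ (by positivity)]
    have e2 : (d.factorial : ℝ) ≤ (d : ℝ) ^ d := by exact_mod_cast Nat.factorial_le_pow d
    have e3 : (d.factorial : ℝ) * ((n - 1).choose d : ℝ) ≤ (d : ℝ) ^ d * ((n - 1).choose d : ℝ) :=
      mul_le_mul_of_nonneg_right e2 (Nat.cast_nonneg _)
    first
      | linarith
      | (rw [div_le_iff₀ (by positivity)] at e1; linarith)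
  have hbase : Real.exp 4 ≤ ((n : ℝ) - d) / d * p := by
    refine exp4.trans ?_
    rw [div_mul_eq_mul_div, le_div_iff₀ hdpos]
    have : p * d ≤ p * (0.001 * n) := mul_le_mul_of_nonneg_left hdn h0
    nlinarith
  have h5 : Real.exp 4 ^ d ≤ ((n - 1).choose d : ℝ) * p ^ d := by
    refine (pow_le_pow_left₀ (Real.exp_pos _).le hbase d).trans ?_
    rw [mul_pow]
    exact mul_le_mul_of_nonneg_right hch (by positivity)
  have hp2 : p ≤ 1 / 1000 := by
    by_contra h
    push Not at h
    nlinarith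
  have h6 := pow_low h0 hp2 (n - 1 - d) (show n - 1 - d ≤ n by omega)
  have h7 : Real.exp 4 ^ d * Real.exp (-(1.002 * (p * n))) ≤ bc p (n - 1) d := by
    refine le_trans ?_ h3
    have hmm := mul_le_mul h5 h6 (Real.exp_pos _).le (by positivity)
    exact hmm.trans (le_of_eq (by ring))
  have h8 := mul_le_mul_of_nonneg_left h7 hn.le
  refine le_trans ?_ h8
  rw [← Real.exp_nat_mul, ← Real.exp_add]
  have hnexp : (n : ℝ) = Real.exp L := (Real.exp_log hn).symm
  have h9 : Real.exp (0.01 * L) ≤ Real.exp L * Real.exp (d * 4 + -(1.002 * (p * n))) := by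
    rw [← Real.exp_add]
    apply Real.exp_le_exp.2
    nlinarith
  rw [← hnexp] at h9
  exact h9

end Second
end HC

namespace HC
set_option linter.unusedSectionVars false
section Fin10

lemma nb_degree {n : ℕ} (G : SimpleGraph (Fin n)) (v : Fin n) [Fintype (G.neighborSet v)] :
    G.degree v = (nb G v).card := by
  rw [← SimpleGraph.card_neighborFinset_eq_degree]
  congr 1
  ext w
  simp [mem_nb]

lemma det_finish : ∀ᶠ n : ℕ in atTop, ∀ (G : SimpleGraph (Fin n)) (δ : ℕ),
    (∀ v, δ ≤ (nb G v).card) →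
    (¬ ∀ v, Real.log n / 100 < (nb G v).card) →
    SmallOK G (SmS n G) →
    (¬ ∃ T : Finset (Fin n), (T.card : ℝ) ≤ 0.0000001 * n ∧
      ⌊Real.log n / 10 ^ 4⌋₊ * T.card < 10 * (eI G T).card) →
    (¬ ∃ A B : Finset (Fin n), Disjoint A B ∧ 0.00000001 * (n : ℝ) ≤ A.card ∧ n ≤ 4 * B.card ∧
      ((eB G A B).card : ℝ) ≤ 0.05 * Real.log n * A.card) →
    (¬ ∃ Γ : SimpleGraph (Fin n), Γ ≤ G ∧ (ec Γ : ℝ) ≤ n * Real.log n / 5000 ∧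
      n ^ 2 ≤ 32 * (BS Γ).card ∧
      (((BS Γ).filter (fun e => e ∈ G.edgeSet)).card : ℝ) ≤ n * Real.log n / 200) →
    (¬ 2 * n * Real.log n ≤ ((eF G).card : ℝ)) →
    ∃ c : Fin (δ / 2) → Σ v : Fin n, G.Walk v v, (∀ i, (c i).2.IsHamiltonianCycle) ∧
      (∀ i j, i ≠ j → List.Disjoint ((c i).2.edges) ((c j).2.edges)) := by
  filter_upwards [log_large 1000000000000000, eventually_ge_atTop (10 ^ 10)] with n hL hn10 G δ hδ h0 h1 h2 h3 h4 h5
  set L := Real.log n with hLdef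
  have hn : (10 ^ 10 : ℝ) ≤ n := by exact_mod_cast hn10
  have hnpos : (0 : ℝ) < n := by linarith
  have hnL : (n : ℝ) * 1000000000000000 ≤ n * L := mul_le_mul_of_nonneg_left hL hnpos.le
  push Not at h0 h2 h3 h4 h5
  obtain ⟨v0, hv0⟩ := h0
  have hδL : (δ : ℝ) ≤ L / 100 := le_trans (by exact_mod_cast hδ v0) hv0
  apply collect
  intro i hi H hH1 hH2
  have hi2 : 2 * i + 2 ≤ δ := by omega
  have hiL : 2 * (i : ℝ) + 2 ≤ L / 100 := le_trans (by exact_mod_cast hi2) hδL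
  have hd0a : ((⌊L / 10 ^ 4⌋₊ : ℕ) : ℝ) ≤ L / 10 ^ 4 := Nat.floor_le (by positivity)
  have hwa : ((⌊0.0000000004 * (n * L)⌋₊ : ℕ) : ℝ) ≤ 0.0000000004 * (n * L) := Nat.floor_le (by positivity)
  have hwb : 0.0000000004 * (n * L) < ((⌊0.0000000004 * (n * L)⌋₊ : ℕ) : ℝ) + 1 := Nat.lt_floor_add_one _
  have hEa : ((⌊2 * n * L⌋₊ : ℕ) : ℝ) ≤ 2 * n * L := Nat.floor_le (by positivity)
  have hsa : 0.00000001 * (n : ℝ) ≤ ((⌈0.00000001 * (n : ℝ)⌉₊ : ℕ) : ℝ) := Nat.le_ceil _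
  have hsb : ((⌈0.00000001 * (n : ℝ)⌉₊ : ℕ) : ℝ) < 0.00000001 * (n : ℝ) + 1 := Nat.ceil_lt_add_one (by positivity)
  have hcard : Fintype.card (Fin n) = n := Fintype.card_fin n
  refine one_step i ⌊L / 10 ^ 4⌋₊ ⌈0.00000001 * (n : ℝ)⌉₊ ⌊0.0000000004 * (n * L)⌋₊ ⌊2 * n * L⌋₊
    (2 * 10 ^ 10 * n) ⌊n * L / 5000⌋₊ 0.0000000001 H ?_ hH1 hH2 (SmS n G) ?_ ?_ ?_ h1 ?_ ?_ ?_
    (by norm_num) (by norm_num) ?_ ?_ ?_ ?_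
  · rw [hcard]; exact le_trans (by norm_num) hn10
  · apply Nat.le_floor
    push_cast
    rw [le_div_iff₀ (by positivity)]
    linarith
  · intro v; exact hi2.trans (hδ v)
  · intro v hv
    simp only [SmS, Finset.mem_filter, Finset.mem_univ, true_and, not_lt] at hv
    rw [← hLdef] at hv
    have : ((⌊L / 10 ^ 4⌋₊ + 2 + 2 * i : ℕ) : ℝ) ≤ (nb G v).card := by
      push_cast
      linarith
    exact_mod_cast this
  · intro T hT
    apply h2 T
    have : (T.card : ℝ) ≤ 5 * ((⌈0.00000001 * (n : ℝ)⌉₊ : ℕ) : ℝ) := by exact_mod_cast hT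
    linarith
  · intro A B hAB hA hB
    rw [hcard] at hB
    have hA' : ((⌈0.00000001 * (n : ℝ)⌉₊ : ℕ) : ℝ) ≤ A.card := by exact_mod_cast hA
    have hA2 : 0.00000001 * (n : ℝ) ≤ A.card := hsa.trans hA'
    have h := h3 A B hAB hA2 hB
    have h6 : 0.00000001 * (n : ℝ) * L ≤ A.card * L := mul_le_mul_of_nonneg_right hA2 (by linarith)
    have h7 : 2 * (i : ℝ) * A.card ≤ L / 100 * A.card :=
      mul_le_mul_of_nonneg_right (by linarith) (Nat.cast_nonneg _)
    have : ((⌊0.0000000004 * (n * L)⌋₊ + 2 * i * A.card : ℕ) : ℝ) ≤ (eB G A B).card := by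
      push_cast
      nlinarith
    exact_mod_cast this
  · apply Nat.le_floor
    rw [ec_eq, eF_card]
    exact h5.le
  · nlinarith
  · rw [hcard]
    have e1 : (1 - 0.0000000001 : ℝ) ^ (2 * 10 ^ 10 * n) ≤ Real.exp (-(2 * n)) := by
      have := pow_le_pow_left₀ (by norm_num : (0 : ℝ) ≤ 1 - 0.0000000001)
        (by have := Real.add_one_le_exp (-0.0000000001 : ℝ); linarith : (1 - 0.0000000001 : ℝ) ≤ Real.exp (-0.0000000001))
        (2 * 10 ^ 10 * n)
      refine this.trans (le_of_eq ?_)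
      rw [← Real.exp_nat_mul]
      congr 1
      push_cast
      ring
    have e2 : (4 : ℝ) < Real.exp 2 := by
      have := Real.exp_one_gt_d9
      rw [show (2 : ℝ) = 1 + 1 by norm_num, Real.exp_add]
      nlinarith
    have e3 : (4 : ℝ) ^ n < Real.exp (2 * n) := by
      have := pow_lt_pow_left₀ e2 (by norm_num) (show n ≠ 0 by omega)
      rwa [← Real.exp_nat_mul, mul_comm] at this
    calc (1 - 0.0000000001 : ℝ) ^ (2 * 10 ^ 10 * n) * 4 ^ n ≤ Real.exp (-(2 * n)) * 4 ^ n :=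
          mul_le_mul_of_nonneg_right e1 (by positivity)
      _ < Real.exp (-(2 * n)) * Real.exp (2 * n) := mul_lt_mul_of_pos_left e3 (Real.exp_pos _)
      _ = 1 := by rw [← Real.exp_add]; simp
  · rw [hcard]
    apply Nat.le_floor
    push_cast
    have := mul_le_mul_of_nonneg_left hd0a hnpos.le
    nlinarith
  · intro Γ hΓ hM hB
    rw [hcard] at hB ⊢
    have hM' : (ec Γ : ℝ) ≤ n * L / 5000 :=
      le_trans (by exact_mod_cast hM) (Nat.floor_le (by positivity))
    have h := h4 Γ hΓ hM' hB
    have : ((n * i : ℕ) : ℝ) < ((BS Γ).filter (fun e => e ∈ G.edgeSet)).card := by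
      refine lt_of_le_of_lt ?_ h
      push_cast
      have := mul_le_mul_of_nonneg_left (show (i : ℝ) ≤ L / 200 by linarith) hnpos.le
      linarith
    exact_mod_cast this

/-- the target property -/
def Tgt (n : ℕ) (G : SimpleGraph (Fin n)) : Prop := ∀ hn : 0 < n,
      haveI : Nonempty (Fin n) := ⟨⟨0, hn⟩⟩
      ∃ c : Fin (G.minDegree / 2) → Σ v : Fin n, G.Walk v v,
        (∀ i, (c i).2.IsHamiltonianCycle) ∧
        (∀ i j, i ≠ j → List.Disjoint ((c i).2.edges) ((c j).2.edges))

lemma main_bad (ε : ℝ) (hε : 0 < ε) : ∀ᶠ n : ℕ in atTop, ∀ p : ℝ, 0 ≤ p → p ≤ 1.02 * Real.log n / n →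
    p ≤ 1 ∧ gnpProb n p (fun G => ¬ Tgt n G) ≤ ε := by
  have hε6 : 0 < ε / 6 := by positivity
  filter_upwards [ev0 _ hε6, ev1 _ hε6, ev2 _ hε6, ev3 _ hε6, ev4 _ hε6, ev5 _ hε6, ev0low ε hε,
    det_finish, log_large 1, log_le_n 2 (by norm_num), eventually_gt_atTop 0] with
    n e0 e1 e2 e3 e4 e5 el hdet hL hLn hn p hp0 hp
  have hn' : (0 : ℝ) < n := by exact_mod_cast hn
  have hp1 : p ≤ 1 := by
    refine hp.trans ?_
    rw [div_le_one hn']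
    linarith
  refine ⟨hp1, ?_⟩
  by_cases hlow : p ≤ 0.9 * Real.log n / n
  · refine le_trans (prob_mono hp0 hp1 ?_) (el p hp0 hlow)
    intro G hG
    by_contra hc
    push Not at hc
    apply hG
    intro hn1
    obtain ⟨v, hv⟩ := hc
    have : G.minDegree / 2 = 0 := by
      have h1 := G.minDegree_le_degree v
      rw [nb_degree] at h1
      omega
    apply collect
    intro i hi
    omega
  · have hPR : PR n p := ⟨(not_le.1 hlow).le, hp⟩
    have f0 := e0 p hPR
    have f1 := e1 p hPR
    have f2 := e2 p hPR
    have f3 := e3 p hPR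
    have f4 := e4 p hPR
    have f5 := e5 p hPR
    have key : ∀ (B C : SimpleGraph (Fin n) → Prop) (b c : ℝ), gnpProb n p B ≤ b → gnpProb n p C ≤ c →
        gnpProb n p (fun G => B G ∨ C G) ≤ b + c := fun B C b c hb hc =>
      (prob_or hp0 hp1 _ B C (fun G h => h)).trans (add_le_add hb hc)
    have g := key _ _ _ _ f0 (key _ _ _ _ f1 (key _ _ _ _ f2 (key _ _ _ _ f3 (key _ _ _ _ f4 f5))))
    refine le_trans (prob_mono hp0 hp1 ?_) (g.trans (by linarith))
    intro G h
    by_contra hc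
    simp only [not_or] at hc
    obtain ⟨c0, c1, c2, c3, c4, c5⟩ := hc
    apply h
    intro hn1
    exact hdet G _ (fun v => by
      rw [← nb_degree]
      exact G.minDegree_le_degree v) c0 (not_not.1 c1) c2 c3 c4 c5

lemma final (p : ℕ → ℝ) (hp0 : ∀ n, 0 ≤ p n)
    (hhigh : ∀ n : ℕ, p n ≤ 1.02 * Real.log n / n) : WHP p Tgt := by
  unfold WHP
  rw [Metric.tendsto_nhds]
  intro ε hε
  filter_upwards [main_bad (ε / 2) (by positivity)] with n h
  obtain ⟨h1, h2⟩ := h (p n) (hp0 n) (hhigh n)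
  have h3 := prob_nonneg (hp0 n) h1 (fun G => ¬ Tgt n G)
  rw [Real.dist_eq, prob_compl, abs_lt]
  constructor <;> linarith

end Fin10
end HC

/-- Theorem 4: for `p ≤ 1.02 ln n / n`, w.h.p. `G ~ G(n,p)` contains `⌊δ(G)/2⌋`
pairwise edge-disjoint Hamilton cycles. -/
theorem stmt3 (p : ℕ → ℝ) (hp0 : ∀ n, 0 ≤ p n)
    (hhigh : ∀ n : ℕ, p n ≤ 1.02 * Real.log n / n) :
    WHP p (fun n G => ∀ hn : 0 < n,
      haveI : Nonempty (Fin n) := ⟨⟨0, hn⟩⟩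
      ∃ c : Fin (G.minDegree / 2) → Σ v : Fin n, G.Walk v v,
        (∀ i, (c i).2.IsHamiltonianCycle) ∧
        (∀ i j, i ≠ j → List.Disjoint ((c i).2.edges) ((c j).2.edges))) := by
  exact HC.final p hp0 hhigh
end

section
/- For every fixed β > 0 there exists an integer n₀ = n₀(β) > 0 such that for every n ≥ n₀, every graph G ∈ 𝓛(n,β) (with witnessing partition V = V₁ ∪ D) is either Hamiltonian or satisfies |{v ∈ V₁ : |B_G(v)| ≥ n/3 + βn}| ≥ n/3 + βn. -/
open Filter Finset SimpleGraph
open scoped Classical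

set_option linter.unusedSectionVars false
section Helpers

variable {V : Type*} [Fintype V] {G : SimpleGraph V}

lemma aux_rot {a u w : V} (q : G.Walk a u) (hq : q.IsPath) (hw : w ∈ q.support) (hwu : w ≠ u)
    (hadj : G.Adj u w) :
    ∃ (w' : V) (q' : G.Walk a w'), q'.IsPath ∧ q'.length = q.length ∧ s(w, w') ∈ q.edges ∧
      ∀ e ∈ q'.edges, e ∈ q.edges ∨ e = s(w, u) := by
  have hspec := q.take_spec hw
  obtain ⟨w', h, r, hr⟩ := Walk.exists_eq_cons_of_ne hwu (q.dropUntil w hw)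
  rw [hr] at hspec
  refine ⟨w', (q.takeUntil w hw).append (Walk.cons hadj.symm r.reverse), ?_, ?_, ?_, ?_⟩
  · have h1 : q.support.Nodup := hq.support_nodup
    rw [← hspec, Walk.support_append] at h1
    rw [Walk.isPath_def, Walk.support_append]
    simp only [Walk.support_cons, List.tail_cons, Walk.support_reverse] at h1 ⊢
    refine (List.Perm.nodup_iff ?_).2 h1
    exact List.Perm.append_left _ (List.reverse_perm _)
  · conv_rhs => rw [← hspec]
    simp
  · rw [← hspec]; simp
  · intro e he
    rw [← hspec]
    simp at he ⊢
    tauto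

lemma aux_nbr {a u : V} (q : G.Walk a u) (hq : q.IsPath) (y : V) :
    (Finset.univ.filter (fun x => s(x, y) ∈ q.edges)).card ≤ 2 := by
  by_cases hy : y ∈ q.support
  · have hsub : Finset.univ.filter (fun x => s(x, y) ∈ q.edges) ⊆
        {(q.dropUntil y hy).snd, (q.takeUntil y hy).penultimate} := by
      intro x hx
      simp only [Finset.mem_filter, Finset.mem_univ, true_and] at hx
      rw [← q.take_spec hy, Walk.edges_append, List.mem_append] at hx
      rcases hx with hx | hx
      · rw [Sym2.eq_swap] at hx
        have := (hq.takeUntil hy).eq_penultimate_of_mem_edges hx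
        simp [this]
      · rw [Sym2.eq_swap] at hx
        have := (hq.dropUntil hy).eq_snd_of_mem_edges hx
        simp [this]
    exact (Finset.card_le_card hsub).trans Finset.card_le_two
  · rw [Finset.filter_eq_empty_iff.2]
    · simp
    · intro x _ hx
      exact hy (q.snd_mem_support_of_mem_edges hx)

lemma aux_bdd (G : SimpleGraph V) :
    BddAbove {l : ℕ | ∃ (u v : V) (q : G.Walk u v), q.IsPath ∧ q.length = l} := by
  refine ⟨Fintype.card V, ?_⟩
  rintro l ⟨u, v, q, hq, rfl⟩
  exact hq.length_lt.le

lemma aux_le_longest {u v : V} (q : G.Walk u v) (hq : q.IsPath) : q.length ≤ longestPath G :=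
  le_csSup (aux_bdd G) ⟨u, v, q, hq, rfl⟩

lemma aux_exists_longest (G : SimpleGraph V) [Nonempty V] :
    ∃ (u v : V) (q : G.Walk u v), q.IsPath ∧ q.length = longestPath G :=
  Nat.sSup_mem (s := {l : ℕ | ∃ (u v : V) (q : G.Walk u v), q.IsPath ∧ q.length = l})
    ⟨0, Classical.arbitrary V, _, Walk.nil, by simp, rfl⟩ (aux_bdd G)

lemma aux_mem_support {a u w : V} (q : G.Walk a u) (hq : q.IsPath)
    (hl : q.length = longestPath G) (hadj : G.Adj u w) : w ∈ q.support := by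
  by_contra hw
  have h1 := aux_le_longest (q.concat hadj) (hq.concat hw hadj)
  rw [Walk.length_concat] at h1
  omega

/-- A path whose endpoints are joined by an extra edge yields a Hamilton cycle or a longer path. -/
lemma aux_close (hG : G.Connected) {v z : V} (q : G.Walk v z) (hq : q.IsPath)
    (hadj : G.Adj z v) (he : s(z, v) ∉ q.edges) :
    G.IsHamiltonian ∨ q.length < longestPath G := by
  have hc : (Walk.cons hadj q).IsCycle := (Walk.cons_isCycle_iff q hadj).2 ⟨hq, he⟩
  by_cases hall : ∀ w, w ∈ q.support
  · left
    intro _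
    refine ⟨z, Walk.cons hadj q, hc, ?_⟩
    have : (Walk.cons hadj q).tail.IsPath := hc.isPath_tail
    rw [this.isHamiltonian_iff]
    simpa using hall
  · right
    push Not at hall
    obtain ⟨x0, hx0⟩ := hall
    obtain ⟨p⟩ := hG.preconnected v x0
    obtain ⟨d, -, hd1, hd2⟩ := p.exists_boundary_dart {w | w ∈ q.support} (by simp) hx0
    simp only [Set.mem_ofPred_eq] at hd1 hd2
    have hmem : d.fst ∈ (Walk.cons hadj q).support := by simp [hd1]
    set c := (Walk.cons hadj q).rotate d.fst hmem with hcdef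
    have hcc : c.IsCycle := hc.rotate hmem
    have hlen : c.length = q.length + 1 := by simp [hcdef]
    have hlt := Walk.length_tail_add_one hcc.not_nil
    have hnot : d.snd ∉ c.tail.support := by
      intro hmem2
      have h2 : d.snd ∈ c.support := by
        rw [Walk.support_tail_of_not_nil _ hcc.not_nil] at hmem2
        exact List.mem_of_mem_tail hmem2
      have h3 : d.snd ∈ (Walk.cons hadj q).support := by
        rw [hcdef] at h2
        simpa using h2
      simp at h3
      rcases h3 with h3 | h3
      · rw [h3] at hd2; simp at hd2
      · exact hd2 h3
    have h4 := aux_le_longest (c.tail.concat d.adj) (hcc.isPath_tail.concat hnot d.adj)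
    rw [Walk.length_concat] at h4
    omega

/-- Extremal endpoints are boosters. -/
lemma aux_booster (hG : G.Connected) (hH : ¬ G.IsHamiltonian) {v z : V} (q : G.Walk v z)
    (hq : q.IsPath) (hl : q.length = longestPath G) (h2 : 2 ≤ q.length) : IsBooster G v z := by
  have hne : v ≠ z := by
    rintro rfl
    have := Walk.isPath_iff_nil.1 hq
    have := Walk.length_eq_zero_iff.2 this
    omega
  have hnadj : ¬ G.Adj v z := by
    intro hadj
    have he : s(z, v) ∉ q.edges := by
      intro he
      rw [Sym2.eq_swap] at he
      have := hq.length_eq_one_of_mem_edges he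
      omega
    rcases aux_close hG q hq hadj.symm he with h | h
    · exact hH h
    · omega
  refine ⟨hne, hnadj, ?_⟩
  have hle : G ≤ G ⊔ fromEdgeSet {s(v, z)} := le_sup_left
  have hadj' : (G ⊔ fromEdgeSet {s(v, z)}).Adj z v := by
    right
    simp [Sym2.eq_swap, hne.symm]
  have := aux_close (hG.mono hle) (q.mapLe hle) (hq.mapLe hle) hadj' (by
    rw [Walk.edges_mapLe_eq_edges]
    intro he
    exact hnadj (q.adj_of_mem_edges he).symm)
  simpa [hl] using this

/-- Neighbourhood of `U` inside `V1`. -/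
noncomputable def auxN (G : SimpleGraph V) (V1 U : Finset V) : Finset V :=
  V1.filter (fun v => v ∉ U ∧ ∃ u ∈ U, G.Adj u v)

/-- Combinatorial content of the family `𝓛(n, β)`. -/
structure AuxSetup (G : SimpleGraph V) (V1 D : Finset V) (t M : ℕ) : Prop where
  cover : ∀ v, v ∈ V1 ∨ v ∈ D
  disj : ∀ v, v ∈ V1 → v ∉ D
  deg2 : ∀ u ∈ D, 2 ≤ (V1.filter (fun w => G.Adj u w)).card
  path : ∀ u ∈ D, ∀ v ∈ D, ∀ q : G.Walk u v, q.IsPath → 0 < q.length → 4 < q.length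
  cyc : ∀ u ∈ D, ∀ q : G.Walk u u, q.IsCycle → 4 < q.length
  t2 : 2 ≤ t
  nonempty : V1.Nonempty
  exp1 : ∀ U ⊆ V1, U.Nonempty → U.card < t → 11 * U.card ≤ (auxN G V1 U).card
  exp2 : ∀ U ⊆ V1, U.card = t → M ≤ (auxN G V1 U).card
  big : V1.card < 2 * M

variable {V1 D : Finset V} {t M : ℕ}

lemma AuxSetup.closed_big (h : AuxSetup G V1 D t M) (S : Finset V) (hS : S ⊆ V1)
    (hne : S.Nonempty) (hcl : ∀ u ∈ S, ∀ v ∈ V1, G.Adj u v → v ∈ S) : V1.card < 2 * S.card := by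
  by_cases hlt : S.card < t
  · have h1 := h.exp1 S hS hne hlt
    have h2 : auxN G V1 S = ∅ := by
      apply Finset.filter_eq_empty_iff.2
      rintro v hv ⟨hvS, u, hu, huv⟩
      exact hvS (hcl u hu v hv huv)
    rw [h2, Finset.card_empty] at h1
    have := hne.card_pos
    omega
  · obtain ⟨U, hU, hUt⟩ := Finset.exists_subset_card_eq (not_lt.1 hlt)
    have h1 := h.exp2 U (hU.trans hS) hUt
    have h2 : auxN G V1 U ⊆ S := by
      intro v hv
      obtain ⟨hv, -, u, hu, huv⟩ := Finset.mem_filter.1 hv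
      exact hcl u (hU hu) v hv huv
    have h3 := Finset.card_le_card h2
    have := h.big
    omega

lemma AuxSetup.connected (h : AuxSetup G V1 D t M) : G.Connected := by
  have key : ∀ x : V, V1.card < 2 * (V1.filter (fun v => G.Reachable x v)).card := by
    intro x
    apply h.closed_big _ (Finset.filter_subset _ _)
    · rcases h.cover x with hx | hx
      · exact ⟨x, by simp [hx]⟩
      · have := h.deg2 x hx
        obtain ⟨w, hw⟩ := Finset.card_pos.1 (by omega : 0 < (V1.filter (fun w => G.Adj x w)).card)
        rw [Finset.mem_filter] at hw
        exact ⟨w, by simp [hw.1, hw.2.reachable]⟩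
    · intro u hu v hv huv
      rw [Finset.mem_filter] at hu ⊢
      exact ⟨hv, hu.2.trans huv.reachable⟩
  have : Nonempty V := ⟨h.nonempty.choose⟩
  refine ⟨fun x y => ?_⟩
  have hx := key x
  have hy := key y
  have : ¬ Disjoint (V1.filter (fun v => G.Reachable x v)) (V1.filter (fun v => G.Reachable y v)) := by
    intro hd
    have h1 := Finset.card_union_of_disjoint hd
    have h2 : (V1.filter (fun v => G.Reachable x v) ∪ V1.filter (fun v => G.Reachable y v)).card
        ≤ V1.card :=
      Finset.card_le_card (Finset.union_subset (Finset.filter_subset _ _) (Finset.filter_subset _ _))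
    omega
  rw [Finset.not_disjoint_iff] at this
  obtain ⟨w, h1, h2⟩ := this
  rw [Finset.mem_filter] at h1 h2
  exact h1.2.trans h2.2.symm

lemma AuxSetup.ne_of_mem (h : AuxSetup G V1 D t M) {x d : V} (hx : x ∈ V1) (hd : d ∈ D) :
    x ≠ d := by
  rintro rfl
  exact h.disj _ hx hd

lemma AuxSetup.uniq (h : AuxSetup G V1 D t M) {u w₁ w₂ d₁ d₂ : V} (hu : u ∈ V1)
    (hw₁ : w₁ ∈ V1) (hw₂ : w₂ ∈ V1) (hd₁ : d₁ ∈ D) (hd₂ : d₂ ∈ D)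
    (a₁ : G.Adj u w₁) (a₂ : G.Adj u w₂) (b₁ : G.Adj w₁ d₁) (b₂ : G.Adj w₂ d₂) : w₁ = w₂ := by
  by_contra hne
  have n1 := h.ne_of_mem hu hd₁
  have n2 := h.ne_of_mem hu hd₂
  have n3 := h.ne_of_mem hw₁ hd₁
  have n4 := h.ne_of_mem hw₁ hd₂
  have n5 := h.ne_of_mem hw₂ hd₁
  have n6 := h.ne_of_mem hw₂ hd₂
  have m1 := a₁.ne
  have m2 := a₂.ne
  by_cases hd : d₁ = d₂
  · subst hd
    let q : G.Walk d₁ d₁ := .cons b₁.symm (.cons a₁.symm (.cons a₂ (.cons b₂ .nil)))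
    have hq : q.IsCycle := by
      rw [Walk.cons_isCycle_iff]
      constructor
      · simp; grind
      · simp; grind
    have := h.cyc d₁ hd₁ q hq
    simp [q] at this
  · let q : G.Walk d₁ d₂ := .cons b₁.symm (.cons a₁.symm (.cons a₂ (.cons b₂ .nil)))
    have hq : q.IsPath := by
      simp [q]; grind
    have := h.path d₁ hd₁ d₂ hd₂ q hq (by simp [q])
    simp [q] at this

/-- Neighbours of `T` adjacent to `D`. -/
noncomputable def auxBad (G : SimpleGraph V) (V1 D T : Finset V) : Finset V :=
  T.biUnion (fun u => V1.filter (fun w => G.Adj u w ∧ ∃ d ∈ D, G.Adj w d))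

lemma AuxSetup.bad_card (h : AuxSetup G V1 D t M) {T : Finset V} (hT : T ⊆ V1) :
    (auxBad G V1 D T).card ≤ T.card := by
  have := Finset.card_biUnion_le_card_mul T
    (fun u => V1.filter (fun w => G.Adj u w ∧ ∃ d ∈ D, G.Adj w d)) 1 (by
      intro u hu
      rw [Finset.card_le_one]
      intro w₁ hw₁ w₂ hw₂
      obtain ⟨h1, a1, d1, hd1, b1⟩ := Finset.mem_filter.1 hw₁
      obtain ⟨h2, a2, d2, hd2, b2⟩ := Finset.mem_filter.1 hw₂
      exact h.uniq (hT hu) h1 h2 hd1 hd2 a1 a2 b1 b2)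
  simpa [auxBad] using this

/-- Path-neighbours of `T`. -/
noncomputable def auxP {a b : V} (p : G.Walk a b) (T : Finset V) : Finset V :=
  T.biUnion (fun y => Finset.univ.filter (fun x => s(x, y) ∈ p.edges))

lemma auxP_card {a b : V} (p : G.Walk a b) (hp : p.IsPath) (T : Finset V) :
    (auxP p T).card ≤ T.card * 2 :=
  Finset.card_biUnion_le_card_mul _ _ _ (fun y _ => aux_nbr p hp y)

/-- Invariant of the rotation procedure with base path `p`. -/
def AuxInv {a b : V} (p : G.Walk a b) (T : Finset V) (u : V) : Prop :=
  ∃ q : G.Walk a u, q.IsPath ∧ q.length = longestPath G ∧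
    ∀ x y, x ∉ T → x ∉ auxP p T → s(x, y) ∈ q.edges → s(x, y) ∈ p.edges

lemma AuxInv.mono {a b : V} {p : G.Walk a b} {T T' : Finset V} {u : V} (hi : AuxInv p T u)
    (hT : T ⊆ T') : AuxInv p T' u := by
  obtain ⟨q, h1, h2, h3⟩ := hi
  refine ⟨q, h1, h2, fun x y hx hx' => h3 x y (fun h => hx (hT h)) (fun h => hx' ?_)⟩
  exact Finset.biUnion_subset_biUnion_of_subset_left _ hT h

lemma AuxSetup.step (h : AuxSetup G V1 D t M) {a b : V} (p : G.Walk a b) {T : Finset V}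
    (hinv : ∀ u ∈ T, AuxInv p T u) {w : V} (hw : w ∈ auxN G V1 T)
    (hwP : w ∉ auxP p T) (hwB : w ∉ auxBad G V1 D T) :
    ∃ w', w' ∈ V1 ∧ w' ∉ T ∧ s(w, w') ∈ p.edges ∧ AuxInv p (insert w' T) w' := by
  obtain ⟨hwV, hwT, u, hu, huw⟩ := Finset.mem_filter.1 hw
  obtain ⟨q, hq, hl, hqe⟩ := hinv u hu
  have hws := aux_mem_support q hq hl huw
  have hwu : w ≠ u := by rintro rfl; exact hwT hu
  obtain ⟨w', q', hq', hl', he, hsub⟩ := aux_rot q hq hws hwu huw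
  have hep : s(w, w') ∈ p.edges := hqe w w' hwT hwP he
  have hadj : G.Adj w w' := p.adj_of_mem_edges hep
  have hw'V : w' ∈ V1 := by
    rcases h.cover w' with h1 | h1
    · exact h1
    · exfalso
      apply hwB
      refine Finset.mem_biUnion.2 ⟨u, hu, Finset.mem_filter.2 ⟨hwV, huw, w', h1, hadj⟩⟩
  have hwP' : ∀ y, y ∈ T → s(w, y) ∉ p.edges := by
    intro y hy hyp
    exact hwP (Finset.mem_biUnion.2 ⟨y, hy, by simp [hyp]⟩)
  refine ⟨w', hw'V, fun h1 => hwP' w' h1 hep, hep, q', hq', hl'.trans hl, ?_⟩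
  intro x y hxT hxP hxy
  have hxT' : x ∉ T := fun h1 => hxT (Finset.mem_insert_of_mem h1)
  have hxP' : x ∉ auxP p T := fun h1 => hxP
    (Finset.biUnion_subset_biUnion_of_subset_left _ (Finset.subset_insert _ _) h1)
  rcases hsub _ hxy with h1 | h1
  · exact hqe x y hxT' hxP' h1
  · exfalso
    have hx : x = w ∨ x = u := by
      have : x ∈ s(w, u) := by rw [← h1]; simp
      simpa using this
    rcases hx with rfl | rfl
    · exact hxP (Finset.mem_biUnion.2 ⟨w', Finset.mem_insert_self _ _, by simp [hep]⟩)
    · exact hxT' hu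

lemma AuxSetup.grow (h : AuxSetup G V1 D t M) {a b : V} (p : G.Walk a b) (hp : p.IsPath)
    (hl : p.length = longestPath G) (hb : b ∈ V1) (k : ℕ) (hk : k + 1 ≤ t) :
    ∃ T ⊆ V1, T.card = k + 1 ∧ ∀ u ∈ T, AuxInv p T u := by
  induction k with
  | zero =>
    refine ⟨{b}, by simpa using hb, by simp, ?_⟩
    intro u hu
    rw [Finset.mem_singleton] at hu
    subst hu
    exact ⟨p, hp, hl, fun x y _ _ hxy => hxy⟩
  | succ k ih =>
    obtain ⟨T, hT, hc, hinv⟩ := ih (by omega)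
    have h1 := h.exp1 T hT (Finset.card_pos.1 (by omega)) (by omega)
    have h2 := h.bad_card hT
    have h3 := auxP_card p hp T
    have h4 := Finset.card_union_le (auxP p T) (auxBad G V1 D T)
    obtain ⟨w, hw, hw'⟩ := Finset.exists_mem_notMem_of_card_lt_card
      (show (auxP p T ∪ auxBad G V1 D T).card < (auxN G V1 T).card by omega)
    rw [Finset.mem_union, not_or] at hw'
    obtain ⟨w', a1, a2, -, a4⟩ := h.step p hinv hw hw'.1 hw'.2
    refine ⟨insert w' T, Finset.insert_subset a1 hT, by rw [Finset.card_insert_of_notMem a2, hc],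
      ?_⟩
    intro u hu
    rcases Finset.mem_insert.1 hu with rfl | hu
    · exact a4
    · exact (hinv u hu).mono (Finset.subset_insert _ _)

/-- Endpoints in `V1` of longest paths starting at `a`. -/
noncomputable def auxEnds (G : SimpleGraph V) (V1 : Finset V) (a : V) : Finset V :=
  V1.filter (fun z => ∃ q : G.Walk a z, q.IsPath ∧ q.length = longestPath G)

lemma AuxSetup.ends_card (h : AuxSetup G V1 D t M) {a b : V} (p : G.Walk a b) (hp : p.IsPath)
    (hl : p.length = longestPath G) (hb : b ∈ V1) :
    M ≤ 3 * t + 2 * (auxEnds G V1 a).card := by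
  have ht := h.t2
  obtain ⟨T, hT, hc, hinv⟩ := h.grow p hp hl hb (t - 1) (by omega)
  have hc' : T.card = t := by omega
  have h1 := h.exp2 T hT hc'
  have h2 := h.bad_card hT
  have h3 := auxP_card p hp T
  have h4 := Finset.card_union_le (auxP p T) (auxBad G V1 D T)
  have h5 : auxN G V1 T ⊆ (auxP p T ∪ auxBad G V1 D T) ∪ auxP p (auxEnds G V1 a) := by
    intro w hw
    by_contra hcon
    simp only [Finset.mem_union, not_or] at hcon
    obtain ⟨w', a1, a2, a3, q, b1, b2, -⟩ := h.step p hinv hw hcon.1.1 hcon.1.2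
    refine hcon.2 (Finset.mem_biUnion.2 ⟨w', ?_, by simp [a3]⟩)
    exact Finset.mem_filter.2 ⟨a1, q, b1, b2⟩
  have h6 := Finset.card_le_card h5
  have h7 := Finset.card_union_le (auxP p T ∪ auxBad G V1 D T) (auxP p (auxEnds G V1 a))
  have h8 := auxP_card p hp (auxEnds G V1 a)
  omega

lemma AuxSetup.fix_end (h : AuxSetup G V1 D t M) {a b : V} (p : G.Walk a b) (hp : p.IsPath)
    (hl : p.length = longestPath G) :
    ∃ b' ∈ V1, ∃ p' : G.Walk a b', p'.IsPath ∧ p'.length = longestPath G := by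
  rcases h.cover b with hb | hb
  · exact ⟨b, hb, p, hp, hl⟩
  · have h1 := h.deg2 b hb
    obtain ⟨w, hw, hne⟩ := Finset.exists_mem_ne
      (show 1 < (V1.filter (fun w => G.Adj b w)).card by omega) p.penultimate
    obtain ⟨hwV, hbw⟩ := Finset.mem_filter.1 hw
    have hws := aux_mem_support p hp hl hbw
    obtain ⟨w', q', hq', hl', he, -⟩ := aux_rot p hp hws hbw.ne' hbw
    have hadj := p.adj_of_mem_edges he
    have hw'b : w' ≠ b := by
      rintro rfl
      rw [Sym2.eq_swap] at he
      exact hne (hp.eq_penultimate_of_mem_edges he)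
    rcases h.cover w' with h2 | h2
    · exact ⟨w', h2, q', hq', hl'.trans hl⟩
    · exfalso
      let q : G.Walk b w' := .cons hbw (.cons hadj .nil)
      have hq : q.IsPath := by
        have := hbw.ne
        have := hadj.ne
        simp [q]; grind
      have := h.path b hb w' h2 q hq (by simp [q])
      simp [q] at this

lemma AuxSetup.main (h : AuxSetup G V1 D t M) (hH : ¬ G.IsHamiltonian) {K : ℕ}
    (hK : 3 * t + 2 * K ≤ M) :
    K ≤ (V1.filter (fun v => K ≤ (boosterSet G v).card)).card := by
  have : Nonempty V := ⟨h.nonempty.choose⟩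
  obtain ⟨a, b, p, hp, hl⟩ := aux_exists_longest G
  obtain ⟨b', hb', p', hp', hl'⟩ := h.fix_end p hp hl
  have h1 := h.ends_card p' hp' hl' hb'
  have hlen : 2 ≤ longestPath G := by
    have ht := h.t2
    have h2 := h.exp1 {b'} (by simpa using hb') (by simp) (by simp; omega)
    have h3 : auxN G V1 {b'} ⊆ p'.support.toFinset := by
      intro w hw
      obtain ⟨-, -, u, hu, huw⟩ := Finset.mem_filter.1 hw
      rw [Finset.mem_singleton] at hu
      subst hu
      simpa using aux_mem_support p' hp' hl' huw
    have h4 := Finset.card_le_card h3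
    have h5 := List.toFinset_card_le p'.support
    rw [Walk.length_support] at h5
    simp at h2
    omega
  have h6 : auxEnds G V1 a ⊆ V1.filter (fun v => K ≤ (boosterSet G v).card) := by
    intro v hv
    obtain ⟨hvV, q, hq, hql⟩ := Finset.mem_filter.1 hv
    refine Finset.mem_filter.2 ⟨hvV, ?_⟩
    obtain ⟨c, hc, r, hr, hrl⟩ := h.fix_end q.reverse hq.reverse (by simpa using hql)
    have h7 := h.ends_card r hr hrl hc
    have h8 : auxEnds G V1 v ⊆ boosterSet G v := by
      intro z hz
      obtain ⟨-, s, hs, hsl⟩ := Finset.mem_filter.1 hz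
      exact Finset.mem_filter.2 ⟨Finset.mem_univ _,
        aux_booster h.connected hH s hs hsl (by omega)⟩
    have h9 := Finset.card_le_card h8
    omega
  have h10 := Finset.card_le_card h6
  omega

end Helpers

lemma aux_mem_ext {V : Type*} [Fintype V] (G : SimpleGraph V) (U : Finset V) (v : V) :
    v ∈ extNbhd G U ↔ v ∉ U ∧ ∃ u ∈ U, G.Adj u v := by
  simp [extNbhd]

lemma aux_expander {n : ℕ} {G : SimpleGraph (Fin n)} {V1 : Finset (Fin n)} {R : ℝ} {f : ℕ → ℝ}
    (h : IsExpander (G.induce (V1 : Set (Fin n))) R f) (U : Finset (Fin n)) (hU : U ⊆ V1)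
    (hne : U.Nonempty) (hR : (U.card : ℝ) ≤ R) :
    f U.card * U.card ≤ ((auxN G V1 U).card : ℝ) := by
  let U' : Finset ((V1 : Set (Fin n)) : Type _) := Finset.univ.filter (fun x => (x : Fin n) ∈ U)
  have hm : U'.map (Function.Embedding.subtype _) = U := by
    ext x
    simp only [U', Finset.mem_map, Finset.mem_filter, Finset.mem_univ, true_and]
    constructor
    · rintro ⟨y, hy, rfl⟩
      exact hy
    · intro hx
      exact ⟨⟨x, hU hx⟩, hx, rfl⟩
  have hc : U'.card = U.card := by rw [← hm, Finset.card_map]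
  have hne' : U'.Nonempty := by
    rw [← Finset.card_pos, hc]
    exact hne.card_pos
  have h1 := h U' hne' (by rw [hc]; exact hR)
  rw [hc] at h1
  refine h1.trans ?_
  rw [Nat.cast_le]
  apply Finset.card_le_card_of_injOn (Subtype.val)
  · intro x hx
    have hx' := (aux_mem_ext _ _ _).1 (Finset.mem_coe.1 hx)
    obtain ⟨hxU, u, hu, hux⟩ := hx'
    simp only [Finset.mem_coe, auxN, Finset.mem_filter]
    refine ⟨x.2, fun hh => hxU (by simp [U', hh]), u, ?_, hux⟩
    simpa [U'] using hu
  · intro x _ y _ hxy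
    exact Subtype.ext hxy

lemma aux_numeric (β : ℝ) (hβ : 0 < β) (C : ℝ) :
    ∃ x0 : ℝ, 1 ≤ x0 ∧ ∀ x : ℝ, x0 ≤ x →
      11 ≤ Real.log x ^ (0.8 : ℝ) ∧ 4 ≤ 2 * Real.log x / (3 * Real.log (Real.log x)) ∧
      x ^ (0.09 : ℝ) ≤ x / 2 ∧ (2 / 3 + 23 * β) * x ^ (0.09 : ℝ) + C + 2 ≤ 21 * β * x ∧
      2 ≤ β * x ∧ 6 * C < x := by
  have e1 : ∀ᶠ x : ℝ in atTop, 11 ≤ Real.log x ^ (0.8 : ℝ) :=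
    ((tendsto_rpow_atTop (by norm_num : (0 : ℝ) < 0.8)).comp
      Real.tendsto_log_atTop).eventually_ge_atTop 11
  have e2' : ∀ᶠ x : ℝ in atTop, 4 ≤ 2 * x / (3 * Real.log x) := by
    have := Real.isLittleO_log_id_atTop.def (show (0 : ℝ) < 1 / 6 by norm_num)
    filter_upwards [this, eventually_gt_atTop 1] with x hx hx1
    have hl : 0 < Real.log x := Real.log_pos hx1
    simp only [id, Real.norm_eq_abs, abs_of_pos hl, abs_of_pos (by linarith : (0 : ℝ) < x)] at hx
    rw [le_div_iff₀ (by linarith)]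
    linarith
  have e2 := Real.tendsto_log_atTop.eventually e2'
  have e3 : ∀ ε : ℝ, 0 < ε → ∀ᶠ x : ℝ in atTop, x ^ (0.09 : ℝ) ≤ ε * x := by
    intro ε hε
    filter_upwards [(tendsto_rpow_atTop (by norm_num : (0 : ℝ) < 0.91)).eventually_ge_atTop (1 / ε),
      eventually_gt_atTop 0] with x hx hx1
    have h1 : x = x ^ (0.91 : ℝ) * x ^ (0.09 : ℝ) := by
      rw [← Real.rpow_add hx1]
      norm_num
    have h2 : 0 < x ^ (0.09 : ℝ) := Real.rpow_pos_of_pos hx1 _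
    rw [div_le_iff₀ hε] at hx
    have h3 := mul_le_mul_of_nonneg_right hx h2.le
    calc x ^ (0.09 : ℝ) ≤ x ^ (0.91 : ℝ) * ε * x ^ (0.09 : ℝ) := by linarith
      _ = ε * (x ^ (0.91 : ℝ) * x ^ (0.09 : ℝ)) := by ring
      _ = ε * x := by rw [← h1]
  have hpos : 0 < 2 / 3 + 23 * β := by positivity
  have e4 := e3 (β / (2 / 3 + 23 * β)) (by positivity)
  have e5 := e3 (1 / 2) (by norm_num)
  have := (((e1.and e2).and (e4.and e5)).and ((eventually_ge_atTop ((C + 2) / (20 * β))).and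
    ((eventually_ge_atTop (2 / β)).and (eventually_gt_atTop (6 * C)))))
  obtain ⟨x1, hx1⟩ := eventually_atTop.1 this
  refine ⟨max x1 1, le_max_right _ _, fun x hx => ?_⟩
  obtain ⟨⟨⟨a1, a2⟩, a3, a4⟩, a5, a6, a7⟩ := hx1 x ((le_max_left _ _).trans hx)
  refine ⟨a1, a2, by linarith, ?_, ?_, a7⟩
  · rw [div_mul_eq_mul_div, le_div_iff₀ hpos] at a3
    rw [div_le_iff₀ (by positivity)] at a5
    linarith
  · rw [div_le_iff₀ hβ] at a6
    linarith

/-- Lemma 3.6: for fixed `β > 0` and `n` large, every `G ∈ 𝓛(n, β)` is Hamiltonian or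
has at least `n/3 + βn` vertices `v ∈ V₁` with `|B_G(v)| ≥ n/3 + βn`. -/
theorem stmt6 (β : ℝ) (hβ : 0 < β) :
    ∃ n0 : ℕ, 0 < n0 ∧ ∀ n : ℕ, n0 ≤ n → ∀ G : SimpleGraph (Fin n),
      ∀ V1 D : Finset (Fin n), InFamilyL n β G V1 D →
        G.IsHamiltonian ∨
          (n : ℝ) / 3 + β * n ≤
            ((V1.filter (fun v => (n : ℝ) / 3 + β * n ≤ ((boosterSet G v).card : ℝ))).card : ℝ) := by
  obtain ⟨x0, hx0, hx⟩ := aux_numeric β hβ (2 * (1 + 39 * β) / (3 * β))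
  refine ⟨⌈2 * x0⌉₊, Nat.ceil_pos.2 (by linarith), ?_⟩
  intro n hn G V1 D hL
  obtain ⟨hdisj, hun, hD, hdeg, hpath, hcyc, hexp⟩ := hL
  by_cases hH : G.IsHamiltonian
  · exact Or.inl hH
  right
  have hn' : 2 * x0 ≤ n := Nat.ceil_le.1 hn
  set C := 2 * (1 + 39 * β) / (3 * β) with hC
  have hCpos : 0 < C := by positivity
  have hCβ : C * β = 2 / 3 + 26 * β := by
    rw [hC]; field_simp; ring
  obtain ⟨-, a2, a3, a4, -, -⟩ := hx n (by linarith)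
  have hcard : (V1.card : ℝ) + D.card = n := by
    have h1 := Finset.card_union_of_disjoint hdisj
    rw [hun, Finset.card_univ, Fintype.card_fin] at h1
    exact_mod_cast h1.symm
  have hn1 : (n : ℝ) / 2 ≤ V1.card := by linarith
  obtain ⟨b1, -, -, -, b5, b6⟩ := hx V1.card (by linarith)
  set t := ⌊β * (V1.card : ℝ)⌋₊ with ht
  have ht1 : (t : ℝ) ≤ β * V1.card := Nat.floor_le (by positivity)
  have ht2 : β * V1.card - 1 < t := by
    have := Nat.lt_floor_add_one (β * (V1.card : ℝ))
    rw [← ht] at this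
    linarith
  have hCt : (2 / 3 + 26 * β) * V1.card - C ≤ C * t := by
    have := mul_le_mul_of_nonneg_left ht2.le hCpos.le
    rw [← hCβ]
    linarith
  have h2t : 2 ≤ t := Nat.le_floor (by exact_mod_cast b5)
  have hM := Nat.le_ceil (C * t)
  have hV1pos : (0 : ℝ) ≤ V1.card := by positivity
  have hβV : 0 ≤ β * V1.card := by positivity
  have hS : AuxSetup G V1 D t ⌈C * t⌉₊ := by
    refine ⟨?_, ?_, ?_, ?_, ?_, h2t, ?_, ?_, ?_, ?_⟩
    · intro v
      rw [← Finset.mem_union, hun]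
      exact Finset.mem_univ v
    · intro v h1 h2
      exact Finset.disjoint_left.1 hdisj h1 h2
    · intro u hu
      refine (hdeg u hu).trans (Finset.card_le_card ?_)
      intro w hw
      simp only [Finset.mem_inter, mem_neighborFinset] at hw
      simp [hw.1, hw.2]
    · intro u hu v hv q hq h0
      have := hpath u hu v hv q hq h0
      exact_mod_cast lt_of_le_of_lt a2 this
    · intro u hu q hq
      have := hcyc u hu q hq
      exact_mod_cast lt_of_le_of_lt a2 this
    · rw [← Finset.card_pos]
      have : (0 : ℝ) < V1.card := by linarith
      exact_mod_cast this
    · intro U hU hne hlt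
      have hltR : (U.card : ℝ) < t := by exact_mod_cast hlt
      have h1 := aux_expander hexp U hU hne (by linarith)
      have h2 : 11 ≤ fBeta β V1.card U.card := by
        unfold fBeta
        rw [if_neg (by rw [← ht]; omega)]
        split_ifs
        · exact b1
        · exact le_rfl
      have h3 := (mul_le_mul_of_nonneg_right h2 (Nat.cast_nonneg U.card)).trans h1
      exact_mod_cast h3
    · intro U hU hUt
      have h1 := aux_expander hexp U hU (Finset.card_pos.1 (by omega)) (by rw [hUt]; exact ht1)
      have h2 : fBeta β V1.card U.card = C := by
        unfold fBeta
        rw [if_pos (by rw [← ht]; omega)]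
      rw [h2, hUt] at h1
      exact Nat.ceil_le.2 h1
    · have : (V1.card : ℝ) < 2 * (⌈C * t⌉₊ : ℝ) := by linarith
      exact_mod_cast this
  have hK1 := Nat.le_ceil ((n : ℝ) / 3 + β * n)
  have hK2 := Nat.ceil_lt_add_one (show 0 ≤ (n : ℝ) / 3 + β * n by positivity)
  have hK : 3 * t + 2 * ⌈(n : ℝ) / 3 + β * n⌉₊ ≤ ⌈C * t⌉₊ := by
    have h1 : (2 / 3 + 23 * β) * ((n : ℝ) - V1.card) ≤ (2 / 3 + 23 * β) * (n : ℝ) ^ (0.09 : ℝ) :=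
      mul_le_mul_of_nonneg_left (by linarith) (by positivity)
    have : 3 * (t : ℝ) + 2 * (⌈(n : ℝ) / 3 + β * n⌉₊ : ℝ) ≤ (⌈C * t⌉₊ : ℝ) := by linarith
    exact_mod_cast this
  have hfin := hS.main (by convert hH) hK
  have hfin' : (⌈(n : ℝ) / 3 + β * n⌉₊ : ℝ) ≤
      ((V1.filter (fun v => ⌈(n : ℝ) / 3 + β * n⌉₊ ≤ (boosterSet G v).card)).card : ℝ) := by
    exact_mod_cast hfin
  simp only [Nat.ceil_le] at hfin'
  exact hK1.trans hfin'
end
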